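/- Under the hypotheses of the quasiconvex-case dimension-reduction theorem (ω ⊂ ℝ² bounded, connected, open with Lipschitz boundary; Ω = ω × (−1/2,1/2); W: ω × ℝ^{3×3} → [0,∞) measurable in x_α, continuous in ξ, with C₁|ξ| − 1/C₁ ≤ W(x_α,ξ) ≤ C₂(|ξ|+1), admitting a modulus of continuity w(x_α,·) with |W(x_α,ξ)−W(x_α,η)| ≤ w(x_α,|ξ−η|); p ∈ 𝒫_b(Ω), p_ε(x) = p(x_α,εx₃), p_ε → p₀ in L^∞(Ω) with p₀ ∈ 𝒫_b^{log}(ω)), for every sequence εₖ → 0⁺ one has Γ(L¹)-limsup_{k→∞} I_{εₖ} ≤ I; that is, for every u ∈ L¹(Ω;ℝ³) there exists a sequence u_k → u in L¹(Ω;ℝ³) with limsup_{k→∞} I_{εₖ}(u_k) ≤ I(u), where I(u) := ∫_ω Q(W₀^{p₀(x_α)})(x_α, ∇_α u(x_α)) dx_α if u ∈ W^{1,p₀(·)}_0(ω;ℝ³) and +∞ otherwise, with W₀(x_α,ξ_α) := inf_{ξ₃∈ℝ³} W(x_α,ξ_α,ξ₃) and Q the quasiconvex envelope. -/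

import Mathlib

/-! The recovery sequence is the classical dimension-reduction ansatz
`u_ε(x) = v(x_α) + ε x₃ z(x_α)`, whose scaled gradient is `(∇v + ε x₃ ∇z, z)`. For `v, z` smooth
and compactly supported in `ω` it is admissible, converges to `v` in `L¹`, and by dominated
convergence its energy tends to `∫_ω W^{p₀}(x_α, ∇v, z)` (`ansatz_energy_tendsto`). It remains to
choose `v` and `z` so that this planar energy is almost `∫_ω Q(W₀^{p₀})(∇_α u)`
(`planar_recovery`), and to diagonalize (`diagonal`). The planar choice has three ingredients.

* Transverse minimization (`exists_transverse`): a measurable almost minimizing choice of `z`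
  among countably many vectors, smoothed by cutoffs off a set of small measure, makes
  `W(x_α, ∇v, z)` almost `W₀(x_α, ∇v)`.

* Relaxation (`relax`): with `Zq g ξ = inf_φ ∫_Q g(ξ + ∇φ)`, every smooth `v` can be perturbed by
  finely oscillating periodic fields, cut off to regions where one `φ` is nearly optimal, so that
  `∫ g(x, ∇v)` drops to almost `∫ Zq (g x) (∇v)`. The fields depend on a phase `s` in
  the cell: averaging over `s` turns the oscillating integrand into its cell mean, so some phase
  is at least as good as the mean, and no weak convergence is needed. Applying the same
  statement to an `x`-independent integrand shows that `Zq g` is quasiconvex, hence lies below the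
  envelope of `g` (`Zq_le_qcEnvelope`).

* Density (`smooth_approx`): test functions are modular-dense in `W₀^{1,p₀(·)}(ω)`. Mollification
  converges in the modular because log-Hölder continuity makes `δ^{-n (p(x) - p(y))}` bounded for
  `|x - y| ≤ δ` (`pow_log_bound`, `mol_pow`, `mol_tendsto`); extension by zero is harmless as the
  approximants in the definition of `W₀^{1,p₀(·)}` have compact support in `ω`. As `Zq g` is upper
  semicontinuous with growth of order `p₀`, its energy passes to the limit from above
  (`exists_smooth`).

The hypotheses on `W` and `p₀` hold only almost everywhere; `exists_nice` replaces the data off a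
conull measurable set so that they hold everywhere, in the sense of `Nice`. -/

open MeasureTheory Filter Topology Set
open scoped ENNReal NNReal

noncomputable section

/-- `ℝ^n` as a Euclidean space. -/
abbrev Euc (n : ℕ) := EuclideanSpace ℝ (Fin n)

/-- `d × n` real matrices (gradients of maps `ℝ^n → ℝ^d`). -/
abbrev Mat (d n : ℕ) := Fin d → Fin n → ℝ

/-- Euclidean (Frobenius) norm of a matrix. -/
def mnorm {d n : ℕ} (ξ : Mat d n) : ℝ := Real.sqrt (∑ i, ∑ j, (ξ i j)^2)

/-- `G` is a weak (distributional) gradient of `v` on the open set `Ω`. -/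
def IsWeakGrad {n d : ℕ} (Ω : Set (Euc n)) (v : Euc n → Euc d) (G : Euc n → Mat d n) : Prop :=
  ∀ φ : Euc n → ℝ, ContDiff ℝ (⊤ : ℕ∞) φ → HasCompactSupport φ → tsupport φ ⊆ Ω →
    ∀ i : Fin d, ∀ j : Fin n,
      ∫ x in Ω, φ x * G x i j = - ∫ x in Ω, (fderiv ℝ φ x (EuclideanSpace.single j 1)) * v x i

/-- Membership in `W^{1,1}(Ω;ℝ^d)` with weak gradient `G`. -/
def MemW11 {n d : ℕ} (Ω : Set (Euc n)) (v : Euc n → Euc d) (G : Euc n → Mat d n) : Prop :=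
  IntegrableOn v Ω ∧ (∀ i j, IntegrableOn (fun x => G x i j) Ω) ∧ IsWeakGrad Ω v G

/-- The open unit cube `(-1/2,1/2)^n`. -/
def unitCube (n : ℕ) : Set (Euc n) := {x | ∀ j, |x j| < 1/2}

/-- Matrix of partial derivatives of a map `ℝ^n → ℝ^d`. -/
def gradMat {n d : ℕ} (φ : Euc n → Euc d) (x : Euc n) : Mat d n :=
  fun i j => fderiv ℝ φ x (EuclideanSpace.single j 1) i

/-- Quasiconvexity of `g : ℝ^{d×n} → ℝ`. -/
def QuasiconvexFn {d n : ℕ} (g : Mat d n → ℝ) : Prop :=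
  ∀ ξ : Mat d n, ∀ φ : Euc n → Euc d, ContDiff ℝ (⊤ : ℕ∞) φ → tsupport φ ⊆ unitCube n →
    g ξ ≤ ∫ x in unitCube n, g (fun i j => ξ i j + gradMat φ x i j)

/-- The quasiconvex envelope: the greatest quasiconvex function below `g`. -/
def qcEnvelope {d n : ℕ} (g : Mat d n → ℝ) (ξ : Mat d n) : ℝ :=
  sSup {t : ℝ | ∃ h : Mat d n → ℝ, QuasiconvexFn h ∧ (∀ η, h η ≤ g η) ∧ t = h ξ}

/-- The modular `∫_Ω f(x)^{p(x)} dx`, valued in `ℝ≥0∞`. -/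
def emod {n : ℕ} (Ω : Set (Euc n)) (p : Euc n → ℝ) (f : Euc n → ℝ) : ℝ≥0∞ :=
  ∫⁻ x in Ω, ENNReal.ofReal (f x ^ p x)

/-- Convergence `p_k → p₀` in `L^∞(Ω)`. -/
def TendstoLinf {n : ℕ} (Ω : Set (Euc n)) (p : ℕ → Euc n → ℝ) (p₀ : Euc n → ℝ) : Prop :=
  Tendsto (fun k => eLpNorm (fun x => p k x - p₀ x) ⊤ (volume.restrict Ω)) atTop (nhds 0)

/-- Convergence `p_k → p₀` in `L¹(Ω)`. -/
def TendstoL1 {n : ℕ} (Ω : Set (Euc n)) (p : ℕ → Euc n → ℝ) (p₀ : Euc n → ℝ) : Prop :=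
  Tendsto (fun k => ∫⁻ x in Ω, ENNReal.ofReal |p k x - p₀ x|) atTop (nhds 0)

/-- Strong `L¹(Ω;ℝ^d)` convergence of vector valued maps. -/
def TendstoL1V {n d : ℕ} (Ω : Set (Euc n)) (v : ℕ → Euc n → Euc d) (v₀ : Euc n → Euc d) : Prop :=
  Tendsto (fun k => ∫⁻ x in Ω, ENNReal.ofReal ‖v k x - v₀ x‖) atTop (nhds 0)

/-- Weak `L¹(Ω;ℝ^d)` convergence (testing against bounded measurable functions). -/
def WeakL1Tendsto {n d : ℕ} (Ω : Set (Euc n)) (v : ℕ → Euc n → Euc d) (v₀ : Euc n → Euc d) : Prop :=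
  ∀ g : Euc n → ℝ, Measurable g → (∃ M, ∀ x, |g x| ≤ M) →
    ∀ i : Fin d, Tendsto (fun k => ∫ x in Ω, g x * v k x i) atTop (nhds (∫ x in Ω, g x * v₀ x i))

/-- Weak `L^r(A)` convergence of scalar functions (testing against `L^{r'}` functions). -/
def WeakLrTendsto {n : ℕ} (A : Set (Euc n)) (r : ℝ) (F : ℕ → Euc n → ℝ) (F₀ : Euc n → ℝ) : Prop :=
  ∀ g : Euc n → ℝ, Measurable g → (∫⁻ x in A, ENNReal.ofReal (|g x| ^ (r / (r - 1)))) < ⊤ →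
    Tendsto (fun k => ∫ x in A, g x * F k x) atTop (nhds (∫ x in A, g x * F₀ x))

/-- The class `𝒫_b(Ω)`: measurable exponents with `1 < p⁻ ≤ p⁺ < ∞`. -/
def IsPb {n : ℕ} (Ω : Set (Euc n)) (p : Euc n → ℝ) : Prop :=
  Measurable p ∧ ∃ pm pM : ℝ, 1 < pm ∧ ∀ᵐ x ∂(volume.restrict Ω), pm ≤ p x ∧ p x ≤ pM

/-- log-Hölder continuity on `A`. -/
def LogHolder {n : ℕ} (A : Set (Euc n)) (p : Euc n → ℝ) : Prop :=
  ∃ γ > 0, ∀ x ∈ A, ∀ y ∈ A, 0 < dist x y → dist x y < 1/2 →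
    |p x - p y| ≤ γ / |Real.log (dist x y)|

/-- The class `𝒫_b^{log}(A)`. -/
def IsPbLog {n : ℕ} (A : Set (Euc n)) (p : Euc n → ℝ) : Prop := IsPb A p ∧ LogHolder A p

/-- `p₀ ∈ L^∞(Ω)`. -/
def MemLinf {n : ℕ} (Ω : Set (Euc n)) (p : Euc n → ℝ) : Prop :=
  Measurable p ∧ ∃ M : ℝ, ∀ᵐ x ∂(volume.restrict Ω), |p x| ≤ M

/-- Update the `i`-th coordinate of a point of `ℝ^n`. -/
def updCoord {n : ℕ} (y : Euc n) (i : Fin n) (t : ℝ) : Euc n :=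
  (WithLp.equiv 2 _).symm (Function.update ((WithLp.equiv 2 _) y) i t)

/-- `s` has Lipschitz boundary: near every boundary point, in suitable orthonormal
coordinates, `s` is the open region above the graph of a Lipschitz function. -/
def HasLipschitzBoundary {n : ℕ} (s : Set (Euc n)) : Prop :=
  ∀ x ∈ frontier s, ∃ U : Set (Euc n), IsOpen U ∧ x ∈ U ∧
    ∃ (e : Euc n ≃ₗᵢ[ℝ] Euc n) (i₀ : Fin n) (f : Euc n → ℝ) (K : NNReal),
      LipschitzWith K f ∧ (∀ y t, f (updCoord y i₀ t) = f y) ∧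
      s ∩ U = {y ∈ U | f (e y) < e y i₀}

/-- `A` compactly contained in `Ω`. -/
def CompactlyIn {n : ℕ} (A Ω : Set (Euc n)) : Prop :=
  IsOpen A ∧ IsCompact (closure A) ∧ closure A ⊆ Ω

/-- Weak `L¹(Ω)` convergence of scalar functions. -/
def WeakL1TendstoS {n : ℕ} (Ω : Set (Euc n)) (F : ℕ → Euc n → ℝ) (F₀ : Euc n → ℝ) : Prop :=
  ∀ g : Euc n → ℝ, Measurable g → (∃ M, ∀ x, |g x| ≤ M) →
    Tendsto (fun k => ∫ x in Ω, g x * F k x) atTop (nhds (∫ x in Ω, g x * F₀ x))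

/-- Strong (modular) convergence in the variable exponent space `L^{q(·)}(Ω;ℝ^d)`. -/
def TendstoModular {n d : ℕ} (Ω : Set (Euc n)) (q : Euc n → ℝ)
    (us : ℕ → Euc n → Euc d) (u : Euc n → Euc d) : Prop :=
  Tendsto (fun k => ∫⁻ x in Ω, ENNReal.ofReal (‖us k x - u x‖ ^ q x)) atTop (nhds 0)
/-- Planar projection `x ↦ x_α = (x₁,x₂)`. -/
def projα (x : Euc 3) : Euc 2 := (WithLp.equiv 2 _).symm ![x 0, x 1]

/-- Embed `(x_α, y) ∈ ℝ² × ℝ` into `ℝ³`. -/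
def embed3 (xα : Euc 2) (y : ℝ) : Euc 3 := (WithLp.equiv 2 _).symm ![xα 0, xα 1, y]

/-- The rescaled thin domain `Ω = ω × (-1/2,1/2)`. -/
def thinDomain (ω : Set (Euc 2)) : Set (Euc 3) :=
  {x | projα x ∈ ω ∧ x 2 ∈ Set.Ioo (-(1/2) : ℝ) (1/2)}

/-- The lateral boundary `∂_L Ω = ∂ω × (-1/2,1/2)`. -/
def latBoundary (ω : Set (Euc 2)) : Set (Euc 3) :=
  {x | projα x ∈ frontier ω ∧ x 2 ∈ Set.Ioo (-(1/2) : ℝ) (1/2)}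

/-- The rescaling `x ↦ (x_α, ε x₃)`. -/
def scaleX (ε : ℝ) (x : Euc 3) : Euc 3 := updCoord x 2 (ε * x 2)

/-- Divide the third column of a `3×3` matrix by `ε` (the scaled gradient `(∇_α u, ε⁻¹∇₃u)`). -/
def scaleCol (ε : ℝ) (ξ : Mat 3 3) : Mat 3 3 := fun i j => if j = 2 then ξ i j / ε else ξ i j

/-- Assemble `ξ = (ξ_α, ξ₃) ∈ ℝ^{3×3}` from `ξ_α ∈ ℝ^{3×2}` and `ξ₃ ∈ ℝ³`. -/
def joinCols (ξα : Mat 3 2) (ξ₃ : Fin 3 → ℝ) : Mat 3 3 :=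
  fun i j => if h : (j : ℕ) < 2 then ξα i ⟨j, h⟩ else ξ₃ i

/-- `f₀(x_α,y,q,ξ_α) = inf_{ξ₃ ∈ ℝ³} f(x_α,y,q,(ξ_α,ξ₃))`. -/
def finf (f : Euc 2 → ℝ → ℝ → Mat 3 3 → ℝ) (xα : Euc 2) (y q : ℝ) (ξα : Mat 3 2) : ℝ :=
  ⨅ ξ₃ : Fin 3 → ℝ, f xα y q (joinCols ξα ξ₃)

/-- `p⁻ = ess inf_Ω p`. -/
def pminus (ω : Set (Euc 2)) (p : Euc 3 → ℝ) : ℝ := essInf p (volume.restrict (thinDomain ω))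

/-- Membership in `W^{1,r}_{0,∂_LΩ}(Ω;ℝ³)`: closure in `W^{1,r}(Ω)` of
`W^{1,r}_loc(ℝ³;ℝ³)` maps vanishing in a neighbourhood of the lateral boundary. -/
def MemLatZero (ω : Set (Euc 2)) (r : ℝ) (u : Euc 3 → Euc 3) (G : Euc 3 → Mat 3 3) : Prop :=
  ∃ (w : ℕ → Euc 3 → Euc 3) (Gw : ℕ → Euc 3 → Mat 3 3),
    (∀ j, IsWeakGrad Set.univ (w j) (Gw j)) ∧
    (∀ j, LocallyIntegrable (w j) volume) ∧
    (∀ j, ∀ i l, LocallyIntegrable (fun x => Gw j x i l) volume) ∧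
    (∀ j, ∃ V : Set (Euc 3), IsOpen V ∧ latBoundary ω ⊆ V ∧ ∀ x ∈ V, w j x = 0) ∧
    Tendsto (fun j => (∫⁻ x in thinDomain ω, (ENNReal.ofReal (‖w j x - u x‖ ^ r)
        + ENNReal.ofReal (mnorm (fun i l => Gw j x i l - G x i l) ^ r)))) atTop (nhds 0)

/-- `u` belongs to `W^{1,p_ε(·)}_L(Ω;ℝ³) = W^{1,p⁻}_{0,∂_LΩ}(Ω;ℝ³) ∩ W^{1,p_ε(·)}(Ω;ℝ³)`,
with weak gradient `G`. -/
def SobAdm (ω : Set (Euc 2)) (p : Euc 3 → ℝ) (ε : ℝ) (u : Euc 3 → Euc 3)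
    (G : Euc 3 → Mat 3 3) : Prop :=
  AEStronglyMeasurable u (volume.restrict (thinDomain ω)) ∧
  (∀ i j, AEMeasurable (fun x => G x i j) (volume.restrict (thinDomain ω))) ∧
  IsWeakGrad (thinDomain ω) u G ∧
  MemLatZero ω (pminus ω p) u G ∧
  emod (thinDomain ω) (fun x => p (scaleX ε x)) (fun x => ‖u x‖) < ⊤ ∧
  emod (thinDomain ω) (fun x => p (scaleX ε x)) (fun x => mnorm (G x)) < ⊤

/-- The clamped thin-film functional
`F_ε(u) = ∫_Ω f(x_α, εx₃, p_ε(x), ∇_α u, ε⁻¹ ∇₃ u) dx` on `W^{1,p_ε(·)}_L(Ω;ℝ³)`,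
`+∞` otherwise; encoded through the (a.e. unique) weak gradient. -/
def Feps (ω : Set (Euc 2)) (p : Euc 3 → ℝ)
    (f : Euc 2 → ℝ → ℝ → Mat 3 3 → ℝ) (ε : ℝ) (u : Euc 3 → Euc 3) : ℝ≥0∞ :=
  ⨅ (G : Euc 3 → Mat 3 3) (_ : SobAdm ω p ε u G),
    ∫⁻ x in thinDomain ω, ENNReal.ofReal
      (f (projα x) (ε * x 2) (p (scaleX ε x)) (scaleCol ε (G x)))

/-- Membership in `W^{1,q(·)}(ω;ℝ³)` for the planar domain, with weak gradient `Gv`. -/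
def MemW1pPlanar (ω : Set (Euc 2)) (q : Euc 2 → ℝ) (v : Euc 2 → Euc 3)
    (Gv : Euc 2 → Mat 3 2) : Prop :=
  AEStronglyMeasurable v (volume.restrict ω) ∧
  (∀ i j, AEMeasurable (fun x => Gv x i j) (volume.restrict ω)) ∧
  IsWeakGrad ω v Gv ∧
  emod ω q (fun x => ‖v x‖) < ⊤ ∧ emod ω q (fun x => mnorm (Gv x)) < ⊤

/-- Membership in `W^{1,q(·)}_0(ω;ℝ³)`: closure in `W^{1,q(·)}(ω)` of compactly
supported Sobolev functions. -/
def MemW1p0Planar (ω : Set (Euc 2)) (q : Euc 2 → ℝ) (v : Euc 2 → Euc 3)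
    (Gv : Euc 2 → Mat 3 2) : Prop :=
  MemW1pPlanar ω q v Gv ∧
  ∃ (w : ℕ → Euc 2 → Euc 3) (Gw : ℕ → Euc 2 → Mat 3 2),
    (∀ j, MemW1pPlanar ω q (w j) (Gw j) ∧ HasCompactSupport (w j) ∧ tsupport (w j) ⊆ ω) ∧
    Tendsto (fun j => ∫⁻ x in ω, (ENNReal.ofReal (‖w j x - v x‖ ^ q x)
        + ENNReal.ofReal (mnorm (fun i l => Gw j x i l - Gv x i l) ^ q x))) atTop (nhds 0)

/-- The limiting planar functional with density `g`, on `W^{1,q(·)}_0(ω;ℝ³)`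
(identified with `x₃`-independent maps on `Ω`), `+∞` otherwise in `L¹(Ω;ℝ³)`. -/
def limFun (ω : Set (Euc 2)) (q : Euc 2 → ℝ) (g : Euc 2 → Mat 3 2 → ℝ)
    (u : Euc 3 → Euc 3) : ℝ≥0∞ :=
  ⨅ (v : Euc 2 → Euc 3) (Gv : Euc 2 → Mat 3 2)
    (_ : MemW1p0Planar ω q v Gv ∧
         ∀ᵐ x ∂(volume.restrict (thinDomain ω)), u x = v (projα x)),
    ∫⁻ xα in ω, ENNReal.ofReal (g xα (Gv xα))

/-- `p_ε → p₀` (as functions on `Ω`, `p₀` planar) in `L¹(Ω)` as `ε → 0⁺`. -/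
def ScaledTendstoL1 (ω : Set (Euc 2)) (p : Euc 3 → ℝ) (p₀ : Euc 2 → ℝ) : Prop :=
  Tendsto (fun ε : ℝ => ∫⁻ x in thinDomain ω, ENNReal.ofReal |p (scaleX ε x) - p₀ (projα x)|)
    (nhdsWithin 0 (Set.Ioi 0)) (nhds 0)

/-- `p_ε → p₀` in `L^∞(Ω)` as `ε → 0⁺`. -/
def ScaledTendstoLinf (ω : Set (Euc 2)) (p : Euc 3 → ℝ) (p₀ : Euc 2 → ℝ) : Prop :=
  Tendsto (fun ε : ℝ =>
      eLpNorm (fun x => p (scaleX ε x) - p₀ (projα x)) ⊤ (volume.restrict (thinDomain ω)))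
    (nhdsWithin 0 (Set.Ioi 0)) (nhds 0)

/-! ### Test functions, cutoffs and smooth measurable selections -/

/-- Smooth maps with compact support inside `U`: the class `C_c^∞(U; F)`, as globally defined
functions. -/
def TestIn {n : ℕ} {F : Type*} [NormedAddCommGroup F] [NormedSpace ℝ F]
    (U : Set (Euc n)) (f : Euc n → F) : Prop :=
  ContDiff ℝ (⊤ : ℕ∞) f ∧ HasCompactSupport f ∧ tsupport f ⊆ U

section TestIn
variable {n : ℕ} {F : Type*} [NormedAddCommGroup F] [NormedSpace ℝ F] {U : Set (Euc n)}

lemma TestIn.zero : TestIn U (fun _ => (0 : F)) := by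
  refine ⟨contDiff_const, HasCompactSupport.zero, ?_⟩
  have : tsupport (fun _ : Euc n => (0:F)) = ∅ := by
    rw [tsupport_eq_empty_iff]; rfl
  simp [this]

lemma TestIn.add {f g : Euc n → F} (hf : TestIn U f) (hg : TestIn U g) :
    TestIn U (fun x => f x + g x) := by
  refine ⟨hf.1.add hg.1, hf.2.1.add hg.2.1, ?_⟩
  exact (tsupport_add f g).trans (union_subset hf.2.2 hg.2.2)

lemma TestIn.smul {f : Euc n → ℝ} {g : Euc n → F} (hf : TestIn U f)
    (hg : ContDiff ℝ (⊤ : ℕ∞) g) : TestIn U (fun x => f x • g x) := by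
  refine ⟨hf.1.smul hg, hf.2.1.smul_right, ?_⟩
  exact (closure_mono (Function.support_smul_subset_left f g)).trans hf.2.2

lemma TestIn.sum {ι : Type*} (s : Finset ι) {f : ι → Euc n → F} (hf : ∀ i ∈ s, TestIn U (f i)) :
    TestIn U (fun x => ∑ i ∈ s, f i x) := by
  classical
  induction s using Finset.induction_on with
  | empty => simpa using TestIn.zero
  | insert a s ha ih =>
    simp only [Finset.sum_insert ha]
    exact (hf a (by simp)).add (ih fun i hi => hf i (by simp [hi]))

lemma TestIn.bounded {f : Euc n → F} (hf : TestIn U f) : ∃ C, 0 ≤ C ∧ ∀ x, ‖f x‖ ≤ C := by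
  obtain ⟨C, hC⟩ := hf.2.1.exists_bound_of_continuous hf.1.continuous
  exact ⟨C, (norm_nonneg _).trans (hC 0), hC⟩

end TestIn

/-- A smooth cutoff equal to `1` on the compact `K`, supported in the open `U`. -/
lemma exists_cutoff {n : ℕ} {K U : Set (Euc n)} (hK : IsCompact K) (hU : IsOpen U) (hKU : K ⊆ U) :
    ∃ χ : Euc n → ℝ, TestIn U χ ∧ (∀ x, χ x ∈ Icc (0:ℝ) 1) ∧ ∀ x ∈ K, χ x = 1 := by
  obtain ⟨K', hK'c, hKK', hK'U⟩ := exists_compact_between hK hU hKU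
  obtain ⟨f, hf0, hf1, hf⟩ := exists_contMDiffMap_zero_one_of_isClosed (n := (⊤ : ℕ∞))
    (modelWithCornersSelf ℝ (Euc n))
    (s := (interior K')ᶜ) (t := K) isOpen_interior.isClosed_compl hK.isClosed
    (disjoint_left.2 fun x hx hxK => hx (hKK' hxK))
  have hsub : tsupport f ⊆ K' := by
    refine closure_minimal (fun x hx => ?_) hK'c.isClosed
    by_contra h
    exact hx (hf0 (fun h' => h (interior_subset h')))
  exact ⟨f, ⟨f.contMDiff.contDiff, hK'c.of_isClosed_subset (isClosed_tsupport _) hsub,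
    hsub.trans hK'U⟩, hf, hf1⟩

/-- Indicators of measurable subsets of `ω` coincide with smooth cutoffs off sets of small
measure. -/
lemma exists_smooth_indicator {n : ℕ} {ω A : Set (Euc n)} (hω : IsOpen ω) (hA : MeasurableSet A)
    (hAω : A ⊆ ω) (hfin : volume ω ≠ ⊤) {η : ℝ≥0∞} (hη : η ≠ 0) :
    ∃ χ : Euc n → ℝ, TestIn ω χ ∧ (∀ x, χ x ∈ Icc (0:ℝ) 1) ∧
      ∃ B, MeasurableSet B ∧ volume B ≤ η ∧ ∀ x, x ∉ B → χ x = A.indicator 1 x := by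
  have hAfin : volume A ≠ ⊤ := ne_top_of_le_ne_top hfin (measure_mono hAω)
  have hη2 : η / 2 ≠ 0 := by simpa using hη
  obtain ⟨K, hKA, hK, hKm⟩ := hA.exists_isCompact_sdiff_lt hAfin hη2
  obtain ⟨V, hAV, hV, -, hVm⟩ := hA.exists_isOpen_sdiff_lt hAfin hη2
  obtain ⟨χ, hχ, h01, h1⟩ := exists_cutoff hK (hV.inter hω) (fun x hx => ⟨hAV (hKA hx), hAω (hKA hx)⟩)
  refine ⟨χ, ⟨hχ.1, hχ.2.1, hχ.2.2.trans inter_subset_right⟩, h01, (A \ K) ∪ (V \ A),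
    (hA.diff hK.measurableSet).union (hV.measurableSet.diff hA), ?_, ?_⟩
  · calc volume ((A \ K) ∪ (V \ A)) ≤ volume (A \ K) + volume (V \ A) := measure_union_le _ _
      _ ≤ η / 2 + η / 2 := add_le_add hKm.le hVm.le
      _ = η := ENNReal.add_halves η
  · intro x hx
    by_cases hxA : x ∈ A
    · have : x ∈ K := by by_contra h; exact hx (Or.inl ⟨hxA, h⟩)
      simp [hxA, h1 x this]
    · have : x ∉ V := fun h => hx (Or.inr ⟨h, hxA⟩)
      have : x ∉ tsupport χ := fun h => this (hχ.2.2 h).1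
      simp [hxA, image_eq_zero_of_notMem_tsupport this]

/-- Measurable selection with smooth coefficients. If at every point some `e i` is a `δ`-optimal
choice for the cost `F x`, then a finite combination `∑ χ_j(x) e_j` with smooth compactly supported
coefficients is almost optimal in the integral sense: off a set of small measure the combination is
exactly one of the optimal `e i`. -/
lemma exists_smooth_selection {n : ℕ} {V : Type*} [NormedAddCommGroup V] [NormedSpace ℝ V]
    {ω : Set (Euc n)} (hω : IsOpen ω) (hfin : volume ω ≠ ⊤)
    (e : ℕ → V) (F : Euc n → V → ℝ≥0∞) (hFm : ∀ i, Measurable fun x => F x (e i))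
    (hFb : ∀ R : ℝ, ∃ M : ℝ≥0, ∀ x ∈ ω, ∀ a, ‖a‖ ≤ R → F x a ≤ M)
    (h : Euc n → ℝ≥0∞) (hm : Measurable h) (δ : ℝ≥0∞) (hδ : δ ≠ 0)
    (hex : ∀ x, ∃ i, F x (e i) ≤ h x + δ) :
    ∃ (N : ℕ) (χ : ℕ → Euc n → ℝ), (∀ j, TestIn ω (χ j)) ∧
      ∫⁻ x in ω, F x (∑ j ∈ Finset.range N, χ j x • e j) ≤
        (∫⁻ x in ω, h x) + δ * volume ω + δ := by
  classical
  set i : Euc n → ℕ := fun x => Nat.find (hex x) with hi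
  have him : Measurable i := measurable_find hex
    (fun k => measurableSet_le (hFm k) (hm.add_const δ))
  have hispec : ∀ x, F x (e (i x)) ≤ h x + δ := fun x => Nat.find_spec (hex x)
  have hδ2 : δ / 2 ≠ 0 := by simpa using hδ
  obtain ⟨M0, hM0⟩ := hFb 0
  -- the set where the selected index exceeds `N` has small measure
  obtain ⟨N, hN⟩ : ∃ N : ℕ, (M0 : ℝ≥0∞) * volume (ω ∩ {x | N ≤ i x}) ≤ δ / 2 := by
    have ht : Tendsto (fun N : ℕ => (M0 : ℝ≥0∞) * volume (ω ∩ {x | N ≤ i x})) atTop (𝓝 (M0 * 0)) := by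
      refine ENNReal.Tendsto.const_mul ?_ (Or.inr ENNReal.coe_ne_top)
      have h1 := tendsto_measure_iInter_atTop (μ := volume) (s := fun N : ℕ => ω ∩ {x | N ≤ i x})
        (fun N => (hω.measurableSet.inter (him measurableSet_Ici)).nullMeasurableSet)
        (fun a b hab x hx => ⟨hx.1, le_trans hab hx.2⟩)
        ⟨0, ne_top_of_le_ne_top hfin (measure_mono inter_subset_left)⟩
      have h2 : ⋂ N : ℕ, ω ∩ {x | N ≤ i x} = ∅ := by
        ext x
        simp only [mem_iInter, mem_inter_iff, mem_ofPred_eq, mem_empty_iff_false, iff_false, not_forall]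
        exact ⟨i x + 1, fun h => by omega⟩
      rwa [h2, measure_empty] at h1
    rw [mul_zero] at ht
    exact (ht.eventually (gt_mem_nhds (pos_iff_ne_zero.2 hδ2))).exists.imp fun _ h => h.le
  obtain ⟨M1, hM1⟩ := hFb (∑ j ∈ Finset.range N, ‖e j‖)
  -- tolerance for each of the `N` cutoffs
  obtain ⟨η, hη0, hη⟩ : ∃ η : ℝ≥0∞, η ≠ 0 ∧ (M1 : ℝ≥0∞) * (N * η) ≤ δ / 2 := by
    have ht : Tendsto (fun η : ℝ≥0∞ => (M1 : ℝ≥0∞) * (N * η)) (𝓝[≠] 0) (𝓝 (M1 * (N * 0))) := by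
      refine Tendsto.mono_left ?_ nhdsWithin_le_nhds
      refine ENNReal.Tendsto.const_mul (ENNReal.Tendsto.const_mul tendsto_id ?_) ?_ <;> right <;> simp
    rw [mul_zero, mul_zero] at ht
    have := (ht.eventually (gt_mem_nhds (pos_iff_ne_zero.2 hδ2))).and self_mem_nhdsWithin
    obtain ⟨η, h1, h2⟩ := this.exists
    exact ⟨η, h2, h1.le⟩
  have hAm : ∀ j, MeasurableSet (ω ∩ {x | i x = j}) := fun j =>
    hω.measurableSet.inter (him (measurableSet_singleton j))
  choose χ hχ h01 B hBm hBv hBχ using fun j =>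
    exists_smooth_indicator hω (hAm j) inter_subset_left hfin hη0
  refine ⟨N, χ, hχ, ?_⟩
  set B1 : Set (Euc n) := ⋃ j ∈ Finset.range N, B j with hB1
  have hB1m : MeasurableSet B1 := Finset.measurableSet_biUnion _ fun j _ => hBm j
  have hB1v : volume B1 ≤ N * η := by
    calc volume B1 ≤ ∑ j ∈ Finset.range N, volume (B j) := measure_biUnion_finset_le _ _
      _ ≤ ∑ j ∈ Finset.range N, η := Finset.sum_le_sum fun j _ => hBv j
      _ = N * η := by simp
  set B0 : Set (Euc n) := ω ∩ {x | N ≤ i x} with hB0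
  have hB0m : MeasurableSet B0 := hω.measurableSet.inter (him measurableSet_Ici)
  have key : ∀ x ∈ ω, F x (∑ j ∈ Finset.range N, χ j x • e j) ≤
      h x + δ + (B0.indicator (fun _ => (M0:ℝ≥0∞)) x + B1.indicator (fun _ => (M1:ℝ≥0∞)) x) := by
    intro x hx
    by_cases hx1 : x ∈ B1
    · refine (hM1 x hx _ ?_).trans ?_
      · refine (norm_sum_le _ _).trans (Finset.sum_le_sum fun j _ => ?_)
        rw [norm_smul, Real.norm_of_nonneg (h01 j x).1]
        exact mul_le_of_le_one_left (norm_nonneg _) (h01 j x).2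
      · simp only [hx1, indicator_of_mem]
        exact le_add_left (le_add_left le_rfl)
    have hχx : ∀ j ∈ Finset.range N, χ j x • e j = if i x = j then e j else 0 := by
      intro j hj
      have : x ∉ B j := fun h => hx1 (mem_biUnion hj h)
      rw [hBχ j x this]
      by_cases hij : i x = j <;> simp [hx, hij]
    rw [Finset.sum_congr rfl hχx, Finset.sum_ite_eq]
    by_cases hx0 : i x < N
    · rw [if_pos (Finset.mem_range.2 hx0)]
      exact (hispec x).trans le_self_add
    · rw [if_neg (by simpa using hx0)]
      have : x ∈ B0 := ⟨hx, by simpa using hx0⟩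
      simp only [this, indicator_of_mem]
      exact (hM0 x hx 0 (by simp)).trans (le_add_left le_self_add)
  calc ∫⁻ x in ω, F x (∑ j ∈ Finset.range N, χ j x • e j)
      ≤ ∫⁻ x in ω, (h x + δ + (B0.indicator (fun _ => (M0:ℝ≥0∞)) x
          + B1.indicator (fun _ => (M1:ℝ≥0∞)) x)) :=
        setLIntegral_mono' hω.measurableSet key
    _ = (∫⁻ x in ω, h x) + δ * volume ω + (M0 * (volume.restrict ω) B0 + M1 * (volume.restrict ω) B1) := by
        rw [lintegral_add_left (hm.add_const δ), lintegral_add_left hm,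
          lintegral_add_left (measurable_const.indicator hB0m),
          lintegral_indicator hB0m, lintegral_indicator hB1m]
        simp
    _ ≤ (∫⁻ x in ω, h x) + δ * volume ω + (δ / 2 + δ / 2) := by
        gcongr
        · refine le_trans ?_ hN
          gcongr
          exact Measure.restrict_le_self
        · refine le_trans ?_ hη
          gcongr
          exact (Measure.restrict_apply_le _ _).trans hB1v
    _ = _ := by rw [ENNReal.add_halves]

/-! ### Periodization on the unit cube -/

/-- The representative of `y` modulo `ℤ^n` in the centred unit cube. -/
def perArg {n : ℕ} (y : Euc n) : Euc n := WithLp.toLp 2 (fun j => y j - round (y j))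

lemma measurable_round_real : Measurable (fun x : ℝ => ((round x : ℤ) : ℝ)) := by
  simp only [round_eq]
  exact (measurable_from_top (f := fun z : ℤ => (z:ℝ))).comp
    (Int.measurable_floor.comp (measurable_id.add_const _))

lemma measurable_perArg {n : ℕ} : Measurable (perArg : Euc n → Euc n) := by
  refine (MeasurableEquiv.toLp 2 (Fin n → ℝ)).measurable.comp (measurable_pi_lambda _ fun j => ?_)
  have : Measurable fun y : Euc n => y j := by fun_prop
  exact this.sub (measurable_round_real.comp this)

lemma round_eq_zero_of_mem {t : ℝ} (ht : t ∈ Ioo (-(1/2):ℝ) (1/2)) : round t = 0 := by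
  rw [round_eq_zero_iff]; exact ⟨ht.1.le, ht.2⟩

lemma perArg_eq_self {n : ℕ} {y : Euc n} (hy : y ∈ unitCube n) : perArg y = y := by
  ext j
  have := abs_lt.1 (hy j)
  simp [perArg, round_eq_zero_of_mem ⟨this.1, this.2⟩]

/-- One-dimensional shift invariance modulo `1`: unfold with the fundamental domains `(t, t + 1]`
of `ℤ` acting on `ℝ`. -/
lemma mp_shift_one (a : ℝ) : MeasurePreserving (fun s : ℝ => a + s - round (a + s))
    (volume.restrict (Ioo (-(1/2)) (1/2))) (volume.restrict (Ioo (-(1/2):ℝ) (1/2))) := by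
  have hg : Measurable (fun s : ℝ => s - round s) := measurable_id.sub measurable_round_real
  refine ⟨hg.comp (measurable_const_add a), ?_⟩
  refine Measure.ext_of_lintegral _ fun f hf => ?_
  have hga : Measurable (fun s : ℝ => a + s - round (a + s)) := hg.comp (measurable_const_add a)
  rw [lintegral_map hf hga]
  set P : ℝ → ℝ≥0∞ := fun t => f (t - round t) with hP
  have hPm : Measurable P := hf.comp hg
  have h1 : ∫⁻ s in Ioo (-(1/2):ℝ) (1/2), P (a + s) = ∫⁻ s in Ioc (a + -(1/2):ℝ) (a + -(1/2) + 1), P s := by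
    rw [setLIntegral_congr Ioo_ae_eq_Ioc]
    have := (measurePreserving_add_left volume a).setLIntegral_comp_preimage
      (s := Ioc (a + -(1/2):ℝ) (a + -(1/2) + 1)) measurableSet_Ioc hPm
    rw [← this]
    congr 2
    ext s
    simp only [mem_preimage, mem_Ioc]
    constructor <;> rintro ⟨h1, h2⟩ <;> constructor <;> linarith
  have h2 : ∫⁻ s in Ioc (a + -(1/2):ℝ) (a + -(1/2) + 1), P s =
      ∫⁻ s in Ioc (-(1/2):ℝ) (-(1/2) + 1), P s := by
    refine (isAddFundamentalDomain_Ioc one_pos _).setLIntegral_eq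
      (isAddFundamentalDomain_Ioc one_pos _) P ?_
    rintro ⟨g, hgm⟩ x
    obtain ⟨k, rfl⟩ := AddSubgroup.mem_zmultiples_iff.1 hgm
    simp only [hP]
    have : ((⟨k • (1:ℝ), hgm⟩ : AddSubgroup.zmultiples (1:ℝ)) +ᵥ x) = x + (k : ℝ) := by
      rw [AddSubgroup.vadd_def]; simp [add_comm]
    rw [this, round_add_intCast]
    push_cast
    congr 1; ring
  have h3 : ∫⁻ s in Ioc (-(1/2):ℝ) (-(1/2) + 1), P s = ∫⁻ s in Ioo (-(1/2):ℝ) (1/2), f s := by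
    have : (-(1/2) + 1 : ℝ) = 1/2 := by norm_num
    rw [this, ← setLIntegral_congr Ioo_ae_eq_Ioc]
    refine setLIntegral_congr_fun measurableSet_Ioo fun t ht => ?_
    simp [hP, round_eq_zero_of_mem ht]
  exact h1.trans (h2.trans h3)

lemma volume_restrict_unitCube {n : ℕ} :
    MeasurePreserving (MeasurableEquiv.toLp 2 (Fin n → ℝ))
      (Measure.pi fun _ : Fin n => volume.restrict (Ioo (-(1/2):ℝ) (1/2)))
      (volume.restrict (unitCube n)) := by
  have h := (EuclideanSpace.volume_preserving_symm_measurableEquiv_toLp (Fin n)).symm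
  have h2 := h.restrict_preimage (s := unitCube n) ?_
  · rw [← Measure.restrict_pi_pi]
    have e : (univ.pi fun _ : Fin n => Ioo (-(1/2):ℝ) (1/2)) =
        (MeasurableEquiv.toLp 2 (Fin n → ℝ)).symm.symm ⁻¹' unitCube n := by
      ext y
      simp [unitCube, abs_lt]
    rw [e]
    exact h2
  · have : unitCube n = ⋂ j, {x : Euc n | |x j| < 1/2} := by ext; simp [unitCube]
    rw [this]
    exact MeasurableSet.iInter fun j => measurableSet_lt (by fun_prop) measurable_const

lemma isOpen_unitCube {n : ℕ} : IsOpen (unitCube n) := by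
  have : unitCube n = ⋂ j, {x : Euc n | |x j| < 1/2} := by ext; simp [unitCube]
  rw [this]
  exact isOpen_iInter_of_finite fun j => isOpen_lt (by fun_prop) continuous_const

instance {n : ℕ} : IsProbabilityMeasure ((volume : Measure (Euc n)).restrict (unitCube n)) := by
  have h := volume_restrict_unitCube (n := n)
  have : ∀ i : Fin n, IsProbabilityMeasure ((fun _ : Fin n => (volume : Measure ℝ).restrict (Ioo (-(1/2):ℝ) (1/2))) i) :=
    fun i => ⟨by simp; norm_num⟩
  rw [← h.map_eq]
  exact Measure.isProbabilityMeasure_map h.measurable.aemeasurable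

lemma isBounded_unitCube {n : ℕ} : Bornology.IsBounded (unitCube n) := by
  refine (EuclideanSpace.equiv (Fin n) ℝ).antilipschitz.isBounded_preimage
    (Metric.isBounded_closedBall (x := (0 : Fin n → ℝ)) (r := 1/2)) |>.subset ?_
  intro x hx
  simp only [mem_preimage, mem_closedBall_zero_iff]
  rw [pi_norm_le_iff_of_nonneg (by norm_num)]
  intro j
  simpa using (hx j).le

/-- Shifts modulo `ℤ^n` preserve Lebesgue measure on the unit cube. -/
lemma mp_perArg_shift {n : ℕ} (a : Euc n) :
    MeasurePreserving (fun s : Euc n => perArg (a + s))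
      (volume.restrict (unitCube n)) (volume.restrict (unitCube n)) := by
  have h1 := measurePreserving_pi
    (fun _ : Fin n => (volume : Measure ℝ).restrict (Ioo (-(1/2):ℝ) (1/2)))
    (fun _ : Fin n => (volume : Measure ℝ).restrict (Ioo (-(1/2):ℝ) (1/2)))
    (fun i => mp_shift_one (a i))
  exact (volume_restrict_unitCube.comp h1).comp volume_restrict_unitCube.symm

/-- Near any point the periodization of a test function on the cube is an integer translate of
the function itself: this includes the faces, where both vanish. -/
lemma perArg_local {n : ℕ} {F : Type*} [NormedAddCommGroup F] [NormedSpace ℝ F]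
    {φ : Euc n → F} (hφ : TestIn (unitCube n) φ) (y₀ : Euc n) :
    ∀ᶠ y in 𝓝 y₀, φ (perArg y) = φ (y - (y₀ - perArg y₀)) := by
  -- `φ` vanishes as soon as one coordinate has modulus at least `ρ < 1/2`
  obtain ⟨ρ, hρ, hφρ⟩ : ∃ ρ < (1/2 : ℝ), ∀ z : Euc n, ∀ j, ρ ≤ |z j| → φ z = 0 := by
    have hj : ∀ j : Fin n, ∃ ρ < (1/2 : ℝ), ∀ z : Euc n, ρ ≤ |z j| → φ z = 0 := by
      intro j
      by_cases hne : (tsupport φ).Nonempty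
      · obtain ⟨x, hx, hmax⟩ := hφ.2.1.isCompact.exists_isMaxOn hne
          (f := fun z : Euc n => |z j|) (by fun_prop)
        have hx' := hφ.2.2 hx j
        refine ⟨(|x j| + 1/2)/2, by linarith, fun z hz => ?_⟩
        by_contra h
        have := hmax (subset_tsupport _ h)
        simp only [mem_ofPred_eq] at this
        linarith
      · refine ⟨0, by norm_num, fun z _ => ?_⟩
        by_contra h
        exact hne ⟨z, subset_tsupport _ h⟩
    choose ρ h1 h2 using hj
    by_cases hn : Nonempty (Fin n)
    · obtain ⟨j₀, hj₀⟩ := Finite.exists_max ρ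
      exact ⟨ρ j₀, h1 j₀, fun z j hz => h2 j z ((hj₀ j).trans hz)⟩
    · exact ⟨0, by norm_num, fun z j => (hn ⟨j⟩).elim⟩
  have hnear : ∀ᶠ y in 𝓝 y₀, ∀ j, |y j - y₀ j| < 1/2 - ρ := by
    rw [eventually_all]
    intro j
    have : Tendsto (fun y : Euc n => |y j - y₀ j|) (𝓝 y₀) (𝓝 |y₀ j - y₀ j|) :=
      Continuous.tendsto (by fun_prop) y₀
    rw [sub_self, abs_zero] at this
    exact this.eventually (gt_mem_nhds (by linarith))
  filter_upwards [hnear] with y hy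
  have hk : ∀ j, (y - (y₀ - perArg y₀)) j = y j - round (y₀ j) := by
    intro j; simp [perArg]
  have hp : ∀ j, (perArg y) j = y j - round (y j) := fun j => rfl
  by_cases hall : ∀ j, round (y j) = round (y₀ j)
  · congr 1
    ext j
    rw [hk, hp, hall]
  · push Not at hall
    obtain ⟨j, hj⟩ := hall
    have e1 := abs_sub_round (y₀ j)
    have e2 := abs_sub_round (y j)
    have e3 := hy j
    have hz : (1:ℝ) ≤ |((round (y j) : ℤ) : ℝ) - ((round (y₀ j) : ℤ) : ℝ)| := by
      have : (1 : ℤ) ≤ |round (y j) - round (y₀ j)| := Int.one_le_abs (sub_ne_zero.2 hj)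
      exact_mod_cast this
    rw [hφρ _ j, hφρ _ j]
    · rw [hk]
      have := abs_sub_abs_le_abs_sub (((round (y j) : ℤ) : ℝ) - ((round (y₀ j) : ℤ) : ℝ)) (y j - round (y₀ j))
      have e4 : ((round (y j) : ℤ) : ℝ) - ((round (y₀ j) : ℤ) : ℝ) - (y j - round (y₀ j)) = -(y j - round (y j)) := by ring
      rw [e4, abs_neg] at this
      linarith
    · rw [hp]
      have h5 : |((round (y j) : ℤ) : ℝ) - ((round (y₀ j) : ℤ) : ℝ)| ≤
          |y j - round (y j)| + |y j - y₀ j| + |y₀ j - round (y₀ j)| := by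
        have : ((round (y j) : ℤ) : ℝ) - ((round (y₀ j) : ℤ) : ℝ) =
          -(y j - round (y j)) + (y j - y₀ j) + (y₀ j - round (y₀ j)) := by ring
        rw [this]
        refine (abs_add_le _ _).trans (add_le_add_left ?_ _)
        refine (abs_add_le _ _).trans ?_
        rw [abs_neg]
      linarith

lemma contDiff_per {n : ℕ} {F : Type*} [NormedAddCommGroup F] [NormedSpace ℝ F]
    {φ : Euc n → F} (hφ : TestIn (unitCube n) φ) :
    ContDiff ℝ (⊤ : ℕ∞) (fun y => φ (perArg y)) := by
  rw [contDiff_iff_contDiffAt]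
  intro y₀
  refine ContDiffAt.congr_of_eventuallyEq ?_ (perArg_local hφ y₀)
  exact (hφ.1.comp (contDiff_id.sub contDiff_const)).contDiffAt

lemma fderiv_per {n : ℕ} {F : Type*} [NormedAddCommGroup F] [NormedSpace ℝ F]
    {φ : Euc n → F} (hφ : TestIn (unitCube n) φ) (y : Euc n) :
    fderiv ℝ (fun y => φ (perArg y)) y = fderiv ℝ φ (perArg y) := by
  rw [Filter.EventuallyEq.fderiv_eq (perArg_local hφ y), fderiv_comp_sub]
  congr 1
  abel

/-! ### The relaxed density -/

section Relax
variable {n d : ℕ}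

/-- The matrix of a linear map `ℝ^n → ℝ^d`, as a continuous linear operation. -/
def matOf : (Euc n →L[ℝ] Euc d) →ₗ[ℝ] Mat d n where
  toFun L := fun i j => L (EuclideanSpace.single j 1) i
  map_add' _ _ := rfl
  map_smul' _ _ := rfl

lemma continuous_matOf : Continuous (matOf : (Euc n →L[ℝ] Euc d) → Mat d n) :=
  LinearMap.continuous_of_finiteDimensional _

lemma gradMat_eq (φ : Euc n → Euc d) (x : Euc n) : gradMat φ x = matOf (fderiv ℝ φ x) := rfl

lemma continuous_gradMat {φ : Euc n → Euc d} (h : ContDiff ℝ (⊤ : ℕ∞) φ) :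
    Continuous (gradMat φ) :=
  continuous_matOf.comp (h.continuous_fderiv (by simp))

lemma gradMat_bounded {U : Set (Euc n)} {φ : Euc n → Euc d} (h : TestIn U φ) :
    ∃ C, 0 ≤ C ∧ ∀ x, ‖gradMat φ x‖ ≤ C := by
  have hc : HasCompactSupport (gradMat φ) := (h.2.1.fderiv ℝ).comp_left (g := matOf) (map_zero _)
  obtain ⟨C, hC⟩ := hc.exists_bound_of_continuous (continuous_gradMat h.1)
  exact ⟨C, (norm_nonneg _).trans (hC 0), hC⟩

/-- The gradient of a test function as a bounded continuous function. -/
def gradB {U : Set (Euc n)} {φ : Euc n → Euc d} (h : TestIn U φ) :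
    BoundedContinuousFunction (Euc n) (Mat d n) :=
  BoundedContinuousFunction.ofNormedAddCommGroup (gradMat φ) (continuous_gradMat h.1)
    (gradMat_bounded h).choose (gradMat_bounded h).choose_spec.2

@[simp] lemma gradB_apply {U : Set (Euc n)} {φ : Euc n → Euc d} (h : TestIn U φ) (y : Euc n) :
    gradB h y = gradMat φ y := rfl

lemma gradMat_zero (x : Euc n) : gradMat (fun _ => (0 : Euc d)) x = 0 := by
  ext i j; simp [gradMat]

/-- `Zq g ξ` is the infimum of `∫_Q g(ξ + ∇φ)` over test functions `φ`: Dacorogna's formula for the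
quasiconvex envelope. -/
def Zq (g : Mat d n → ℝ) (ξ : Mat d n) : ℝ :=
  ⨅ φ : {φ : Euc n → Euc d // TestIn (unitCube n) φ}, ∫ y in unitCube n, g (ξ + gradMat φ.1 y)

lemma Zq_bddBelow {g : Mat d n → ℝ} (hg : ∀ ξ, 0 ≤ g ξ) (ξ : Mat d n) :
    BddBelow (range fun φ : {φ : Euc n → Euc d // TestIn (unitCube n) φ} =>
      ∫ y in unitCube n, g (ξ + gradMat φ.1 y)) :=
  ⟨0, by rintro _ ⟨φ, rfl⟩; exact integral_nonneg fun y => hg _⟩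

lemma Zq_le {g : Mat d n → ℝ} (hg : ∀ ξ, 0 ≤ g ξ) (ξ : Mat d n) {φ : Euc n → Euc d}
    (hφ : TestIn (unitCube n) φ) : Zq g ξ ≤ ∫ y in unitCube n, g (ξ + gradMat φ y) :=
  ciInf_le (Zq_bddBelow hg ξ) ⟨φ, hφ⟩

lemma Zq_nonneg {g : Mat d n → ℝ} (hg : ∀ ξ, 0 ≤ g ξ) (ξ : Mat d n) : 0 ≤ Zq g ξ :=
  Real.iInf_nonneg fun _ => integral_nonneg fun _ => hg _

lemma Zq_le_self {g : Mat d n → ℝ} (hg : ∀ ξ, 0 ≤ g ξ) (ξ : Mat d n) : Zq g ξ ≤ g ξ := by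
  refine (Zq_le hg ξ (TestIn.zero)).trans ?_
  simp [gradMat_zero]

lemma integrable_comp_grad {g : Mat d n → ℝ} (hg : Continuous g) (ξ : Mat d n)
    {φ : Euc n → Euc d} (hφ : TestIn (unitCube n) φ) :
    IntegrableOn (fun y => g (ξ + gradMat φ y)) (unitCube n) := by
  have hc : Continuous fun y => g (ξ + gradMat φ y) :=
    hg.comp (continuous_const.add (continuous_gradMat hφ.1))
  exact (hc.continuousOn.integrableOn_compact
    (isBounded_unitCube.isCompact_closure)).mono_set subset_closure

/-- A sequence of test functions on the cube whose gradients are uniformly dense. -/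
lemma exists_dense_tests (n d : ℕ) : ∃ Φ : ℕ → Euc n → Euc d, (∀ i, TestIn (unitCube n) (Φ i)) ∧
    ∀ φ, TestIn (unitCube n) φ → ∀ ε > 0, ∃ i, ∀ y ∈ unitCube n,
      ‖gradMat (Φ i) y - gradMat φ y‖ ≤ ε := by
  let S : Set C(Euc n, Mat d n) := {f | ∃ φ : Euc n → Euc d, TestIn (unitCube n) φ ∧ ∀ y, f y = gradMat φ y}
  have hne : Nonempty S := ⟨⟨0, fun _ => 0, TestIn.zero, fun y => by simp [gradMat_zero]⟩⟩
  obtain ⟨u, hu⟩ := TopologicalSpace.exists_dense_seq S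
  choose Φ hΦ hΦu using fun i => (u i).2
  refine ⟨Φ, hΦ, fun φ hφ ε hε => ?_⟩
  let f : S := ⟨⟨gradMat φ, continuous_gradMat hφ.1⟩, φ, hφ, fun _ => rfl⟩
  have hK : IsCompact (closure (unitCube n)) := isBounded_unitCube.isCompact_closure
  have h1 : Tendsto (fun s : S => (s : C(Euc n, Mat d n))) (𝓝 f) (𝓝 f.1) :=
    continuous_subtype_val.tendsto f
  have h2 := ContinuousMap.tendsto_iff_forall_isCompact_tendstoUniformlyOn.1 h1 _ hK
  have h3 := Metric.tendstoUniformlyOn_iff.1 h2 ε hε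
  obtain ⟨s, hs, i, rfl⟩ := mem_closure_iff_nhds.1 (hu f) _ h3
  refine ⟨i, fun y hy => ?_⟩
  have := hs y (subset_closure hy)
  rw [dist_comm, dist_eq_norm, hΦu] at this
  exact this.le

lemma Zq_approx {Φ : ℕ → Euc n → Euc d} (hΦ : ∀ i, TestIn (unitCube n) (Φ i))
    (hd : ∀ φ, TestIn (unitCube n) φ → ∀ ε > 0, ∃ i, ∀ y ∈ unitCube n,
      ‖gradMat (Φ i) y - gradMat φ y‖ ≤ ε)
    {g : Mat d n → ℝ} (hg : Continuous g) (ξ : Mat d n) {ε : ℝ} (hε : 0 < ε) :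
    ∃ i, ∫ y in unitCube n, g (ξ + gradMat (Φ i) y) ≤ Zq g ξ + ε := by
  have : Nonempty {φ : Euc n → Euc d // TestIn (unitCube n) φ} := ⟨⟨_, TestIn.zero⟩⟩
  obtain ⟨⟨φ, hφ⟩, h1⟩ := exists_lt_of_ciInf_lt (show Zq g ξ < Zq g ξ + ε / 2 by linarith)
  obtain ⟨C, hC0, hC⟩ := gradMat_bounded hφ
  have hK : IsCompact (Metric.closedBall (0 : Mat d n) (‖ξ‖ + C + 1)) := isCompact_closedBall _ _
  have huc := hK.uniformContinuousOn_of_continuous hg.continuousOn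
  obtain ⟨δ, hδ, huc⟩ := Metric.uniformContinuousOn_iff.1 huc (ε / 2) (by linarith)
  obtain ⟨i, hi⟩ := hd φ hφ (min (δ/2) 1) (by positivity)
  refine ⟨i, ?_⟩
  have hle : ∀ y ∈ unitCube n, g (ξ + gradMat (Φ i) y) ≤ g (ξ + gradMat φ y) + ε / 2 := by
    intro y hy
    have e1 : ‖gradMat (Φ i) y - gradMat φ y‖ ≤ δ/2 := (hi y hy).trans (min_le_left _ _)
    have e2 : ‖gradMat (Φ i) y - gradMat φ y‖ ≤ 1 := (hi y hy).trans (min_le_right _ _)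
    have e3 : ‖gradMat (Φ i) y‖ ≤ C + 1 := by
      have := norm_add_le (gradMat (Φ i) y - gradMat φ y) (gradMat φ y)
      rw [sub_add_cancel] at this
      linarith [hC y]
    have := huc (ξ + gradMat (Φ i) y) (by
        rw [mem_closedBall_zero_iff]; linarith [norm_add_le ξ (gradMat (Φ i) y)])
      (ξ + gradMat φ y) (by
        rw [mem_closedBall_zero_iff]; linarith [norm_add_le ξ (gradMat φ y), hC y])
      (by rw [dist_add_left, dist_eq_norm]; linarith)
    rw [Real.dist_eq] at this
    linarith [le_abs_self (g (ξ + gradMat (Φ i) y) - g (ξ + gradMat φ y))]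
  calc ∫ y in unitCube n, g (ξ + gradMat (Φ i) y)
      ≤ ∫ y in unitCube n, (g (ξ + gradMat φ y) + ε / 2) :=
        setIntegral_mono_on (integrable_comp_grad hg ξ (hΦ i))
          ((integrable_comp_grad hg ξ hφ).add (integrable_const _)) isOpen_unitCube.measurableSet hle
    _ = (∫ y in unitCube n, g (ξ + gradMat φ y)) + ε / 2 := by
        rw [integral_add (integrable_comp_grad hg ξ hφ) (integrable_const _)]; simp
    _ ≤ Zq g ξ + ε := by simp only at h1; linarith

/-- Nonnegative Carathéodory integrands, locally bounded in the matrix variable uniformly in `x`. -/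
structure Cara (g : Euc n → Mat d n → ℝ) : Prop where
  meas : Measurable (Function.uncurry g)
  cont : ∀ x, Continuous (g x)
  nn : ∀ x ξ, 0 ≤ g x ξ
  bdd : ∀ R : ℝ, ∃ M : ℝ≥0, ∀ x ξ, ‖ξ‖ ≤ R → g x ξ ≤ M

lemma Zq_eq_iInf {Φ : ℕ → Euc n → Euc d} (hΦ : ∀ i, TestIn (unitCube n) (Φ i))
    (hd : ∀ φ, TestIn (unitCube n) φ → ∀ ε > 0, ∃ i, ∀ y ∈ unitCube n,
      ‖gradMat (Φ i) y - gradMat φ y‖ ≤ ε)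
    {g : Mat d n → ℝ} (hg : Continuous g) (hg0 : ∀ ξ, 0 ≤ g ξ) (ξ : Mat d n) :
    Zq g ξ = ⨅ i, ∫ y in unitCube n, g (ξ + gradMat (Φ i) y) := by
  apply le_antisymm
  · exact le_ciInf fun i => Zq_le hg0 ξ (hΦ i)
  · refine le_of_forall_pos_le_add fun ε hε => ?_
    obtain ⟨i, hi⟩ := Zq_approx hΦ hd hg ξ hε
    refine (ciInf_le ⟨0, ?_⟩ i).trans hi
    rintro _ ⟨j, rfl⟩
    exact integral_nonneg fun y => hg0 _

lemma measurable_Zq {g : Euc n → Mat d n → ℝ} (hg : Cara g) {ζ : Euc n → Mat d n}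
    (hζ : Measurable ζ) : Measurable fun x => Zq (g x) (ζ x) := by
  obtain ⟨Φ, hΦ, hd⟩ := exists_dense_tests n d
  simp_rw [fun x => Zq_eq_iInf hΦ hd (hg.cont x) (hg.nn x) (ζ x)]
  refine Measurable.iInf fun i => ?_
  have hm : Measurable fun z : Euc n × Euc n => g z.1 (ζ z.1 + gradMat (Φ i) z.2) :=
    hg.meas.comp (measurable_fst.prodMk ((hζ.comp measurable_fst).add
      ((continuous_gradMat (hΦ i).1).measurable.comp measurable_snd)))
  exact hm.stronglyMeasurable.integral_prod_right.measurable

end Relax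

/-! ### Relaxation by oscillation, and the quasiconvex envelope -/

section Relax
variable {n d : ℕ}

/-- The rank-one type correction `a ⊗ ∇χ` appearing when a scalar cutoff multiplies a vector. -/
def outer (a : Euc d) (L : Euc n →L[ℝ] ℝ) : Mat d n := fun i l => L (EuclideanSpace.single l 1) * a i

lemma outer_eq (a : Euc d) (L : Euc n →L[ℝ] ℝ) : outer a L = matOf (L.smulRight a) := by
  ext i l; rfl

lemma outer_norm_le (a : Euc d) (L : Euc n →L[ℝ] ℝ) : ‖outer a L‖ ≤ ‖L‖ * ‖a‖ := by
  refine (pi_norm_le_iff_of_nonneg (by positivity)).2 fun i =>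
    (pi_norm_le_iff_of_nonneg (by positivity)).2 fun l => ?_
  rw [outer, norm_mul]
  gcongr
  · simpa using L.le_opNorm (EuclideanSpace.single l 1)
  · exact PiLp.norm_apply_le a i

/-- Gradient of the oscillating perturbation `v + ∑ χ_j(x) c ψ_j(m x + s)` when `c m = 1`. -/
lemma gradMat_osc (v : Euc n → Euc d) (hv : ContDiff ℝ (⊤ : ℕ∞) v) (N : ℕ)
    (χ : ℕ → Euc n → ℝ) (hχ : ∀ j, ContDiff ℝ (⊤ : ℕ∞) (χ j))
    (ψ : ℕ → Euc n → Euc d) (hψ : ∀ j, ContDiff ℝ (⊤ : ℕ∞) (ψ j)) (c m : ℝ) (hcm : c * m = 1)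
    (s x : Euc n) :
    gradMat (fun x => v x + ∑ j ∈ Finset.range N, χ j x • (c • ψ j (m • x + s))) x =
      gradMat v x + ∑ j ∈ Finset.range N, χ j x • gradMat (ψ j) (m • x + s)
        + c • ∑ j ∈ Finset.range N, outer (ψ j (m • x + s)) (fderiv ℝ (χ j) x) := by
  have h1 : HasFDerivAt (fun x : Euc n => m • x + s) (m • ContinuousLinearMap.id ℝ (Euc n)) x :=
    ((hasFDerivAt_id x).const_smul m).add_const s
  have h2 : ∀ j, HasFDerivAt (fun x => χ j x • (c • ψ j (m • x + s)))
      (χ j x • (c • (fderiv ℝ (ψ j) (m • x + s)).comp (m • ContinuousLinearMap.id ℝ (Euc n)))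
        + (fderiv ℝ (χ j) x).smulRight (c • ψ j (m • x + s))) x := by
    intro j
    have a1 : HasFDerivAt (χ j) (fderiv ℝ (χ j) x) x :=
      ((hχ j).differentiable (by simp) x).hasFDerivAt
    have a2 : HasFDerivAt (ψ j) (fderiv ℝ (ψ j) (m • x + s)) (m • x + s) :=
      ((hψ j).differentiable (by simp) _).hasFDerivAt
    exact a1.smul ((a2.comp x h1).const_smul c)
  have h3 : HasFDerivAt v (fderiv ℝ v x) x := (hv.differentiable (by simp) x).hasFDerivAt
  have h4 := h3.fun_add (HasFDerivAt.fun_sum (u := Finset.range N) fun j _ => h2 j)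
  rw [gradMat_eq, h4.fderiv, map_add, map_sum, add_assoc, gradMat_eq, Finset.smul_sum,
    ← Finset.sum_add_distrib]
  congr 1
  refine Finset.sum_congr rfl fun j _ => ?_
  rw [map_add, outer_eq, gradMat_eq]
  congr 1
  · rw [ContinuousLinearMap.comp_smul, ContinuousLinearMap.comp_id, smul_smul c m, hcm, one_smul,
      map_smul]
  · rw [← outer_eq, ← outer_eq]
    ext i l
    simp only [outer, Pi.smul_apply, PiLp.smul_apply, smul_eq_mul]
    ring

/-- Relaxation by oscillation. A test function `v` can be perturbed, uniformly little, so that the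
energy with density `g` drops to the energy of `v` with density `Zq g`. Periodic oscillations
`m⁻¹ φ_j(m x + s)` are localised by smooth cutoffs; averaging over the shift `s` computes the mean
energy exactly, so no weak convergence of periodic functions is required. -/
theorem relax {g : Euc n → Mat d n → ℝ} (hg : Cara g) {ω : Set (Euc n)} (hω : IsOpen ω)
    (hfin : volume ω ≠ ⊤) {v : Euc n → Euc d} (hv : TestIn ω v) (ξ₀ : Mat d n) {δ : ℝ}
    (hδ : 0 < δ) :
    ∃ v' : Euc n → Euc d, TestIn ω v' ∧ (∀ x, ‖v' x - v x‖ ≤ δ) ∧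
      ∫⁻ x in ω, ENNReal.ofReal (g x (ξ₀ + gradMat v' x)) ≤
        (∫⁻ x in ω, ENNReal.ofReal (Zq (g x) (ξ₀ + gradMat v x))) + ENNReal.ofReal δ := by
  obtain ⟨Φ, hΦ, hd⟩ := exists_dense_tests n d
  set Q := unitCube n with hQ
  obtain ⟨Cv, hCv0, hCv⟩ := gradMat_bounded hv
  have hgv : Measurable (gradMat v) := (continuous_gradMat hv.1).measurable
  have hgΦ : ∀ j, Measurable (gradMat (Φ j)) := fun j => (continuous_gradMat (hΦ j).1).measurable
  set δ' : ℝ≥0∞ := ENNReal.ofReal (δ / 2) / (volume ω + 1) with hδ'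
  have hv1 : volume ω + 1 ≠ ⊤ := by simp [hfin]
  have hδ'0 : δ' ≠ 0 := by
    rw [hδ', ne_eq, ENNReal.div_eq_zero_iff]
    simp [hfin, hδ]
  have hδ't : δ' ≠ ⊤ := (ENNReal.div_lt_top ENNReal.ofReal_ne_top (by simp)).ne
  have hδ'm : δ' * volume ω + δ' = ENNReal.ofReal (δ / 2) := by
    rw [← mul_add_one, hδ', ENNReal.div_mul_cancel (by simp) hv1]
  set h : Euc n → ℝ≥0∞ := fun x => ENNReal.ofReal (Zq (g x) (ξ₀ + gradMat v x)) with hh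
  have hm : Measurable h := (measurable_Zq hg (measurable_const.add hgv)).ennreal_ofReal
  let F : Euc n → BoundedContinuousFunction (Euc n) (Mat d n) → ℝ≥0∞ := fun x a =>
    ∫⁻ y in Q, ENNReal.ofReal (g x (ξ₀ + gradMat v x + a y))
  obtain ⟨N, χ, hχ, hsel⟩ := exists_smooth_selection hω hfin (fun i => gradB (hΦ i)) F
    (fun i => by
      have : Measurable fun z : Euc n × Euc n =>
          ENNReal.ofReal (g z.1 (ξ₀ + gradMat v z.1 + gradMat (Φ i) z.2)) :=
        (hg.meas.comp (measurable_fst.prodMk (((measurable_const.add hgv).comp measurable_fst).add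
          ((hgΦ i).comp measurable_snd)))).ennreal_ofReal
      exact this.lintegral_prod_right')
    (fun R => by
      obtain ⟨M, hM⟩ := hg.bdd (‖ξ₀‖ + Cv + R)
      refine ⟨M, fun x _ a ha => ?_⟩
      calc F x a ≤ ∫⁻ y in Q, (M : ℝ≥0∞) := by
            refine lintegral_mono fun y => ?_
            refine ENNReal.ofReal_le_of_le_toReal ?_
            refine hM x _ ((norm_add₃_le).trans ?_)
            linarith [hCv x, a.norm_coe_le_norm y]
        _ = M := by simp [hQ])
    h hm δ' hδ'0
    (fun x => by
      obtain ⟨i, hi⟩ := Zq_approx hΦ hd (hg.cont x) (ξ₀ + gradMat v x)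
        (ENNReal.toReal_pos hδ'0 hδ't)
      refine ⟨i, ?_⟩
      have e := ofReal_integral_eq_lintegral_ofReal
        (integrable_comp_grad (hg.cont x) (ξ₀ + gradMat v x) (hΦ i)) (ae_of_all _ fun y => hg.nn x _)
      change ∫⁻ y in Q, ENNReal.ofReal (g x (ξ₀ + gradMat v x + gradMat (Φ i) y)) ≤ _
      rw [← e, hh]
      refine (ENNReal.ofReal_le_ofReal hi).trans ?_
      rw [ENNReal.ofReal_add (Zq_nonneg (hg.nn x) _) ENNReal.toReal_nonneg,
        ENNReal.ofReal_toReal hδ't])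
  -- The full gradient at `x` and cell variable `y`; the lower order term, where the cutoffs are
  -- differentiated, carries the period `τ` of the oscillation.
  let T : ℝ → Euc n → Euc n → Mat d n := fun τ x y =>
    ξ₀ + (gradMat v x + ∑ j ∈ Finset.range N, χ j x • gradMat (Φ j) y
      + τ • ∑ j ∈ Finset.range N, outer (Φ j y) (fderiv ℝ (χ j) x))
  have hTc : ∀ τ, Continuous fun z : Euc n × Euc n => T τ z.1 z.2 := by
    intro τ
    have c1 := continuous_gradMat hv.1
    have c2 := fun j => continuous_gradMat (hΦ j).1
    have c3 := fun j => (hχ j).1.continuous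
    have c4 : ∀ j, Continuous fun z : Euc n × Euc n => outer (Φ j z.2) (fderiv ℝ (χ j) z.1) := by
      intro j
      have b1 := ((hχ j).1.continuous_fderiv (by simp))
      have b2 := (hΦ j).1.continuous
      refine continuous_pi fun i => continuous_pi fun l => ?_
      simp only [outer]
      fun_prop
    refine continuous_const.add ((((c1.comp continuous_fst)).add
      (continuous_finsetSum _ fun j _ => ((c3 j).comp continuous_fst).smul
        ((c2 j).comp continuous_snd))).add
      ((continuous_finsetSum _ fun j _ => c4 j).const_smul τ))
  have hTτ : ∀ x y, Continuous fun τ => T τ x y := fun x y =>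
    continuous_const.add (continuous_const.add (continuous_id.smul continuous_const))
  obtain ⟨R, hR⟩ : ∃ R, ∀ τ, |τ| ≤ 1 → ∀ x y, ‖T τ x y‖ ≤ R := by
    choose A hA0 hA using fun j => (hχ j).bounded
    choose B hB0 hB using fun j => gradMat_bounded (hΦ j)
    choose C hC0 hC using fun j => (hΦ j).bounded
    have : ∀ j, ∃ D, ∀ x, ‖fderiv ℝ (χ j) x‖ ≤ D := fun j =>
      ((hχ j).2.1.fderiv ℝ).exists_bound_of_continuous ((hχ j).1.continuous_fderiv (by simp))
    choose D hD using this
    refine ⟨‖ξ₀‖ + (Cv + ∑ j ∈ Finset.range N, A j * B j + ∑ j ∈ Finset.range N, D j * C j),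
      fun τ hτ x y => ?_⟩
    refine (norm_add_le _ _).trans (add_le_add le_rfl ?_)
    refine (norm_add_le _ _).trans (add_le_add ?_ ?_)
    · refine (norm_add_le _ _).trans (add_le_add (hCv x) ?_)
      refine (norm_sum_le _ _).trans (Finset.sum_le_sum fun j _ => ?_)
      rw [norm_smul]
      exact mul_le_mul (hA j x) (hB j y) (norm_nonneg _) (hA0 j)
    · rw [norm_smul]
      refine (mul_le_of_le_one_left (norm_nonneg _) hτ).trans ?_
      refine (norm_sum_le _ _).trans (Finset.sum_le_sum fun j _ => ?_)
      refine (outer_norm_le _ _).trans ?_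
      exact mul_le_mul (hD j x) (hC j y) (norm_nonneg _) ((norm_nonneg _).trans (hD j x))
  obtain ⟨M, hM⟩ := hg.bdd R
  have hGm : ∀ τ, Measurable fun z : Euc n × Euc n => ENNReal.ofReal (g z.1 (T τ z.1 z.2)) :=
    fun τ => (hg.meas.comp (measurable_fst.prodMk (hTc τ).measurable)).ennreal_ofReal
  let J : ℝ → ℝ≥0∞ := fun τ => ∫⁻ x in ω, ∫⁻ y in Q, ENNReal.ofReal (g x (T τ x y))
  have : IsFiniteMeasure (volume.restrict ω) := ⟨by simpa using hfin.lt_top⟩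
  have hJ0 : J 0 ≤ (∫⁻ x in ω, h x) + ENNReal.ofReal (δ / 2) := by
    rw [← hδ'm, ← add_assoc]
    refine le_of_eq_of_le ?_ hsel
    refine lintegral_congr fun x => lintegral_congr fun y => ?_
    congr 2
    simp only [T, zero_smul, add_zero, add_assoc]
    congr 2
    simp [BoundedContinuousFunction.coe_sum, Finset.sum_apply]
  have hJt : Tendsto (fun m : ℕ => J (1 / ((m:ℝ) + 1))) atTop (𝓝 (J 0)) := by
    have e : ∀ τ, J τ = ∫⁻ z, ENNReal.ofReal (g z.1 (T τ z.1 z.2))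
        ∂((volume.restrict ω).prod (volume.restrict Q)) := fun τ =>
      (lintegral_prod _ (hGm τ).aemeasurable).symm
    simp_rw [e]
    refine tendsto_lintegral_of_dominated_convergence (fun _ => (M:ℝ≥0∞)) (fun m => hGm _) ?_ ?_ ?_
    · intro m
      refine ae_of_all _ fun z => ENNReal.ofReal_le_of_le_toReal ?_
      refine hM _ _ (hR _ ?_ _ _)
      rw [abs_of_nonneg (by positivity), div_le_one (by positivity)]
      linarith [(Nat.cast_nonneg m : (0:ℝ) ≤ m)]
    · rw [lintegral_const]
      exact ENNReal.mul_ne_top ENNReal.coe_ne_top (measure_ne_top _ _)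
    · refine ae_of_all _ fun z => ENNReal.tendsto_ofReal ?_
      exact ((hg.cont z.1).tendsto _).comp (((hTτ z.1 z.2).tendsto 0).comp
        tendsto_one_div_add_atTop_nhds_zero_nat)
  have hosc : ∃ C : ℝ, ∀ x y, ‖∑ j ∈ Finset.range N, χ j x • Φ j y‖ ≤ C := by
    choose A hA0 hA using fun j => (hχ j).bounded
    choose C hC0 hC using fun j => (hΦ j).bounded
    refine ⟨∑ j ∈ Finset.range N, A j * C j, fun x y => ?_⟩
    refine (norm_sum_le _ _).trans (Finset.sum_le_sum fun j _ => ?_)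
    rw [norm_smul]
    exact mul_le_mul (hA j x) (hC j y) (norm_nonneg _) (hA0 j)
  obtain ⟨C, hC⟩ := hosc
  -- choice of the oscillation frequency
  obtain ⟨m, hm1, hm2⟩ : ∃ m : ℕ, J (1 / ((m:ℝ) + 1)) ≤ J 0 + ENNReal.ofReal (δ / 2) ∧
      1 / ((m:ℝ) + 1) * C ≤ δ := by
    have hJ0t : J 0 ≠ ⊤ := by
      refine ne_top_of_le_ne_top ?_ (lintegral_mono (g := fun _ => (M:ℝ≥0∞)) fun x => ?_)
      · rw [lintegral_const]
        exact ENNReal.mul_ne_top ENNReal.coe_ne_top (measure_ne_top _ _)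
      · calc ∫⁻ y in Q, ENNReal.ofReal (g x (T 0 x y)) ≤ ∫⁻ y in Q, (M : ℝ≥0∞) :=
              lintegral_mono fun y => ENNReal.ofReal_le_of_le_toReal (hM _ _ (hR _ (by simp) _ _))
          _ = M := by simp [hQ]
    have e1 : ∀ᶠ m : ℕ in atTop, J (1 / ((m:ℝ) + 1)) < J 0 + ENNReal.ofReal (δ / 2) :=
      hJt.eventually (gt_mem_nhds (ENNReal.lt_add_right hJ0t (by simpa using hδ)))
    have e2 : ∀ᶠ m : ℕ in atTop, 1 / ((m:ℝ) + 1) * C < δ := by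
      have : Tendsto (fun m : ℕ => 1 / ((m:ℝ) + 1) * C) atTop (𝓝 (0 * C)) :=
        tendsto_one_div_add_atTop_nhds_zero_nat.mul_const C
      rw [zero_mul] at this
      exact this.eventually (gt_mem_nhds hδ)
    obtain ⟨m, h1, h2⟩ := (e1.and e2).exists
    exact ⟨m, h1.le, h2.le⟩
  set μ : ℝ := (m:ℝ) + 1 with hμ
  have hμ0 : 0 < μ := by positivity
  -- choice of the shift, by averaging
  have hshift : ∃ s : Euc n, ∫⁻ x in ω, ENNReal.ofReal (g x (T (1/μ) x (perArg (μ • x + s)))) ≤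
      J (1/μ) := by
    have hmm : Measurable fun z : Euc n × Euc n =>
        ENNReal.ofReal (g z.2 (T (1/μ) z.2 (perArg (μ • z.2 + z.1)))) :=
      (hGm (1/μ)).comp (measurable_snd.prodMk (measurable_perArg.comp
        ((measurable_snd.const_smul μ).add measurable_fst)))
    obtain ⟨s, hs⟩ := exists_le_lintegral (μ := volume.restrict Q)
      (f := fun s => ∫⁻ x in ω, ENNReal.ofReal (g x (T (1/μ) x (perArg (μ • x + s)))))
      hmm.lintegral_prod_right'.aemeasurable
    refine ⟨s, hs.trans (le_of_eq ?_)⟩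
    rw [lintegral_lintegral_swap hmm.aemeasurable]
    refine lintegral_congr fun x => ?_
    exact (mp_perArg_shift (μ • x)).lintegral_comp
      (f := fun y => ENNReal.ofReal (g x (T (1/μ) x y))) ((hGm (1/μ)).comp measurable_prodMk_left)
  obtain ⟨s, hs⟩ := hshift
  have hψ : ∀ j, ContDiff ℝ (⊤ : ℕ∞) (fun y => Φ j (perArg y)) := fun j => contDiff_per (hΦ j)
  refine ⟨fun x => v x + ∑ j ∈ Finset.range N, χ j x • ((1/μ) • Φ j (perArg (μ • x + s))), ?_, ?_, ?_⟩
  · refine hv.add (TestIn.sum _ fun j _ => (hχ j).smul ?_)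
    exact ((hψ j).comp ((contDiff_id.const_smul μ).add contDiff_const)).const_smul (1/μ)
  · intro x
    rw [add_sub_cancel_left]
    have : ∑ j ∈ Finset.range N, χ j x • ((1/μ) • Φ j (perArg (μ • x + s))) =
        (1/μ) • ∑ j ∈ Finset.range N, χ j x • Φ j (perArg (μ • x + s)) := by
      rw [Finset.smul_sum]
      exact Finset.sum_congr rfl fun j _ => smul_comm _ _ _
    rw [this, norm_smul, Real.norm_of_nonneg (by positivity)]
    exact (mul_le_mul_of_nonneg_left (hC _ _) (by positivity)).trans hm2
  · have hgr : ∀ x, ξ₀ + gradMat (fun x => v x + ∑ j ∈ Finset.range N,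
        χ j x • ((1/μ) • Φ j (perArg (μ • x + s)))) x = T (1/μ) x (perArg (μ • x + s)) := by
      intro x
      rw [gradMat_osc v hv.1 N χ (fun j => (hχ j).1) (fun j y => Φ j (perArg y)) hψ (1/μ) μ
        (by field_simp) s x]
      simp only [T, gradMat_eq, fderiv_per (hΦ _)]
    simp_rw [hgr]
    refine hs.trans (hm1.trans ?_)
    refine (add_le_add_left hJ0 _).trans (le_of_eq ?_)
    rw [add_assoc, ← ENNReal.ofReal_add (by positivity) (by positivity), add_halves]

lemma testIn_unitCube {φ : Euc n → Euc d} (h1 : ContDiff ℝ (⊤ : ℕ∞) φ)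
    (h2 : tsupport φ ⊆ unitCube n) : TestIn (unitCube n) φ :=
  ⟨h1, Metric.isCompact_of_isClosed_isBounded (isClosed_tsupport _) (isBounded_unitCube.subset h2),
    h2⟩

/-- Dacorogna's formula, the half needed here: `Zq g` lies below the quasiconvex envelope, because
`Zq g` is itself quasiconvex. -/
theorem Zq_le_qcEnvelope {g : Mat d n → ℝ} (hg : Continuous g) (hg0 : ∀ ξ, 0 ≤ g ξ) (ξ : Mat d n) :
    Zq g ξ ≤ qcEnvelope g ξ := by
  have hC : Cara (fun _ : Euc n => g) := by
    refine ⟨hg.measurable.comp measurable_snd, fun _ => hg, fun _ => hg0, fun R => ?_⟩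
    obtain ⟨M, hM⟩ := (isCompact_closedBall (0 : Mat d n) R).exists_bound_of_continuousOn
      hg.continuousOn
    refine ⟨M.toNNReal, fun _ ζ hζ => ?_⟩
    exact (le_abs_self _).trans ((hM ζ (by simpa using hζ)).trans (Real.le_coe_toNNReal M))
  refine le_csSup ⟨g ξ, ?_⟩ ⟨Zq g, ?_, fun η => Zq_le_self hg0 η, rfl⟩
  · rintro _ ⟨h, _, hle, rfl⟩
    exact hle ξ
  · intro ζ φ h1 h2
    have hφ := testIn_unitCube h1 h2
    have hInt : IntegrableOn (fun x => Zq g (ζ + gradMat φ x)) (unitCube n) := by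
      refine (integrable_comp_grad hg ζ hφ).mono'
        (measurable_Zq hC (measurable_const.add (continuous_gradMat h1).measurable)).aestronglyMeasurable
        (ae_of_all _ fun x => ?_)
      rw [Real.norm_of_nonneg (Zq_nonneg hg0 _)]
      exact Zq_le_self hg0 _
    change Zq g ζ ≤ ∫ x in unitCube n, Zq g (ζ + gradMat φ x)
    refine le_of_forall_pos_le_add fun δ hδ => ?_
    obtain ⟨φ', hφ', -, hle⟩ := relax hC isOpen_unitCube
      (by rw [← Measure.restrict_apply_univ]; simp) hφ ζ hδ
    refine (Zq_le hg0 ζ hφ').trans ?_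
    rw [← ofReal_integral_eq_lintegral_ofReal (integrable_comp_grad hg ζ hφ')
      (ae_of_all _ fun x => hg0 _), ← ofReal_integral_eq_lintegral_ofReal hInt
      (ae_of_all _ fun x => Zq_nonneg hg0 _), ← ENNReal.ofReal_add
      (integral_nonneg fun x => Zq_nonneg hg0 _) hδ.le] at hle
    exact (ENNReal.ofReal_le_ofReal_iff (add_nonneg (integral_nonneg fun x => Zq_nonneg hg0 _)
      hδ.le)).1 hle

end Relax

/-! ### Densities, exponents and the transverse minimization -/

section Nice
variable {n d : ℕ}

lemma mnorm_nonneg (ξ : Mat d n) : 0 ≤ mnorm ξ := Real.sqrt_nonneg _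

lemma continuous_mnorm : Continuous (mnorm : Mat d n → ℝ) := by
  unfold mnorm; fun_prop

lemma norm_entry_le (ξ : Mat d n) (i : Fin d) (j : Fin n) : |ξ i j| ≤ ‖ξ‖ :=
  (norm_le_pi_norm (ξ i) j).trans (norm_le_pi_norm ξ i)

lemma mnorm_le (ξ : Mat d n) : mnorm ξ ≤ (d * n : ℝ) * ‖ξ‖ := by
  have h1 : ∑ i, ∑ j, (ξ i j)^2 ≤ (d * n : ℝ) * ‖ξ‖^2 := by
    calc ∑ i, ∑ j, (ξ i j)^2 ≤ ∑ i : Fin d, ∑ j : Fin n, ‖ξ‖^2 := by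
          refine Finset.sum_le_sum fun i _ => Finset.sum_le_sum fun j _ => ?_
          rw [← sq_abs]
          exact pow_le_pow_left₀ (abs_nonneg _) (norm_entry_le ξ i j) 2
      _ = _ := by simp; ring
  have h2 : (d * n : ℝ) * ‖ξ‖^2 ≤ ((d * n : ℝ) * ‖ξ‖)^2 := by
    rw [mul_pow]
    refine mul_le_mul_of_nonneg_right ?_ (by positivity)
    have : ((d * n : ℕ) : ℝ) ≤ ((d * n : ℕ) : ℝ)^2 := by
      exact_mod_cast Nat.le_self_pow (by norm_num) _
    simpa using this
  refine (Real.sqrt_le_sqrt (h1.trans h2)).trans ?_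
  rw [Real.sqrt_sq (by positivity)]

lemma norm_le_mnorm (ξ : Mat d n) : ‖ξ‖ ≤ mnorm ξ := by
  refine (pi_norm_le_iff_of_nonneg (mnorm_nonneg _)).2 fun i =>
    (pi_norm_le_iff_of_nonneg (mnorm_nonneg _)).2 fun l => ?_
  refine Real.abs_le_sqrt ?_
  refine le_trans ?_ (Finset.single_le_sum (f := fun i => ∑ j, (ξ i j)^2)
    (fun i _ => Finset.sum_nonneg fun j _ => sq_nonneg _) (Finset.mem_univ i))
  exact Finset.single_le_sum (f := fun j => (ξ i j)^2) (fun j _ => sq_nonneg _) (Finset.mem_univ l)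

lemma mnorm_zero : mnorm (0 : Mat d n) = 0 := by simp [mnorm]

/-- Density `W` and exponent `P` satisfying the structural hypotheses at every point (rather than
almost everywhere in `ω`). -/
structure Nice (W : Euc 2 → Mat 3 3 → ℝ) (P : Euc 2 → ℝ) : Prop where
  meas : ∀ ξ, Measurable fun x => W x ξ
  uc : ∀ x, UniformContinuous (W x)
  nn : ∀ x ξ, 0 ≤ W x ξ
  growth : ∃ C : ℝ, 0 ≤ C ∧ ∀ x ξ, W x ξ ≤ C * (‖ξ‖ + 1)
  pmeas : Measurable P
  pbd : ∃ pM : ℝ, ∀ x, 1 ≤ P x ∧ P x ≤ pM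

/-- The density `W₀(x,ξ_α) = inf_{ξ₃} W(x,(ξ_α,ξ₃))`. -/
def W₀ (W : Euc 2 → Mat 3 3 → ℝ) (x : Euc 2) (ξ : Mat 3 2) : ℝ :=
  ⨅ a : Fin 3 → ℝ, W x (joinCols ξ a)

variable {W : Euc 2 → Mat 3 3 → ℝ} {P : Euc 2 → ℝ}

lemma joinCols_dist (ξ η : Mat 3 2) (a b : Fin 3 → ℝ) :
    dist (joinCols ξ a) (joinCols η b) ≤ max (dist ξ η) (dist a b) := by
  refine (dist_pi_le_iff (le_max_of_le_left dist_nonneg)).2 fun i =>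
    (dist_pi_le_iff (le_max_of_le_left dist_nonneg)).2 fun l => ?_
  unfold joinCols
  split
  · exact le_max_of_le_left ((dist_le_pi_dist (ξ i) (η i) _).trans (dist_le_pi_dist ξ η i))
  · exact le_max_of_le_right (dist_le_pi_dist a b i)

lemma joinCols_norm (ξ : Mat 3 2) (a : Fin 3 → ℝ) : ‖joinCols ξ a‖ ≤ ‖ξ‖ + ‖a‖ := by
  have h := joinCols_dist ξ 0 a 0
  have h0 : joinCols (0 : Mat 3 2) 0 = 0 := by
    ext i j; unfold joinCols; split <;> rfl
  rw [h0, dist_zero_right, dist_zero_right, dist_zero_right] at h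
  exact h.trans (max_le (le_add_of_nonneg_right (norm_nonneg _)) (le_add_of_nonneg_left (norm_nonneg _)))

lemma continuous_joinCols : Continuous fun z : Mat 3 2 × (Fin 3 → ℝ) => joinCols z.1 z.2 := by
  refine continuous_pi fun i => continuous_pi fun l => ?_
  unfold joinCols
  split
  · fun_prop
  · fun_prop

lemma Nice.unc (h : Nice W P) : Measurable (Function.uncurry W) := by
  have := measurable_uncurry_of_continuous_of_measurable (u := fun ξ x => W x ξ)
    (fun x => (h.uc x).continuous) h.meas
  exact this.comp measurable_swap

lemma Nice.bddBelow (h : Nice W P) (x : Euc 2) (ξ : Mat 3 2) :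
    BddBelow (range fun a : Fin 3 → ℝ => W x (joinCols ξ a)) :=
  ⟨0, by rintro _ ⟨a, rfl⟩; exact h.nn _ _⟩

lemma Nice.W₀_nonneg (h : Nice W P) (x : Euc 2) (ξ : Mat 3 2) : 0 ≤ W₀ W x ξ :=
  Real.iInf_nonneg fun _ => h.nn _ _

lemma Nice.W₀_le (h : Nice W P) (x : Euc 2) (ξ : Mat 3 2) (a : Fin 3 → ℝ) :
    W₀ W x ξ ≤ W x (joinCols ξ a) := ciInf_le (h.bddBelow x ξ) a

lemma Nice.W₀_uc (h : Nice W P) (x : Euc 2) : UniformContinuous (W₀ W x) := by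
  rw [Metric.uniformContinuous_iff]
  intro ε hε
  obtain ⟨δ, hδ, H⟩ := Metric.uniformContinuous_iff.1 (h.uc x) (ε / 2) (half_pos hε)
  have key : ∀ ξ η : Mat 3 2, dist ξ η < δ → W₀ W x ξ ≤ W₀ W x η + ε / 2 := by
    intro ξ η hd
    rw [← sub_le_iff_le_add]
    refine le_ciInf fun a => ?_
    have h1 := H (lt_of_le_of_lt (joinCols_dist ξ η a a) (by simpa using hd))
    have h2 := h.W₀_le x ξ a
    rw [Real.dist_eq, abs_lt] at h1
    linarith
  refine ⟨δ, hδ, fun {ξ η} hd => ?_⟩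
  rw [Real.dist_eq, abs_lt]
  have h1 := key ξ η hd
  have h2 := key η ξ (by rwa [dist_comm])
  constructor <;> linarith

lemma Nice.W₀_eq (h : Nice W P) (x : Euc 2) (ξ : Mat 3 2) :
    W₀ W x ξ = ⨅ i : ℕ, W x (joinCols ξ (TopologicalSpace.denseSeq (Fin 3 → ℝ) i)) := by
  apply le_antisymm
  · exact le_ciInf fun i => h.W₀_le x ξ _
  · refine le_ciInf fun a => le_of_forall_pos_le_add fun ε hε => ?_
    have hc : Continuous fun b => W x (joinCols ξ b) :=
      (h.uc x).continuous.comp (continuous_joinCols.comp (Continuous.prodMk_right ξ))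
    obtain ⟨i, hi⟩ := (TopologicalSpace.denseRange_denseSeq (Fin 3 → ℝ)).exists_mem_open
      (isOpen_lt hc continuous_const : IsOpen {b | W x (joinCols ξ b) < W x (joinCols ξ a) + ε})
      ⟨a, by simpa using hε⟩
    refine (ciInf_le ⟨0, ?_⟩ i).trans (le_of_lt hi)
    rintro _ ⟨j, rfl⟩
    exact h.nn _ _

/-- The planar density `W₀^{P}`. -/
def gP (W : Euc 2 → Mat 3 3 → ℝ) (P : Euc 2 → ℝ) (x : Euc 2) (ξ : Mat 3 2) : ℝ :=
  W₀ W x ξ ^ P x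

lemma rpow_le_bound {a b q Q : ℝ} (ha : 0 ≤ a) (hab : a ≤ b) (hb : 1 ≤ b) (hq : 0 ≤ q)
    (hqQ : q ≤ Q) : a ^ q ≤ b ^ Q :=
  (Real.rpow_le_rpow ha hab hq).trans (Real.rpow_le_rpow_of_exponent_le hb hqQ)

/-- Growth of `W^P`. -/
lemma Nice.pow_bdd (h : Nice W P) : ∃ C Q : ℝ, 0 ≤ C ∧ 1 ≤ Q ∧ ∀ x ξ R, ‖ξ‖ ≤ R →
    W x ξ ^ P x ≤ (C * (R + 1) + 1) ^ Q := by
  obtain ⟨C, hC, hg⟩ := h.growth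
  obtain ⟨pM, hp⟩ := h.pbd
  refine ⟨C, pM, hC, (hp 0).1.trans (hp 0).2, fun x ξ R hR => ?_⟩
  have hR0 : 0 ≤ R := (norm_nonneg _).trans hR
  refine rpow_le_bound (h.nn _ _) ?_ ?_ (by linarith [(hp x).1]) (hp x).2
  · have := hg x ξ
    have h2 : C * (‖ξ‖ + 1) ≤ C * (R + 1) := by gcongr
    linarith
  · have : 0 ≤ C * (R + 1) := by positivity
    linarith

lemma Nice.cara (h : Nice W P) : Cara (gP W P) := by
  refine ⟨?_, fun x => ?_, fun x ξ => Real.rpow_nonneg (h.W₀_nonneg x ξ) _, fun R => ?_⟩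
  · have h1 : Measurable fun z : Euc 2 × Mat 3 2 => W₀ W z.1 z.2 := by
      simp_rw [h.W₀_eq]
      refine Measurable.iInf fun i => ?_
      exact h.unc.comp (measurable_fst.prodMk
        ((continuous_joinCols.comp (Continuous.prodMk_left _)).measurable.comp measurable_snd))
    exact h1.pow (h.pmeas.comp measurable_fst)
  · obtain ⟨pM, hp⟩ := h.pbd
    exact (h.W₀_uc x).continuous.rpow_const fun ξ => Or.inr (by linarith [(hp x).1])
  · obtain ⟨C, Q, hC, hQ, hb⟩ := h.pow_bdd
    obtain ⟨pM, hp⟩ := h.pbd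
    refine ⟨((C * (R + 1) + 1) ^ Q).toNNReal, fun x ξ hξ => ?_⟩
    refine le_trans ?_ (Real.le_coe_toNNReal _)
    refine le_trans ?_ (hb x (joinCols ξ 0) R ((joinCols_norm _ _).trans (by simpa using hξ)))
    exact Real.rpow_le_rpow (h.W₀_nonneg _ _) (h.W₀_le _ _ _) (by linarith [(hp x).1])

/-- A smooth, compactly supported, almost optimal choice of the transverse derivative. -/
theorem exists_transverse (h : Nice W P) {ω : Set (Euc 2)} (hω : IsOpen ω) (hfin : volume ω ≠ ⊤)
    {v : Euc 2 → Euc 3} (hv : TestIn ω v) {δ : ℝ} (hδ : 0 < δ) :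
    ∃ z : Euc 2 → Euc 3, TestIn ω z ∧
      ∫⁻ x in ω, ENNReal.ofReal (W x (joinCols (gradMat v x) (z x).ofLp) ^ P x) ≤
        (∫⁻ x in ω, ENNReal.ofReal (gP W P x (gradMat v x))) + ENNReal.ofReal δ := by
  obtain ⟨Cv, hCv0, hCv⟩ := gradMat_bounded hv
  have hgv : Measurable (gradMat v) := (continuous_gradMat hv.1).measurable
  set δ' : ℝ≥0∞ := ENNReal.ofReal δ / (volume ω + 1) with hδ'
  have hv1 : volume ω + 1 ≠ ⊤ := by simp [hfin]
  have hδ'0 : δ' ≠ 0 := by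
    rw [hδ', ne_eq, ENNReal.div_eq_zero_iff]
    simp [hfin, hδ]
  have hδ'm : δ' * volume ω + δ' = ENNReal.ofReal δ := by
    rw [← mul_add_one, hδ', ENNReal.div_mul_cancel (by simp) hv1]
  obtain ⟨C, Q, hC, hQ, hb⟩ := h.pow_bdd
  obtain ⟨pM, hp⟩ := h.pbd
  let e : ℕ → Euc 3 := fun i => WithLp.toLp 2 (TopologicalSpace.denseSeq (Fin 3 → ℝ) i)
  obtain ⟨N, χ, hχ, hle⟩ := exists_smooth_selection hω hfin e
    (fun x a => ENNReal.ofReal (W x (joinCols (gradMat v x) a.ofLp) ^ P x))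
    (fun i => by
      refine Measurable.ennreal_ofReal (Measurable.pow ?_ h.pmeas)
      exact h.unc.comp (measurable_id.prodMk
        ((continuous_joinCols.comp (Continuous.prodMk_left _)).measurable.comp hgv)))
    (fun R => by
      refine ⟨((C * (Cv + R + 1) + 1) ^ Q).toNNReal, fun x _ a ha => ENNReal.ofReal_le_ofReal ?_⟩
      refine hb x _ _ ((joinCols_norm _ _).trans (add_le_add (hCv x) ?_))
      exact ((pi_norm_le_iff_of_nonneg (norm_nonneg a)).2 fun i => PiLp.norm_apply_le a i).trans ha)
    (fun x => ENNReal.ofReal (gP W P x (gradMat v x)))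
    ((h.cara.meas.comp (measurable_id.prodMk hgv)).ennreal_ofReal) δ' hδ'0
    (fun x => by
      have hpx : 0 ≤ P x := by linarith [(hp x).1]
      have hcont : Continuous fun t : ℝ => ENNReal.ofReal (t ^ P x) :=
        ENNReal.continuous_ofReal.comp (Real.continuous_rpow_const hpx)
      have hlt : ENNReal.ofReal (W₀ W x (gradMat v x) ^ P x) <
          ENNReal.ofReal (gP W P x (gradMat v x)) + δ' :=
        ENNReal.lt_add_right ENNReal.ofReal_ne_top hδ'0
      have hev := (hcont.tendsto (W₀ W x (gradMat v x))).eventually (gt_mem_nhds hlt)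
      obtain ⟨r, hr, hball⟩ := Metric.eventually_nhds_iff.1 hev
      have hW := h.W₀_eq x (gradMat v x)
      obtain ⟨i, hi⟩ := exists_lt_of_ciInf_lt
        (show ⨅ i : ℕ, W x (joinCols (gradMat v x) (TopologicalSpace.denseSeq (Fin 3 → ℝ) i)) <
          W₀ W x (gradMat v x) + r by rw [← hW]; linarith)
      refine ⟨i, le_of_lt (hball ?_)⟩
      rw [Real.dist_eq, abs_lt]
      have := h.W₀_le x (gradMat v x) (TopologicalSpace.denseSeq (Fin 3 → ℝ) i)
      constructor
      · change _ < W x (joinCols (gradMat v x) (TopologicalSpace.denseSeq (Fin 3 → ℝ) i)) - _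
        linarith
      · change W x (joinCols (gradMat v x) (TopologicalSpace.denseSeq (Fin 3 → ℝ) i)) - _ < _
        linarith)
  refine ⟨fun x => ∑ j ∈ Finset.range N, χ j x • e j,
    TestIn.sum _ fun j _ => (hχ j).smul contDiff_const, hle.trans ?_⟩
  rw [add_assoc, hδ'm]

/-- Upper semicontinuity of `Zq g`, an infimum of continuous functions. -/
lemma Zq_usc {g : Mat d n → ℝ} (hg : Continuous g) (hg0 : ∀ ξ, 0 ≤ g ξ) :
    UpperSemicontinuous (Zq g) := by
  intro ξ t ht
  have : Nonempty {φ : Euc n → Euc d // TestIn (unitCube n) φ} := ⟨⟨_, TestIn.zero⟩⟩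
  obtain ⟨⟨φ, hφ⟩, h1⟩ := exists_lt_of_ciInf_lt ht
  obtain ⟨C, hC0, hC⟩ := gradMat_bounded hφ
  have hc : ContinuousAt (fun ζ => ∫ y in unitCube n, g (ζ + gradMat φ y)) ξ := by
    obtain ⟨M, hM⟩ := (isCompact_closedBall (0 : Mat d n) (‖ξ‖ + 1 + C)).exists_bound_of_continuousOn
      hg.continuousOn
    refine continuousAt_of_dominated (bound := fun _ => M) ?_ ?_ (integrable_const _) ?_
    · exact Eventually.of_forall fun ζ => (integrable_comp_grad hg ζ hφ).aestronglyMeasurable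
    · filter_upwards [Metric.ball_mem_nhds ξ one_pos] with ζ hζ
      refine ae_of_all _ fun y => hM _ ?_
      rw [mem_closedBall_zero_iff]
      have h3 : ‖ζ‖ ≤ ‖ξ‖ + 1 := by
        have := norm_le_norm_add_norm_sub' ζ ξ
        rw [mem_ball_iff_norm] at hζ
        linarith
      exact (norm_add_le _ _).trans (add_le_add h3 (hC y))
    · exact ae_of_all _ fun y => (hg.comp (continuous_id.add continuous_const)).continuousAt
  filter_upwards [hc.eventually (gt_mem_nhds h1)] with ζ hζ
  exact (Zq_le hg0 ζ hφ).trans_lt hζ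

end Nice

/-! ### Mollification in variable exponent spaces -/

section Mollify

/-- Pratt's variant of dominated convergence: the dominating functions may vary, provided their
integrals stay equal to the integral of their limit. -/
lemma pratt {α : Type*} [MeasurableSpace α] {μ : Measure α} {F D : ℕ → α → ℝ≥0∞} {D0 : α → ℝ≥0∞}
    (hF : ∀ m, AEMeasurable (F m) μ) (hD : ∀ m, AEMeasurable (D m) μ)
    (hle : ∀ m, ∀ᵐ x ∂μ, F m x ≤ D m x)
    (hF0 : ∀ᵐ x ∂μ, Tendsto (fun m => F m x) atTop (𝓝 0))
    (hDt : ∀ᵐ x ∂μ, Tendsto (fun m => D m x) atTop (𝓝 (D0 x)))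
    (hInt : ∀ m, ∫⁻ x, D m x ∂μ = ∫⁻ x, D0 x ∂μ) (hfin : ∫⁻ x, D0 x ∂μ ≠ ⊤) :
    Tendsto (fun m => ∫⁻ x, F m x ∂μ) atTop (𝓝 0) := by
  set c := ∫⁻ x, D0 x ∂μ with hc
  have hFc : ∀ m, ∫⁻ x, F m x ∂μ ≤ c := fun m => (lintegral_mono_ae (hle m)).trans (hInt m).le
  have h1 : c ≤ liminf (fun m => c - ∫⁻ x, F m x ∂μ) atTop := by
    calc c = ∫⁻ x, liminf (fun m => D m x - F m x) atTop ∂μ := by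
          refine lintegral_congr_ae ?_
          filter_upwards [hF0, hDt] with x a b
          have := ENNReal.Tendsto.sub b a (Or.inr ENNReal.zero_ne_top)
          rw [tsub_zero] at this
          exact this.liminf_eq.symm
      _ ≤ liminf (fun m => ∫⁻ x, D m x - F m x ∂μ) atTop :=
          lintegral_liminf_le' fun m => (hD m).sub (hF m)
      _ = _ := by
          congr 1
          ext m
          rw [lintegral_sub' (hF m) (ne_top_of_le_ne_top hfin (hFc m)) (hle m), hInt m]
  rw [ENNReal.tendsto_nhds_zero]
  intro ε hε
  by_contra hcon
  have hfr : ∃ᶠ m in atTop, ε < ∫⁻ x, F m x ∂μ := by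
    exact fun h => hcon (h.mono fun m hm => not_lt.1 hm)
  obtain ⟨m, hm⟩ := hfr.exists
  have hc0 : c ≠ 0 := fun h => by
    have := hm.trans_le (hFc m)
    rw [h] at this
    exact not_lt_bot this
  have h2 : liminf (fun m => c - ∫⁻ x, F m x ∂μ) atTop ≤ c - ε :=
    liminf_le_of_frequently_le' (hfr.mono fun m hm => tsub_le_tsub_left hm.le c)
  exact absurd (h1.trans h2) (not_le.2 (ENNReal.sub_lt_self hfin hc0 hε.ne'))

variable {n d : ℕ}

/-- Mollification of `f` with kernel `ρ`. -/
def mol {E : Type*} [NormedAddCommGroup E] [NormedSpace ℝ E] (ρ : Euc n → ℝ) (f : Euc n → E) :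
    Euc n → E :=
  convolution ρ f (ContinuousLinearMap.lsmul ℝ ℝ) volume

lemma mol_def {E : Type*} [NormedAddCommGroup E] [NormedSpace ℝ E] (ρ : Euc n → ℝ) (f : Euc n → E)
    (x : Euc n) : mol ρ f x = ∫ t, ρ t • f (x - t) := rfl

lemma mol_integrand {E : Type*} [NormedAddCommGroup E] [NormedSpace ℝ E] [CompleteSpace E]
    (φ : ContDiffBump (0 : Euc n)) {f : Euc n → E} (hf : LocallyIntegrable f) (x : Euc n) :
    Integrable fun t => φ.normed volume t • f (x - t) :=
  (φ.hasCompactSupport_normed (μ := volume)).convolutionExists_left (ContinuousLinearMap.lsmul ℝ ℝ)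
    (φ.contDiff_normed (n := 0)).continuous hf x

lemma le_add_rpow {s t q : ℝ} (hs : 0 ≤ s) (ht : 0 < t) (hq : 1 ≤ q) :
    s ≤ t + t ^ (1 - q) * s ^ q := by
  rcases le_or_gt s t with h | h
  · have : 0 ≤ t ^ (1 - q) * s ^ q := by positivity
    linarith
  · have h1 : 1 ≤ s / t := (one_le_div ht).2 h.le
    have h2 : s / t ≤ (s / t) ^ q := Real.self_le_rpow_of_one_le h1 hq
    rw [Real.div_rpow hs ht.le, div_le_iff₀ ht] at h2
    have h3 : s ^ q / t ^ q * t = t ^ (1 - q) * s ^ q := by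
      rw [Real.rpow_sub ht, Real.rpow_one]; ring
    linarith

/-- The log-Hölder modulus exactly compensates the size `δ⁻ⁿ` of the mollifier. -/
lemma pow_log_bound {A C γ δ : ℝ} (hA : 1 ≤ A) (hC : 1 ≤ C) (hγ : 0 ≤ γ) (hδ : 0 < δ)
    (hδ1 : δ < Real.exp (-1)) (hAC : A ≤ C * (δ⁻¹) ^ n) :
    A ^ (γ / |Real.log δ|) ≤ C ^ γ * Real.exp (n * γ) := by
  have hlog : Real.log δ < -1 := by
    rw [Real.log_lt_iff_lt_exp hδ]; exact hδ1
  have habs : |Real.log δ| = - Real.log δ := abs_of_neg (by linarith)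
  have hL : 0 < -Real.log δ := by linarith
  set τ := γ / |Real.log δ| with hτ
  have hτ0 : 0 ≤ τ := by positivity
  have hτγ : τ ≤ γ := div_le_self hγ (by rw [habs]; linarith)
  have hδi : 0 < δ⁻¹ := inv_pos.2 hδ
  calc A ^ τ ≤ (C * (δ⁻¹) ^ n) ^ τ := Real.rpow_le_rpow (by linarith) hAC hτ0
    _ = C ^ τ * ((δ⁻¹) ^ n) ^ τ := Real.mul_rpow (by linarith) (by positivity)
    _ ≤ C ^ γ * Real.exp (n * γ) := by
        refine mul_le_mul (Real.rpow_le_rpow_of_exponent_le hC hτγ) (le_of_eq ?_) (by positivity)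
          (by positivity)
        rw [Real.rpow_def_of_pos (by positivity), Real.log_pow, Real.log_inv, hτ, habs]
        congr 1
        have hne : Real.log δ ≠ 0 := by linarith
        field_simp

/-- Pointwise bound of the mollified function to the power `P`, by the mollification of the modular
density. With `t₀ = A ^ (1 / P x)` and `A` of order `δ⁻ⁿ`, the inequality
`s ≤ t₀ + t₀ ^ (1 - q) * s ^ q` is applied under the integral with `q = P y`; replacing `P y` by
`P x` in the exponent of `t₀` costs a factor bounded by log-Hölder continuity, which enters the
proof of the recovery only here. -/
lemma mol_pow {E : Type*} [NormedAddCommGroup E] [NormedSpace ℝ E] [CompleteSpace E]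
    {S : Set (Euc n)} {P : Euc n → ℝ} {pM : ℝ} (hP : ∀ x, 1 ≤ P x ∧ P x ≤ pM)
    (hlog : LogHolder S P) {f : Euc n → E} (hf : Integrable f) (hfS : ∀ x, x ∉ S → f x = 0)
    (hh : Integrable fun x => ‖f x‖ ^ P x) :
    ∃ K : ℝ, 0 ≤ K ∧ ∀ δ, 0 < δ → δ < Real.exp (-1) → ∀ φ : ContDiffBump (0 : Euc n),
      φ.rIn = δ / 2 → φ.rOut = δ → ∀ x ∈ S,
      ‖mol (φ.normed volume) f x‖ ^ P x ≤
        K * (1 + mol (φ.normed volume) (fun x => ‖f x‖ ^ P x) x) := by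
  obtain ⟨γ, hγ, hlog⟩ := hlog
  set h : Euc n → ℝ := fun x => ‖f x‖ ^ P x with hdef
  have hh0 : ∀ x, 0 ≤ h x := fun x => by positivity
  set H := ∫ x, h x with hH
  have hH0 : 0 ≤ H := integral_nonneg hh0
  set b : ℝ := volume.real (Metric.ball (0 : Euc n) 1) with hb
  have hb0 : 0 < b := ENNReal.toReal_pos (Metric.measure_ball_pos _ _ one_pos).ne'
    measure_ball_lt_top.ne
  set C : ℝ := 1 + 2 ^ n / b * H with hCdef
  have hC1 : 1 ≤ C := by
    have : 0 ≤ 2 ^ n / b * H := by positivity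
    linarith
  set K₁ : ℝ := C ^ γ * Real.exp (n * γ) with hK₁
  have hK₁0 : 0 ≤ K₁ := by positivity
  refine ⟨(1 + K₁) ^ pM, by positivity, fun δ hδ hδ1 φ hin hout x hx => ?_⟩
  set ρ := φ.normed volume with hρ
  have hρ0 : ∀ t, 0 ≤ ρ t := fun t => φ.nonneg_normed t
  have hih : Integrable fun t => ρ t * h (x - t) := mol_integrand φ hh.locallyIntegrable x
  have hρi : Integrable ρ := φ.integrable_normed
  have hmolh : mol ρ h x = ∫ t, ρ t * h (x - t) := rfl
  have hmol0 : 0 ≤ mol ρ h x := integral_nonneg fun t => mul_nonneg (hρ0 t) (hh0 _)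
  set A := 1 + mol ρ h x with hA
  have hA1 : 1 ≤ A := by linarith
  have hAC : A ≤ C * (δ⁻¹) ^ n := by
    have h1 : ∀ t, ρ t ≤ 2 ^ n / b * (δ⁻¹) ^ n := by
      intro t
      have := φ.normed_le_div_measure_closedBall_rIn volume t
      rw [hin, Measure.addHaar_real_closedBall _ _ (by positivity), ← hb] at this
      refine this.trans (le_of_eq ?_)
      simp only [finrank_euclideanSpace, Fintype.card_fin, div_pow, inv_pow]
      field_simp
    have h2 : mol ρ h x ≤ 2 ^ n / b * (δ⁻¹) ^ n * H := by
      rw [hmolh, hH, ← integral_sub_left_eq_self h volume x, ← integral_const_mul]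
      refine integral_mono hih ?_ fun t => mul_le_mul_of_nonneg_right (h1 t) (hh0 _)
      exact ((integrable_comp_sub_left h x).2 hh).const_mul _
    have h3 : (1:ℝ) ≤ (δ⁻¹) ^ n := by
      refine one_le_pow₀ ((one_le_inv₀ hδ).2 (hδ1.le.trans ?_))
      exact Real.exp_le_one_iff.2 (by norm_num)
    rw [hA, hCdef, add_mul, one_mul]
    refine add_le_add h3 (h2.trans (le_of_eq (by ring)))
  have hτ := pow_log_bound (n := n) hA1 hC1 hγ.le hδ hδ1 hAC
  set τ := γ / |Real.log δ| with hτdef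
  have hτ0 : 0 ≤ τ := by positivity
  have hlogδ : Real.log δ < -1 := by
    rw [Real.log_lt_iff_lt_exp hδ]; exact hδ1
  have hPx : 0 < P x := by linarith [(hP x).1]
  set t₀ := A ^ (1 / P x) with ht₀
  have ht1 : 1 ≤ t₀ := Real.one_le_rpow hA1 (by positivity)
  have ht0 : 0 < t₀ := by linarith
  have htA : t₀ ≤ A := by
    conv_rhs => rw [← Real.rpow_one A]
    exact Real.rpow_le_rpow_of_exponent_le hA1 ((div_le_one hPx).2 (hP x).1)
  have htP : t₀ ^ P x = A := by
    rw [ht₀, ← Real.rpow_mul (by linarith), one_div_mul_cancel hPx.ne', Real.rpow_one]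
  have htτ : t₀ ^ τ ≤ K₁ := (Real.rpow_le_rpow ht0.le htA hτ0).trans hτ
  -- pointwise comparison under the integral sign
  have hpt : ∀ t, ρ t * ‖f (x - t)‖ ≤ ρ t * t₀ + K₁ * t₀ ^ (1 - P x) * (ρ t * h (x - t)) := by
    intro t
    have key : ρ t = 0 ∨ ‖f (x - t)‖ ≤ t₀ + K₁ * t₀ ^ (1 - P x) * h (x - t) := by
      by_cases hρt : ρ t = 0
      · exact Or.inl hρt
      · right
        by_cases hy : x - t ∈ S
        · have hPy : P x ≤ P (x - t) + τ := by
            have hts : t ∈ Function.support ρ := hρt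
            rw [hρ, φ.support_normed_eq, hout, mem_ball_zero_iff] at hts
            have hd : dist x (x - t) = ‖t‖ := by rw [dist_eq_norm]; congr 1; abel
            rcases eq_or_lt_of_le (norm_nonneg t) with h0 | h0
            · rw [norm_eq_zero.1 h0.symm, sub_zero]; linarith
            · have hδ2 : δ < 1 / 2 := by
                refine hδ1.trans ?_
                have := Real.exp_one_gt_d9
                rw [Real.exp_neg, inv_lt_comm₀ (Real.exp_pos _) (by norm_num)]
                linarith
              have h1 := hlog x hx (x - t) hy (by rwa [hd]) (by rw [hd]; linarith)
              rw [hd] at h1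
              have h2 : Real.log ‖t‖ ≤ Real.log δ := Real.log_le_log h0 hts.le
              have h3 : γ / |Real.log ‖t‖| ≤ τ := by
                rw [hτdef]
                refine div_le_div_of_nonneg_left hγ.le (abs_pos.2 (by linarith)) ?_
                rw [abs_of_neg (by linarith), abs_of_neg (by linarith)]
                linarith
              linarith [(abs_le.1 h1).2]
          refine (le_add_rpow (norm_nonneg _) ht0 (hP (x - t)).1).trans ?_
          refine add_le_add le_rfl (mul_le_mul_of_nonneg_right ?_ (hh0 _))
          calc t₀ ^ (1 - P (x - t)) ≤ t₀ ^ (τ + (1 - P x)) :=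
                Real.rpow_le_rpow_of_exponent_le ht1 (by linarith)
            _ = t₀ ^ τ * t₀ ^ (1 - P x) := Real.rpow_add ht0 _ _
            _ ≤ K₁ * t₀ ^ (1 - P x) := by gcongr
        · rw [hfS _ hy, norm_zero]
          have : 0 ≤ K₁ * t₀ ^ (1 - P x) * h (x - t) :=
            mul_nonneg (by positivity) (hh0 _)
          linarith
    rcases key with h0 | h1
    · simp [h0]
    · calc ρ t * ‖f (x - t)‖ ≤ ρ t * (t₀ + K₁ * t₀ ^ (1 - P x) * h (x - t)) :=
            mul_le_mul_of_nonneg_left h1 (hρ0 t)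
        _ = _ := by ring
  have hnorm : ‖mol ρ f x‖ ≤ (1 + K₁) * t₀ := by
    calc ‖mol ρ f x‖ ≤ ∫ t, ρ t * ‖f (x - t)‖ := by
          rw [mol_def]
          refine (norm_integral_le_integral_norm _).trans (le_of_eq (integral_congr_ae ?_))
          exact ae_of_all _ fun t => by
            simp only [norm_smul, Real.norm_of_nonneg (hρ0 t)]
      _ ≤ ∫ t, ρ t * t₀ + K₁ * t₀ ^ (1 - P x) * (ρ t * h (x - t)) := by
          refine integral_mono ?_ ((hρi.mul_const _).add (hih.const_mul _)) hpt
          exact mol_integrand φ hf.norm.locallyIntegrable x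
      _ = t₀ + K₁ * t₀ ^ (1 - P x) * mol ρ h x := by
          rw [integral_add (hρi.mul_const _) (hih.const_mul _), integral_mul_const,
            integral_const_mul, ← hmolh, hρ, φ.integral_normed, one_mul]
      _ ≤ t₀ + K₁ * t₀ ^ (1 - P x) * t₀ ^ P x := by
          rw [htP]
          gcongr
          linarith
      _ = (1 + K₁) * t₀ := by
          rw [mul_assoc, ← Real.rpow_add ht0, sub_add_cancel, Real.rpow_one]; ring
  calc ‖mol ρ f x‖ ^ P x ≤ ((1 + K₁) * t₀) ^ P x := Real.rpow_le_rpow (norm_nonneg _) hnorm hPx.le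
    _ = (1 + K₁) ^ P x * A := by rw [Real.mul_rpow (by positivity) ht0.le, htP]
    _ ≤ (1 + K₁) ^ pM * A := by
        refine mul_le_mul_of_nonneg_right ?_ (by linarith)
        exact Real.rpow_le_rpow_of_exponent_le (by linarith) (hP x).2

lemma add_rpow_le {a b q Q : ℝ} (ha : 0 ≤ a) (hb : 0 ≤ b) (hq : 0 ≤ q) (hQ : q ≤ Q) :
    (a + b) ^ q ≤ 2 ^ Q * (a ^ q + b ^ q) := by
  have h1 : (a + b) ^ q ≤ 2 ^ q * (a ^ q + b ^ q) := by
    rcases le_total a b with h | h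
    · calc (a + b) ^ q ≤ (2 * b) ^ q := Real.rpow_le_rpow (by positivity) (by linarith) hq
        _ = 2 ^ q * b ^ q := Real.mul_rpow (by norm_num) hb
        _ ≤ _ := by
          gcongr
          have : 0 ≤ a ^ q := by positivity
          linarith
    · calc (a + b) ^ q ≤ (2 * a) ^ q := Real.rpow_le_rpow (by positivity) (by linarith) hq
        _ = 2 ^ q * a ^ q := Real.mul_rpow (by norm_num) ha
        _ ≤ _ := by
          gcongr
          have : 0 ≤ b ^ q := by positivity
          linarith
  exact h1.trans (mul_le_mul_of_nonneg_right
    (Real.rpow_le_rpow_of_exponent_le (by norm_num) hQ) (by positivity))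

/-- A fixed sequence of mollifiers. -/
def bump (n : ℕ) (m : ℕ) : ContDiffBump (0 : Euc n) where
  rIn := (1 / ((m : ℝ) + 3)) / 2
  rOut := 1 / ((m : ℝ) + 3)
  rIn_pos := by positivity
  rIn_lt_rOut := half_lt_self (by positivity)

lemma bump_rOut_tendsto : Tendsto (fun m => (bump n m).rOut) atTop (𝓝 0) := by
  have h := (tendsto_one_div_add_atTop_nhds_zero_nat (𝕜 := ℝ)).comp (tendsto_add_atTop_nat 2)
  refine h.congr fun m => ?_
  simp only [Function.comp, bump]
  push_cast
  ring_nf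

lemma bump_lt (m : ℕ) : (bump n m).rOut < Real.exp (-1) := by
  have h := Real.exp_one_lt_d9
  have : (bump n m).rOut ≤ 1 / 3 := by
    refine one_div_le_one_div_of_le (by norm_num) ?_
    linarith [(Nat.cast_nonneg m : (0:ℝ) ≤ m)]
  refine this.trans_lt ?_
  rw [Real.exp_neg, lt_inv_comm₀ (by norm_num) (Real.exp_pos _)]
  norm_num
  linarith

/-- Modular convergence of mollifications for log-Hölder exponents. -/
theorem mol_tendsto {E : Type*} [NormedAddCommGroup E] [NormedSpace ℝ E] [CompleteSpace E]
    {S : Set (Euc n)} (hS : MeasurableSet S) (hSf : volume S ≠ ⊤)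
    {P : Euc n → ℝ} {pM : ℝ} (hPm : Measurable P) (hP : ∀ x, 1 ≤ P x ∧ P x ≤ pM)
    (hlog : LogHolder S P) {f : Euc n → E} (hf : Integrable f) (hfS : ∀ x, x ∉ S → f x = 0)
    (hh : Integrable fun x => ‖f x‖ ^ P x) :
    Tendsto (fun m => ∫⁻ x in S, ENNReal.ofReal
      (‖mol ((bump n m).normed volume) f x - f x‖ ^ P x)) atTop (𝓝 0) := by
  obtain ⟨K, hK, hKb⟩ := mol_pow hP hlog hf hfS hh
  set h : Euc n → ℝ := fun x => ‖f x‖ ^ P x with hdef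
  have hh0 : ∀ x, 0 ≤ h x := fun x => by positivity
  let ρ : ℕ → Euc n → ℝ := fun m => (bump n m).normed volume
  have hρi : ∀ m, Integrable (ρ m) := fun m => (bump n m).integrable_normed
  have hr : ∀ᶠ m in atTop, (bump n m).rOut ≤ 2 * (bump n m).rIn :=
    Eventually.of_forall fun m => by simp only [bump]; linarith
  have hmi : ∀ m, Integrable (mol (ρ m) h) := fun m => (hρi m).integrable_convolution _ hh
  have hmfi : ∀ m, Integrable (mol (ρ m) f) := fun m => (hρi m).integrable_convolution _ hf
  have hm0 : ∀ m x, 0 ≤ mol (ρ m) h x := fun m x =>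
    integral_nonneg fun t => mul_nonneg ((bump n m).nonneg_normed t) (hh0 _)
  set c : ℝ := 2 ^ pM * (K + 1) with hc
  have hc0 : 0 ≤ c := by positivity
  let one : Euc n → ℝ≥0∞ := S.indicator fun _ => 1
  have hone : Measurable one := measurable_const.indicator hS
  let D : ℕ → Euc n → ℝ≥0∞ := fun m x =>
    ENNReal.ofReal c * (one x + (ENNReal.ofReal (mol (ρ m) h x) + ENNReal.ofReal (h x)))
  let D0 : Euc n → ℝ≥0∞ := fun x =>
    ENNReal.ofReal c * (one x + (ENNReal.ofReal (h x) + ENNReal.ofReal (h x)))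
  let F : ℕ → Euc n → ℝ≥0∞ := fun m => S.indicator fun x =>
    ENNReal.ofReal (‖mol (ρ m) f x - f x‖ ^ P x)
  have hFs : ∀ m, ∫⁻ x in S, ENNReal.ofReal (‖mol (ρ m) f x - f x‖ ^ P x) = ∫⁻ x, F m x :=
    fun m => (lintegral_indicator hS _).symm
  simp_rw [ρ] at hFs
  simp_rw [hFs]
  have hhm : AEMeasurable (fun x => ENNReal.ofReal (h x)) := hh.aestronglyMeasurable.aemeasurable.ennreal_ofReal
  have hmm : ∀ m, AEMeasurable (fun x => ENNReal.ofReal (mol (ρ m) h x)) := fun m =>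
    (hmi m).aestronglyMeasurable.aemeasurable.ennreal_ofReal
  have hint1 : ∀ m, ∫⁻ x, ENNReal.ofReal (mol (ρ m) h x) = ∫⁻ x, ENNReal.ofReal (h x) := by
    intro m
    rw [← ofReal_integral_eq_lintegral_ofReal (hmi m) (ae_of_all _ (hm0 m)),
      ← ofReal_integral_eq_lintegral_ofReal hh (ae_of_all _ hh0)]
    congr 1
    have : ∫ x, mol (ρ m) h x = ContinuousLinearMap.lsmul ℝ ℝ (∫ x, ρ m x) (∫ x, h x) :=
      integral_convolution (μ := volume) (ν := volume) (ContinuousLinearMap.lsmul ℝ ℝ) (hρi m) hh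
    have h2 : ∫ x, ρ m x = 1 := (bump n m).integral_normed
    rw [this, h2]
    simp
  refine pratt (D := D) (D0 := D0) (fun m => ?_) (fun m => ?_) (fun m => ?_) ?_ ?_ (fun m => ?_) ?_
  · refine AEMeasurable.indicator ?_ hS
    refine AEMeasurable.ennreal_ofReal (AEMeasurable.pow ?_ hPm.aemeasurable)
    exact ((hmfi m).aestronglyMeasurable.sub hf.aestronglyMeasurable).norm.aemeasurable
  · exact ((hone.aemeasurable).add ((hmm m).add hhm)).const_mul _
  · refine ae_of_all _ fun x => ?_
    by_cases hx : x ∈ S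
    · simp only [F, D, one, indicator_of_mem hx]
      have hPx : 0 ≤ P x := by linarith [(hP x).1]
      have h1 := hKb _ (bump n m).rOut_pos (bump_lt m) (bump n m) rfl rfl x hx
      have h2 : ‖mol (ρ m) f x - f x‖ ^ P x ≤ c * (1 + (mol (ρ m) h x + h x)) := by
        calc ‖mol (ρ m) f x - f x‖ ^ P x ≤ (‖mol (ρ m) f x‖ + ‖f x‖) ^ P x :=
              Real.rpow_le_rpow (norm_nonneg _) (norm_sub_le _ _) hPx
          _ ≤ 2 ^ pM * (‖mol (ρ m) f x‖ ^ P x + ‖f x‖ ^ P x) :=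
              add_rpow_le (norm_nonneg _) (norm_nonneg _) hPx (hP x).2
          _ ≤ 2 ^ pM * (K * (1 + mol (ρ m) h x) + h x) := by gcongr
          _ ≤ _ := by
              rw [hc, mul_assoc]
              refine mul_le_mul_of_nonneg_left ?_ (by positivity)
              have := hm0 m x
              have := hh0 x
              nlinarith [mul_nonneg hK (hh0 x)]
      refine (ENNReal.ofReal_le_ofReal h2).trans (le_of_eq ?_)
      rw [ENNReal.ofReal_mul hc0, ENNReal.ofReal_add zero_le_one (add_nonneg (hm0 m x) (hh0 x)),
        ENNReal.ofReal_add (hm0 m x) (hh0 x), ENNReal.ofReal_one]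
    · simp [F, indicator_of_notMem hx]
  · filter_upwards [ContDiffBump.ae_convolution_tendsto_right_of_locallyIntegrable
      (φ := bump n) (μ := volume) (l := atTop) bump_rOut_tendsto hr hf.locallyIntegrable] with x hx
    by_cases hxS : x ∈ S
    · simp only [F, indicator_of_mem hxS]
      have hPx : 0 < P x := by linarith [(hP x).1]
      have h1 : Tendsto (fun m => ‖mol (ρ m) f x - f x‖ ^ P x) atTop (𝓝 (‖f x - f x‖ ^ P x)) :=
        ((hx.sub_const _).norm).rpow_const (Or.inr hPx.le)
      rw [sub_self, norm_zero, Real.zero_rpow hPx.ne'] at h1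
      simpa using ENNReal.tendsto_ofReal h1
    · simp [F, indicator_of_notMem hxS]
  · filter_upwards [ContDiffBump.ae_convolution_tendsto_right_of_locallyIntegrable
      (φ := bump n) (μ := volume) (l := atTop) bump_rOut_tendsto hr hh.locallyIntegrable] with x hx
    refine ENNReal.Tendsto.const_mul ?_ (Or.inr ENNReal.ofReal_ne_top)
    exact tendsto_const_nhds.add ((ENNReal.tendsto_ofReal hx).add tendsto_const_nhds)
  · simp only [D, D0]
    rw [lintegral_const_mul' _ _ ENNReal.ofReal_ne_top,
      lintegral_const_mul' _ _ ENNReal.ofReal_ne_top,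
      lintegral_add_left hone, lintegral_add_left hone, lintegral_add_left' (hmm m),
      lintegral_add_left' hhm, hint1 m]
  · simp only [D0]
    rw [lintegral_const_mul' _ _ ENNReal.ofReal_ne_top, lintegral_add_left hone,
      lintegral_add_left' hhm]
    refine ENNReal.mul_ne_top ENNReal.ofReal_ne_top (ENNReal.add_ne_top.2 ⟨?_, ?_⟩)
    · rw [lintegral_indicator hS]; simpa using hSf
    · have := (ofReal_integral_eq_lintegral_ofReal hh (ae_of_all _ hh0)).symm
      rw [this]
      simp

end Mollify

/-! ### Density of test functions -/

section Density
variable {n d : ℕ}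

/-- Mollification commutes with weak differentiation on the whole space. -/
lemma gradMat_mol {f : Euc n → Euc d} {F : Euc n → Mat d n} (hf : Integrable f) (hF : Integrable F)
    (hw : ∀ φ : Euc n → ℝ, ContDiff ℝ (⊤ : ℕ∞) φ → HasCompactSupport φ → ∀ i j,
      ∫ x, φ x * F x i j = - ∫ x, fderiv ℝ φ x (EuclideanSpace.single j 1) * f x i)
    {ρ : Euc n → ℝ} (hρ : ContDiff ℝ (⊤ : ℕ∞) ρ) (hρc : HasCompactSupport ρ) (x : Euc n) :
    gradMat (mol ρ f) x = mol ρ F x := by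
  have hd := hρc.hasFDerivAt_convolution_left (μ := volume) (ContinuousLinearMap.lsmul ℝ ℝ)
    (hρ.of_le (by exact_mod_cast le_top)) hf.locallyIntegrable x
  ext i j
  have h1 : gradMat (mol ρ f) x i j
      = ∫ t, fderiv ℝ ρ t (EuclideanSpace.single j 1) * f (x - t) i := by
    have hex := (hρc.fderiv ℝ).convolutionExists_left (μ := volume)
      (ContinuousLinearMap.precompL (Euc n) (ContinuousLinearMap.lsmul ℝ ℝ))
      (hρ.continuous_fderiv (by simp)) hf.locallyIntegrable x
    have hex' : Integrable (fun t => ((ContinuousLinearMap.precompL (Euc n)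
      (ContinuousLinearMap.lsmul ℝ ℝ : ℝ →L[ℝ] Euc d →L[ℝ] Euc d)) (fderiv ℝ ρ t)) (f (x - t))) := hex
    let A : (Euc n →L[ℝ] Euc d) →L[ℝ] ℝ :=
      (EuclideanSpace.proj i).comp (ContinuousLinearMap.apply ℝ (Euc d) (EuclideanSpace.single j 1))
    have h2 : gradMat (mol ρ f) x i j = A (fderiv ℝ (mol ρ f) x) := rfl
    rw [h2, show fderiv ℝ (mol ρ f) x = _ from hd.fderiv]
    rw [show convolution (fderiv ℝ ρ) f (ContinuousLinearMap.precompL (Euc n)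
      (ContinuousLinearMap.lsmul ℝ ℝ)) volume x = ∫ t, ((ContinuousLinearMap.precompL (Euc n)
      (ContinuousLinearMap.lsmul ℝ ℝ : ℝ →L[ℝ] Euc d →L[ℝ] Euc d)) (fderiv ℝ ρ t)) (f (x - t)) from rfl,
      ← A.integral_comp_comm hex']
    rfl
  have h3 : mol ρ F x i j = ∫ t, ρ t * F (x - t) i j := by
    have hex : Integrable (fun t => ρ t • F (x - t)) :=
      hρc.convolutionExists_left (μ := volume) (ContinuousLinearMap.lsmul ℝ ℝ) hρ.continuous
        hF.locallyIntegrable x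
    let A : Mat d n →L[ℝ] ℝ := (ContinuousLinearMap.proj (R := ℝ) (φ := fun _ : Fin n => ℝ) j).comp
      (ContinuousLinearMap.proj (R := ℝ) (φ := fun _ : Fin d => Fin n → ℝ) i)
    rw [mol_def, show (∫ t, ρ t • F (x - t)) i j = A (∫ t, ρ t • F (x - t)) from rfl,
      ← A.integral_comp_comm hex]
    rfl
  have hφ : ContDiff ℝ (⊤ : ℕ∞) fun y => ρ (x - y) := hρ.comp (contDiff_const.sub contDiff_id)
  have hφc : HasCompactSupport fun y => ρ (x - y) := hρc.comp_homeomorph (Homeomorph.subLeft x)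
  have h4 := hw _ hφ hφc i j
  have h5 : ∀ y, fderiv ℝ (fun y => ρ (x - y)) y (EuclideanSpace.single j 1)
      = - fderiv ℝ ρ (x - y) (EuclideanSpace.single j 1) := by
    intro y
    have hd1 : HasFDerivAt ρ (fderiv ℝ ρ (x - y)) (x - y) :=
      (hρ.differentiable (by simp) _).hasFDerivAt
    have := hd1.comp y ((hasFDerivAt_id y).const_sub x)
    rw [show (fun y => ρ (x - y)) = ρ ∘ HSub.hSub x from rfl, this.fderiv]
    simp
  rw [h1, h3, ← integral_sub_left_eq_self _ volume x,
    ← integral_sub_left_eq_self (fun t => ρ t * F (x - t) i j) volume x]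
  simp only [sub_sub_cancel]
  rw [h4, ← integral_neg]
  refine integral_congr_ae (Eventually.of_forall fun y => ?_)
  simp only [h5]
  ring

lemma integrable_of_modular {α E : Type*} [MeasurableSpace α] [NormedAddCommGroup E]
    {μ : Measure α} [IsFiniteMeasure μ] {f : α → E} {P : α → ℝ} (hf : AEStronglyMeasurable f μ)
    (hPm : Measurable P) (hP : ∀ x, 1 ≤ P x) (hfin : ∫⁻ x, ENNReal.ofReal (‖f x‖ ^ P x) ∂μ ≠ ⊤) :
    Integrable f μ ∧ Integrable (fun x => ‖f x‖ ^ P x) μ := by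
  have h2 : Integrable (fun x => ‖f x‖ ^ P x) μ := by
    refine ⟨(hf.norm.aemeasurable.pow hPm.aemeasurable).aestronglyMeasurable, ?_⟩
    rw [hasFiniteIntegral_iff_ofReal (Eventually.of_forall fun x => by positivity)]
    exact lt_top_iff_ne_top.2 hfin
  refine ⟨((integrable_const (1:ℝ)).add h2).mono' hf (Eventually.of_forall fun x => ?_), h2⟩
  rcases le_total ‖f x‖ 1 with h | h
  · exact h.trans (le_add_of_nonneg_right (by positivity))
  · exact (Real.self_le_rpow_of_one_le h (hP x)).trans (le_add_of_nonneg_left zero_le_one)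

/-- The weak gradient vanishes a.e. off the support of the function. -/
lemma weakGrad_ae_zero {ω : Set (Euc n)} (hω : IsOpen ω) {w : Euc n → Euc d} {Gw : Euc n → Mat d n}
    (hG : IntegrableOn Gw ω) (hwg : IsWeakGrad ω w Gw) :
    ∀ᵐ x ∂(volume.restrict ω), x ∉ tsupport w → Gw x = 0 := by
  have hcomp : ∀ i j, ∀ᵐ x ∂volume, x ∈ ω \ tsupport w → Gw x i j = 0 := by
    intro i j
    have hGij : IntegrableOn (fun x => Gw x i j) ω := by
      have := hG.eval (i := i)
      exact Integrable.eval this j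
    refine IsOpen.ae_eq_zero_of_integral_contDiff_smul_eq_zero
      (hω.sdiff (isClosed_tsupport w))
      ((hGij.mono_set sdiff_subset).locallyIntegrableOn) fun g hg hgc hgs => ?_
    have h0 := hwg g hg hgc (hgs.trans sdiff_subset) i j
    have h1 : ∀ x, fderiv ℝ g x (EuclideanSpace.single j 1) * w x i = 0 := by
      intro x
      by_cases hx : x ∈ tsupport g
      · have : w x = 0 := image_eq_zero_of_notMem_tsupport (hgs hx).2
        simp [this]
      · have : fderiv ℝ g x = 0 := by
          by_contra hne
          exact hx (support_fderiv_subset ℝ hne)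
        simp [this]
    simp only [h1, integral_zero, neg_zero] at h0
    rw [← h0, setIntegral_eq_integral_of_forall_compl_eq_zero]
    · rfl
    · intro x hx
      have : g x = 0 := image_eq_zero_of_notMem_tsupport fun h => hx (hgs h).1
      simp [this]
  have : ∀ᵐ x ∂volume, ∀ i j, x ∈ ω \ tsupport w → Gw x i j = 0 :=
    ae_all_iff.2 fun i => ae_all_iff.2 fun j => hcomp i j
  rw [ae_restrict_iff' hω.measurableSet]
  filter_upwards [this] with x hx hxω hxw
  ext i j
  exact hx i j ⟨hxω, hxw⟩

/-- Extension by zero of a compactly supported Sobolev function satisfies the integration by parts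
formula against every smooth compactly supported function. -/
lemma extend_weak {ω S : Set (Euc n)} (hω : IsOpen ω)
    (hSω : S ⊆ ω) (hSn : volume (ω \ S) = 0) {w : Euc n → Euc d} {Gw : Euc n → Mat d n}
    (hG : IntegrableOn Gw ω) (hwg : IsWeakGrad ω w Gw)
    (hc : HasCompactSupport w) (hsub : tsupport w ⊆ ω)
    (φ : Euc n → ℝ) (hφ : ContDiff ℝ (⊤ : ℕ∞) φ) (i : Fin d) (j : Fin n) :
    ∫ x, φ x * (S ∩ tsupport w).indicator Gw x i j
      = - ∫ x, fderiv ℝ φ x (EuclideanSpace.single j 1) * S.indicator w x i := by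
  obtain ⟨L, hL, hKL, hLω⟩ := exists_compact_between hc hω hsub
  obtain ⟨χ, hχ, -, hχ1⟩ := exists_cutoff hL hω hLω
  have hS : ∀ᵐ x ∂(volume.restrict ω), x ∈ S := by
    rw [ae_restrict_iff' hω.measurableSet, ae_iff]
    convert hSn using 2
    ext x; simp
  have ht := hχ.smul hφ
  have h := hwg _ ht.1 ht.2.1 ht.2.2 i j
  have e1 : ∫ x, φ x * (S ∩ tsupport w).indicator Gw x i j
      = ∫ x in ω, (χ x • φ x) * Gw x i j := by
    rw [← setIntegral_eq_integral_of_forall_compl_eq_zero (s := ω)]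
    · refine integral_congr_ae ?_
      filter_upwards [hS, weakGrad_ae_zero hω hG hwg] with x hx hx0
      by_cases hxw : x ∈ tsupport w
      · rw [indicator_of_mem (show x ∈ S ∩ tsupport w from ⟨hx, hxw⟩), hχ1 x (interior_subset (hKL hxw)), one_smul]
      · rw [indicator_of_notMem (fun h => hxw h.2), hx0 hxw]; simp
    · intro x hx
      rw [indicator_of_notMem (fun h => hx (hSω h.1))]; simp
  have e2 : ∫ x, fderiv ℝ φ x (EuclideanSpace.single j 1) * S.indicator w x i
      = ∫ x in ω, fderiv ℝ (fun x => χ x • φ x) x (EuclideanSpace.single j 1) * w x i := by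
    rw [← setIntegral_eq_integral_of_forall_compl_eq_zero (s := ω)]
    · refine integral_congr_ae ?_
      filter_upwards [hS] with x hx
      rw [indicator_of_mem hx]
      by_cases hxw : x ∈ tsupport w
      · have : (fun x => χ x • φ x) =ᶠ[𝓝 x] φ := by
          filter_upwards [mem_interior_iff_mem_nhds.1 (hKL hxw)] with y hy
          rw [hχ1 y hy, one_smul]
        rw [this.fderiv_eq]
      · have : w x = 0 := image_eq_zero_of_notMem_tsupport hxw
        simp [this]
    · intro x hx
      rw [indicator_of_notMem (fun h => hx (hSω h))]; simp
  rw [e1, e2]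
  exact h

/-- Modular density of test functions in compactly supported Sobolev functions. -/
lemma smooth_approx {ω S : Set (Euc n)} (hω : IsOpen ω) (hfin : volume ω ≠ ⊤) (hS : MeasurableSet S)
    (hSω : S ⊆ ω) (hSn : volume (ω \ S) = 0) {P : Euc n → ℝ} {pM : ℝ} (hPm : Measurable P)
    (hP : ∀ x, 1 ≤ P x ∧ P x ≤ pM) (hlog : LogHolder S P)
    {w : Euc n → Euc d} {Gw : Euc n → Mat d n}
    (hwm : AEStronglyMeasurable w (volume.restrict ω))
    (hGm : AEStronglyMeasurable Gw (volume.restrict ω)) (hwg : IsWeakGrad ω w Gw)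
    (hwi : ∫⁻ x in ω, ENNReal.ofReal (‖w x‖ ^ P x) ≠ ⊤)
    (hGi : ∫⁻ x in ω, ENNReal.ofReal (‖Gw x‖ ^ P x) ≠ ⊤)
    (hc : HasCompactSupport w) (hsub : tsupport w ⊆ ω) {η : ℝ≥0∞} (hη : 0 < η) :
    ∃ v, TestIn ω v ∧ ∫⁻ x in ω, ENNReal.ofReal (‖v x - w x‖ ^ P x) ≤ η ∧
      ∫⁻ x in ω, ENNReal.ofReal (‖gradMat v x - Gw x‖ ^ P x) ≤ η := by
  have : IsFiniteMeasure (volume.restrict ω) := ⟨by rw [Measure.restrict_apply_univ]; exact hfin.lt_top⟩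
  have hSae : ∀ᵐ x ∂(volume.restrict ω), x ∈ S := by
    rw [ae_restrict_iff' hω.measurableSet, ae_iff]
    convert hSn using 2
    ext x; simp
  have hSω' : S =ᵐ[volume] ω := hSω.eventuallyLE.antisymm (by
    rw [ae_le_set]; exact hSn)
  have hSf : volume S ≠ ⊤ := ne_top_of_le_ne_top hfin (measure_mono hSω)
  set K := tsupport w with hK
  have hKm : MeasurableSet K := (isClosed_tsupport w).measurableSet
  obtain ⟨iw, iwP⟩ := integrable_of_modular hwm hPm (fun x => (hP x).1) hwi
  obtain ⟨iG, iGP⟩ := integrable_of_modular hGm hPm (fun x => (hP x).1) hGi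
  set f := S.indicator w with hf
  set F := (S ∩ K).indicator Gw with hF
  have hif : Integrable f := (integrable_indicator_iff hS).2 (iw.mono_measure (Measure.restrict_mono hSω le_rfl))
  have hiF : Integrable F := (integrable_indicator_iff (hS.inter hKm)).2
    (iG.mono_measure (Measure.restrict_mono (inter_subset_left.trans hSω) le_rfl))
  have hz : ∀ x, (0:ℝ) ^ P x = 0 := fun x => Real.zero_rpow (by linarith [(hP x).1])
  have hifP : Integrable fun x => ‖f x‖ ^ P x := by
    have : (fun x => ‖f x‖ ^ P x) = S.indicator fun x => ‖w x‖ ^ P x := by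
      ext x
      by_cases hx : x ∈ S
      · simp [hf, hx]
      · simp [hf, hx, hz]
    rw [this]
    exact (integrable_indicator_iff hS).2 (IntegrableOn.mono_set iwP hSω)
  have hiFP : Integrable fun x => ‖F x‖ ^ P x := by
    have : (fun x => ‖F x‖ ^ P x) = (S ∩ K).indicator fun x => ‖Gw x‖ ^ P x := by
      ext x
      by_cases hx : x ∈ S ∩ K
      · simp only [hF, indicator_of_mem hx]
      · simp only [hF, indicator_of_notMem hx, norm_zero, hz]
    rw [this]
    exact (integrable_indicator_iff (hS.inter hKm)).2
      (IntegrableOn.mono_set iGP (inter_subset_left.trans hSω))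
  have hfS : ∀ x, x ∉ S → f x = 0 := fun x hx => indicator_of_notMem hx _
  have hFS : ∀ x, x ∉ S → F x = 0 := fun x hx => indicator_of_notMem (fun h => hx h.1) _
  have t1 := mol_tendsto hS hSf hPm hP hlog hif hfS hifP
  have t2 := mol_tendsto hS hSf hPm hP hlog hiF hFS hiFP
  obtain ⟨δ, hδ, hδω⟩ := IsCompact.exists_cthickening_subset_open hc hω hsub
  have t3 : ∀ᶠ m in atTop, (bump n m).rOut < δ := bump_rOut_tendsto.eventually (gt_mem_nhds hδ)
  obtain ⟨m, m1, m2, m3⟩ := ((ENNReal.tendsto_nhds_zero.1 t1 η hη).and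
    ((ENNReal.tendsto_nhds_zero.1 t2 η hη).and t3)).exists
  set ρ := (bump n m).normed volume with hρ
  have hρs : ContDiff ℝ (⊤ : ℕ∞) ρ := (bump n m).contDiff_normed
  have hρc : HasCompactSupport ρ := (bump n m).hasCompactSupport_normed
  have hg : ∀ x, gradMat (mol ρ f) x = mol ρ F x := gradMat_mol hif hiF
    (fun φ hφ _ i j => extend_weak hω hSω hSn iG hwg hc hsub φ hφ i j) hρs hρc
  have hsupp : tsupport (mol ρ f) ⊆ Metric.cthickening δ K := by
    refine closure_minimal ?_ Metric.isClosed_cthickening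
    refine (support_convolution_subset _).trans ?_
    rintro _ ⟨a, ha, b, hb, rfl⟩
    have hbK : b ∈ K := by
      refine subset_closure fun h0 => hb ?_
      simp only [hf, indicator_apply_eq_zero]
      exact fun _ => h0
    have ha' : a ∈ Metric.ball (0 : Euc n) (bump n m).rOut := by
      rw [← (bump n m).support_normed_eq (μ := volume)]; exact ha
    refine Metric.mem_cthickening_of_dist_le _ b _ _ hbK ?_
    rw [mem_ball_zero_iff] at ha'
    rw [dist_eq_norm]
    simpa using (ha'.trans m3).le
  have hcomp : HasCompactSupport (mol ρ f) :=
    HasCompactSupport.of_support_subset_isCompact (IsCompact.cthickening hc)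
      ((subset_closure).trans hsupp)
  refine ⟨mol ρ f, ⟨hρc.contDiff_convolution_left _ hρs hif.locallyIntegrable, hcomp,
    hsupp.trans hδω⟩, ?_, ?_⟩
  · rw [← setLIntegral_congr hSω']
    refine le_of_eq_of_le (setLIntegral_congr_fun hS fun x hx => ?_) m1
    simp only [hf, indicator_of_mem hx]
  · rw [← setLIntegral_congr hSω']
    refine le_of_eq_of_le (lintegral_congr_ae ?_) m2
    have h0 := weakGrad_ae_zero hω iG hwg
    filter_upwards [ae_mono (Measure.restrict_mono hSω le_rfl) h0, ae_restrict_mem hS] with x hx hxS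
    rw [hg]
    by_cases hxK : x ∈ K
    · simp only [hF, indicator_of_mem (show x ∈ S ∩ K from ⟨hxS, hxK⟩)]
    · rw [show F x = 0 from indicator_of_notMem (fun h => hxK h.2) _, hx hxK]

end Density

/-! ### Upper semicontinuity of the relaxed energy along modular approximations -/

section EnergyDensity
variable {n d : ℕ}

/-- Geometrically fast modular convergence to zero gives a.e. convergence and an integrable bound
of all the modular densities. -/
lemma modular_fast {α E : Type*} [MeasurableSpace α] [NormedAddCommGroup E]
    {μ : Measure α} {a : ℕ → α → E} {P : α → ℝ} (ha : ∀ j, AEStronglyMeasurable (a j) μ)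
    (hPm : Measurable P) (hP : ∀ x, 1 ≤ P x)
    (hle : ∀ j, ∫⁻ x, ENNReal.ofReal (‖a j x‖ ^ P x) ∂μ ≤ 2⁻¹ ^ j) :
    ∃ D : α → ℝ≥0∞, AEMeasurable D μ ∧ ∫⁻ x, D x ∂μ ≠ ⊤ ∧
      (∀ j x, ENNReal.ofReal (‖a j x‖ ^ P x) ≤ D x) ∧
      ∀ᵐ x ∂μ, Tendsto (fun j => a j x) atTop (𝓝 0) := by
  have hm : ∀ j, AEMeasurable (fun x => ENNReal.ofReal (‖a j x‖ ^ P x)) μ := fun j =>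
    ((ha j).norm.aemeasurable.pow hPm.aemeasurable).ennreal_ofReal
  have hD : AEMeasurable (fun x => ∑' j, ENNReal.ofReal (‖a j x‖ ^ P x)) μ :=
    AEMeasurable.tsum hm
  have hDf : ∫⁻ x, ∑' j, ENNReal.ofReal (‖a j x‖ ^ P x) ∂μ ≠ ⊤ := by
    rw [lintegral_tsum hm]
    refine ne_top_of_le_ne_top ?_ (ENNReal.tsum_le_tsum hle)
    rw [ENNReal.tsum_geometric_two]
    simp
  refine ⟨_, hD, hDf, fun j x => ENNReal.le_tsum j, ?_⟩
  filter_upwards [ae_lt_top' hD hDf] with x hx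
  have h1 := ENNReal.tendsto_atTop_zero_of_tsum_ne_top hx.ne
  have h2 := (ENNReal.tendsto_toReal ENNReal.zero_ne_top).comp h1
  have h3 : Tendsto (fun j => ‖a j x‖ ^ P x) atTop (𝓝 0) := by
    refine h2.congr fun j => ?_
    simp only [Function.comp]
    exact ENNReal.toReal_ofReal (by positivity)
  have hp0 : 0 < P x := lt_of_lt_of_le one_pos (hP x)
  have h4 := h3.rpow_const (p := (P x)⁻¹) (Or.inr (by positivity))
  rw [Real.zero_rpow (by positivity)] at h4
  rw [tendsto_zero_iff_norm_tendsto_zero]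
  refine h4.congr fun j => ?_
  rw [← Real.rpow_mul (norm_nonneg _), mul_inv_cancel₀ hp0.ne', Real.rpow_one]

lemma limsup_ofReal_usc {X : Type*} [TopologicalSpace X] {f : X → ℝ} (hf : UpperSemicontinuous f)
    {u : ℕ → X} {x : X} (hu : Tendsto u atTop (𝓝 x)) :
    limsup (fun j => ENNReal.ofReal (f (u j))) atTop ≤ ENNReal.ofReal (f x) := by
  refine le_of_forall_gt_imp_ge_of_dense fun b hb => ?_
  refine limsup_le_of_le (by isBoundedDefault) ?_
  rcases eq_or_ne b ⊤ with rfl | hbt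
  · simp
  have hb' : f x < b.toReal := by
    by_contra hcon
    have := ENNReal.ofReal_le_ofReal (not_lt.1 hcon)
    rw [ENNReal.ofReal_toReal hbt] at this
    exact absurd hb (not_lt.2 this)
  filter_upwards [hu.eventually (hf x _ hb')] with j hj
  rw [← ENNReal.ofReal_toReal hbt]
  exact ENNReal.ofReal_le_ofReal hj.le

/-- Along modular approximations the relaxed energy is upper semicontinuous, by the growth of order
`P` and the upper semicontinuity of `Zq g`: test functions can be chosen close in `L¹` with almost
no excess relaxed energy. -/
lemma exists_smooth {ω : Set (Euc n)} (hfin : volume ω ≠ ⊤)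
    {P : Euc n → ℝ} {pM : ℝ} (hPm : Measurable P) (hP : ∀ x, 1 ≤ P x ∧ P x ≤ pM)
    {g : Euc n → Mat d n → ℝ} (hg : Cara g)
    (hgr : ∃ C, 0 ≤ C ∧ ∀ x ξ, g x ξ ≤ C * (1 + ‖ξ‖ ^ P x))
    {v : Euc n → Euc d} {Gv : Euc n → Mat d n}
    (hvm : AEStronglyMeasurable v (volume.restrict ω))
    (hGm : AEStronglyMeasurable Gv (volume.restrict ω))
    (hGi : ∫⁻ x in ω, ENNReal.ofReal (‖Gv x‖ ^ P x) ≠ ⊤)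
    (happ : ∀ η : ℝ≥0∞, 0 < η → ∃ w, TestIn ω w ∧ ∫⁻ x in ω, ENNReal.ofReal (‖w x - v x‖ ^ P x) ≤ η ∧
      ∫⁻ x in ω, ENNReal.ofReal (‖gradMat w x - Gv x‖ ^ P x) ≤ η)
    {δ : ℝ≥0∞} (hδ : 0 < δ) :
    ∃ w, TestIn ω w ∧ ∫⁻ x in ω, ENNReal.ofReal ‖w x - v x‖ ≤ δ ∧
      ∫⁻ x in ω, ENNReal.ofReal (Zq (g x) (gradMat w x)) ≤
        (∫⁻ x in ω, ENNReal.ofReal (Zq (g x) (Gv x))) + δ := by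
  choose w hw hw1 hw2 using fun j : ℕ => happ (2⁻¹ ^ j)
    (ENNReal.pow_pos (ENNReal.inv_pos.2 ENNReal.ofNat_ne_top) j)
  have hP1 : ∀ x, 1 ≤ P x := fun x => (hP x).1
  have hwm : ∀ j, AEStronglyMeasurable (fun x => w j x - v x) (volume.restrict ω) := fun j =>
    (hw j).1.continuous.aestronglyMeasurable.sub hvm
  have hwGm : ∀ j, AEStronglyMeasurable (fun x => gradMat (w j) x - Gv x) (volume.restrict ω) :=
    fun j => (continuous_gradMat (hw j).1).aestronglyMeasurable.sub hGm
  obtain ⟨D1, -, D1f, D1le, D1t⟩ := modular_fast hwm hPm hP1 hw1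
  obtain ⟨D2, D2m, D2f, D2le, D2t⟩ := modular_fast hwGm hPm hP1 hw2
  have t1 : Tendsto (fun j => ∫⁻ x in ω, ENNReal.ofReal ‖w j x - v x‖) atTop (𝓝 0) := by
    have := tendsto_lintegral_of_dominated_convergence' (μ := volume.restrict ω)
      (F := fun j x => ENNReal.ofReal ‖w j x - v x‖) (f := fun _ => 0) (fun x => 1 + D1 x)
      (fun j => (hwm j).norm.aemeasurable.ennreal_ofReal)
      (fun j => Eventually.of_forall fun x => ?_) ?_ ?_
    · simpa using this
    · refine le_trans ?_ (add_le_add_right (D1le j x) 1)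
      rw [← ENNReal.ofReal_one, ← ENNReal.ofReal_add zero_le_one (by positivity)]
      refine ENNReal.ofReal_le_ofReal ?_
      rcases le_total ‖w j x - v x‖ 1 with h | h
      · exact h.trans (le_add_of_nonneg_right (by positivity))
      · exact (Real.self_le_rpow_of_one_le h (hP1 x)).trans (le_add_of_nonneg_left zero_le_one)
    · rw [lintegral_add_left measurable_const]
      simp [D1f, hfin]
    · filter_upwards [D1t] with x hx
      have := ENNReal.tendsto_ofReal hx.norm
      simpa using this
  obtain ⟨C, hC0, hC⟩ := hgr
  have hle : ∀ j x, ENNReal.ofReal (Zq (g x) (gradMat (w j) x)) ≤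
      ENNReal.ofReal C * (1 + ENNReal.ofReal (2 ^ pM) * (D2 x + ENNReal.ofReal (‖Gv x‖ ^ P x))) := by
    intro j x
    have h1 : Zq (g x) (gradMat (w j) x) ≤
        C * (1 + 2 ^ pM * (‖gradMat (w j) x - Gv x‖ ^ P x + ‖Gv x‖ ^ P x)) := by
      refine (Zq_le_self (hg.nn x) _).trans ((hC x _).trans ?_)
      gcongr
      refine le_trans ?_ (add_rpow_le (norm_nonneg _) (norm_nonneg _)
        (zero_le_one.trans (hP1 x)) (hP x).2)
      refine Real.rpow_le_rpow (norm_nonneg _) ?_ (zero_le_one.trans (hP1 x))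
      simpa using norm_add_le (gradMat (w j) x - Gv x) (Gv x)
    refine (ENNReal.ofReal_le_ofReal h1).trans ?_
    rw [ENNReal.ofReal_mul hC0, ENNReal.ofReal_add zero_le_one (by positivity),
      ENNReal.ofReal_mul (by positivity), ENNReal.ofReal_add (by positivity) (by positivity),
      ENNReal.ofReal_one]
    gcongr
    exact D2le j x
  have t2 := limsup_lintegral_le (μ := volume.restrict ω)
    (f := fun j x => ENNReal.ofReal (Zq (g x) (gradMat (w j) x)))
    (fun x => ENNReal.ofReal C * (1 + ENNReal.ofReal (2 ^ pM) * (D2 x + ENNReal.ofReal (‖Gv x‖ ^ P x))))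
    (fun j => (measurable_Zq hg (continuous_gradMat (hw j).1).measurable).ennreal_ofReal)
    (fun j => Eventually.of_forall (hle j)) (by
      rw [lintegral_const_mul' _ _ ENNReal.ofReal_ne_top, lintegral_add_left measurable_const,
        lintegral_const_mul' _ _ ENNReal.ofReal_ne_top, lintegral_add_left' D2m]
      refine ENNReal.mul_ne_top ENNReal.ofReal_ne_top (ENNReal.add_ne_top.2 ⟨?_,
        ENNReal.mul_ne_top ENNReal.ofReal_ne_top (ENNReal.add_ne_top.2 ⟨D2f, hGi⟩)⟩)
      simp [hfin])
  have t3 : limsup (fun j => ∫⁻ x in ω, ENNReal.ofReal (Zq (g x) (gradMat (w j) x))) atTop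
      ≤ ∫⁻ x in ω, ENNReal.ofReal (Zq (g x) (Gv x)) := by
    refine t2.trans (lintegral_mono_ae ?_)
    filter_upwards [D2t] with x hx
    refine limsup_ofReal_usc (Zq_usc (hg.cont x) (hg.nn x)) ?_
    simpa using hx.add_const (Gv x)
  have t4 : ∀ᶠ j in atTop, ∫⁻ x in ω, ENNReal.ofReal (Zq (g x) (gradMat (w j) x)) ≤
      (∫⁻ x in ω, ENNReal.ofReal (Zq (g x) (Gv x))) + δ := by
    rcases eq_or_ne (∫⁻ x in ω, ENNReal.ofReal (Zq (g x) (Gv x))) ⊤ with h | h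
    · simp [h]
    · exact (eventually_lt_of_limsup_lt (t3.trans_lt (ENNReal.lt_add_right h hδ.ne'))).mono
        fun j hj => hj.le
  obtain ⟨j, h1, h2⟩ := ((ENNReal.tendsto_nhds_zero.1 t1 δ hδ).and t4).exists
  exact ⟨w j, hw j, h1, h2⟩

end EnergyDensity

/-! ### The planar recovery -/

section Planar
variable {ω S : Set (Euc 2)} {W : Euc 2 → Mat 3 3 → ℝ} {P p₀ : Euc 2 → ℝ}

/-- After changing the data outside a conull subset `S` of `ω`, the structural hypotheses hold at
every point. -/
lemma exists_nice (hω : IsOpen ω) (hWnn : ∀ xα ξ, 0 ≤ W xα ξ)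
    (hWmeas : ∀ ξ : Mat 3 3, Measurable fun xα => W xα ξ)
    {C₂ : ℝ} (hC₂ : 0 < C₂)
    (hWgrowth : ∀ᵐ xα ∂(volume.restrict ω), ∀ ξ : Mat 3 3, W xα ξ ≤ C₂ * (mnorm ξ + 1))
    {w : Euc 2 → ℝ → ℝ}
    (hwreg : ∀ᵐ xα ∂(volume.restrict ω), Tendsto (w xα) (nhdsWithin 0 (Set.Ioi 0)) (nhds 0))
    (hWmod : ∀ᵐ xα ∂(volume.restrict ω), ∀ ξ η : Mat 3 3,
      |W xα ξ - W xα η| ≤ w xα (mnorm (fun i j => ξ i j - η i j)))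
    (hp₀ : IsPbLog ω p₀) :
    ∃ (S : Set (Euc 2)) (W' : Euc 2 → Mat 3 3 → ℝ) (P : Euc 2 → ℝ), MeasurableSet S ∧ S ⊆ ω ∧
      volume (ω \ S) = 0 ∧ Nice W' P ∧ LogHolder S P ∧ ∀ x ∈ S, W' x = W x ∧ P x = p₀ x := by
  classical
  obtain ⟨⟨hpm, pm, pM, hpm1, hpb⟩, γ, hγ, hlog⟩ := hp₀
  obtain ⟨T, hTae, hTm, hT⟩ := (hWgrowth.and (hwreg.and (hWmod.and hpb))).exists_measurable_mem
  have hSm : MeasurableSet (T ∩ ω) := hTm.inter hω.measurableSet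
  refine ⟨T ∩ ω, fun x ξ => if x ∈ T ∩ ω then W x ξ else 0, fun x => if x ∈ T ∩ ω then p₀ x else 2,
    hSm, inter_subset_right, ?_, ⟨?_, ?_, ?_, ?_, ?_, ?_⟩, ?_, ?_⟩
  · have := (ae_restrict_iff' hω.measurableSet).1 (show ∀ᵐ x ∂(volume.restrict ω), x ∈ T from hTae)
    rw [ae_iff] at this
    convert this using 2
    ext x
    simp
  · exact fun ξ => Measurable.ite hSm (hWmeas ξ) measurable_const
  · intro x
    by_cases hx : x ∈ T ∩ ω
    · simp only [hx, if_true]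
      obtain ⟨-, h1, h2, -⟩ := hT x hx.1
      rw [Metric.uniformContinuous_iff]
      intro ε hε
      have h3 : ∀ᶠ t in 𝓝[>] (0:ℝ), w x t < ε := h1.eventually (gt_mem_nhds hε)
      obtain ⟨δ, hδ, h4⟩ := mem_nhdsGT_iff_exists_Ioo_subset.1 h3
      refine ⟨δ / 9, by have : (0:ℝ) < δ := hδ; positivity, fun {ξ η} hd => ?_⟩
      rcases eq_or_ne ξ η with rfl | hne
      · simpa using hε
      · rw [Real.dist_eq]
        refine (h2 ξ η).trans_lt ?_
        rw [dist_eq_norm] at hd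
        have e : mnorm (fun i j => ξ i j - η i j) = mnorm (ξ - η) := rfl
        rw [e]
        refine h4 ⟨?_, ?_⟩
        · exact (norm_pos_iff.2 (sub_ne_zero.2 hne)).trans_le (norm_le_mnorm _)
        · refine (mnorm_le _).trans_lt ?_
          norm_num
          linarith
    · simp only [hx, if_false]
      exact uniformContinuous_const
  · intro x ξ
    split_ifs
    · exact hWnn _ _
    · exact le_rfl
  · refine ⟨9 * C₂, by positivity, fun x ξ => ?_⟩
    split_ifs with hx
    · refine ((hT x hx.1).1 ξ).trans ?_
      have := mnorm_le ξ
      norm_num at this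
      nlinarith
    · positivity
  · exact Measurable.ite hSm hpm measurable_const
  · refine ⟨max pM 2, fun x => ?_⟩
    split_ifs with hx
    · have := (hT x hx.1).2.2.2
      exact ⟨hpm1.le.trans this.1, this.2.trans (le_max_left _ _)⟩
    · exact ⟨by norm_num, le_max_right _ _⟩
  · refine ⟨γ, hγ, fun x hx y hy => ?_⟩
    simp only [hx, hy, if_true]
    exact hlog x hx.2 y hy.2
  · intro x hx
    simp only [hx, if_true]
    exact ⟨trivial, trivial⟩

lemma gP_growth (h : Nice W P) : ∃ C, 0 ≤ C ∧ ∀ x ξ, gP W P x ξ ≤ C * (1 + ‖ξ‖ ^ P x) := by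
  obtain ⟨C, hC, hg⟩ := h.growth
  obtain ⟨pM, hp⟩ := h.pbd
  refine ⟨(C + 1) ^ pM * 2 ^ pM, by positivity, fun x ξ => ?_⟩
  have hp0 : 0 ≤ P x := zero_le_one.trans (hp x).1
  have h1 : W₀ W x ξ ≤ (C + 1) * (1 + ‖ξ‖) := by
    refine (h.W₀_le x ξ 0).trans ((hg _ _).trans ?_)
    have := joinCols_norm ξ 0
    rw [norm_zero, add_zero] at this
    nlinarith [norm_nonneg ξ]
  calc gP W P x ξ ≤ ((C + 1) * (1 + ‖ξ‖)) ^ P x := Real.rpow_le_rpow (h.W₀_nonneg x ξ) h1 hp0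
    _ = (C + 1) ^ P x * (1 + ‖ξ‖) ^ P x := Real.mul_rpow (by positivity) (by positivity)
    _ ≤ (C + 1) ^ pM * (2 ^ pM * (1 ^ P x + ‖ξ‖ ^ P x)) := by
        refine mul_le_mul ?_ (add_rpow_le zero_le_one (norm_nonneg _) hp0 (hp x).2)
          (by positivity) (by positivity)
        exact Real.rpow_le_rpow_of_exponent_le (by linarith) (hp x).2
    _ = _ := by rw [Real.one_rpow]; ring

lemma aesm_mat {μ : Measure (Euc 2)} {G : Euc 2 → Mat 3 2}
    (h : ∀ i j, AEMeasurable (fun x => G x i j) μ) : AEStronglyMeasurable G μ :=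
  (aemeasurable_pi_iff.2 fun i => aemeasurable_pi_iff.2 fun j => h i j).aestronglyMeasurable

/-- Test functions are modular-dense in `W₀^{1,p₀(·)}`. -/
lemma approx_W1p0 (hω : IsOpen ω) (hfin : volume ω ≠ ⊤) (hS : MeasurableSet S)
    (hSω : S ⊆ ω) (hSn : volume (ω \ S) = 0) {pM : ℝ} (hPm : Measurable P)
    (hP : ∀ x, 1 ≤ P x ∧ P x ≤ pM) (hlog : LogHolder S P) (hPp : ∀ x ∈ S, P x = p₀ x)
    {v : Euc 2 → Euc 3} {Gv : Euc 2 → Mat 3 2} (hv : MemW1p0Planar ω p₀ v Gv)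
    {η : ℝ≥0∞} (hη : 0 < η) :
    ∃ w, TestIn ω w ∧ ∫⁻ x in ω, ENNReal.ofReal (‖w x - v x‖ ^ P x) ≤ η ∧
      ∫⁻ x in ω, ENNReal.ofReal (‖gradMat w x - Gv x‖ ^ P x) ≤ η := by
  obtain ⟨⟨hvm, hGm, -⟩, w, Gw, hw, ht⟩ := hv
  have hSae : ∀ᵐ x ∂(volume.restrict ω), x ∈ S := by
    rw [ae_restrict_iff' hω.measurableSet, ae_iff]
    convert hSn using 2
    ext x; simp
  set c := ENNReal.ofReal (2 ^ pM) with hc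
  have hc0 : c ≠ 0 := by simp [hc]; positivity
  set η' := η / (c * 2) with hη'
  have hη'0 : 0 < η' := ENNReal.div_pos hη.ne' (ENNReal.mul_ne_top ENNReal.ofReal_ne_top (by simp))
  have hcη : c * (η' + η') ≤ η := by
    rw [← two_mul, ← mul_assoc]
    exact ENNReal.mul_div_le
  obtain ⟨j, hj⟩ := (ENNReal.tendsto_nhds_zero.1 ht η' hη'0).exists
  obtain ⟨⟨wm, wGm, wwg, wi, wGi⟩, wc, ws⟩ := hw j
  have hm := wm.sub hvm
  have hGwm := aesm_mat wGm
  have hGvm := aesm_mat hGm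
  have e1 : ∫⁻ x in ω, ENNReal.ofReal (‖w j x - v x‖ ^ P x) ≤ η' := by
    refine le_trans (lintegral_mono_ae ?_) hj
    filter_upwards [hSae] with x hx
    rw [hPp x hx]
    exact le_add_of_nonneg_right (zero_le)
  have e2 : ∫⁻ x in ω, ENNReal.ofReal (‖Gw j x - Gv x‖ ^ P x) ≤ η' := by
    refine le_trans (lintegral_mono_ae ?_) hj
    filter_upwards [hSae] with x hx
    have := (hP x).1
    rw [hPp x hx] at this ⊢
    refine le_add_of_nonneg_of_le zero_le (ENNReal.ofReal_le_ofReal ?_)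
    exact Real.rpow_le_rpow (norm_nonneg _) (norm_le_mnorm (Gw j x - Gv x)) (by linarith)
  have wi' : ∫⁻ x in ω, ENNReal.ofReal (‖w j x‖ ^ P x) ≠ ⊤ := by
    refine ne_top_of_le_ne_top wi.ne (lintegral_mono_ae ?_)
    filter_upwards [hSae] with x hx
    rw [hPp x hx]
  have wGi' : ∫⁻ x in ω, ENNReal.ofReal (‖Gw j x‖ ^ P x) ≠ ⊤ := by
    refine ne_top_of_le_ne_top wGi.ne (lintegral_mono_ae ?_)
    filter_upwards [hSae] with x hx
    have := (hP x).1
    rw [hPp x hx] at this ⊢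
    exact ENNReal.ofReal_le_ofReal
      (Real.rpow_le_rpow (norm_nonneg _) (norm_le_mnorm _) (by linarith))
  obtain ⟨u, hu, hu1, hu2⟩ := smooth_approx hω hfin hS hSω hSn hPm hP hlog wm hGwm wwg wi' wGi'
    wc ws hη'0
  have key : ∀ {E : Type} [NormedAddCommGroup E] (a b e : Euc 2 → E),
      AEStronglyMeasurable (fun x => b x - e x) (volume.restrict ω) →
      ∫⁻ x in ω, ENNReal.ofReal (‖a x - b x‖ ^ P x) ≤ η' →
      ∫⁻ x in ω, ENNReal.ofReal (‖b x - e x‖ ^ P x) ≤ η' →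
      ∫⁻ x in ω, ENNReal.ofReal (‖a x - e x‖ ^ P x) ≤ η := by
    intro E _ a b e hbe h1 h2
    refine le_trans ?_ ((mul_le_mul_right (add_le_add h1 h2) c).trans hcη)
    rw [← lintegral_add_right' _ (hbe.norm.aemeasurable.pow hPm.aemeasurable).ennreal_ofReal,
      ← lintegral_const_mul' _ _ ENNReal.ofReal_ne_top]
    refine lintegral_mono fun x => ?_
    rw [← ENNReal.ofReal_add (by positivity) (by positivity), ← ENNReal.ofReal_mul (by positivity)]
    have hp0 : 0 ≤ P x := zero_le_one.trans (hP x).1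
    refine ENNReal.ofReal_le_ofReal (le_trans ?_ (add_rpow_le (norm_nonneg _) (norm_nonneg _)
        hp0 (hP x).2))
    exact Real.rpow_le_rpow (norm_nonneg _) (norm_sub_le_norm_sub_add_norm_sub _ _ _) hp0
  exact ⟨u, hu, key _ _ _ hm hu1 e1, key _ _ _ (hGwm.sub hGvm) hu2 e2⟩

/-- The purely planar part of the recovery: smooth `v₁` and transverse field `z` whose energy is
almost the quasiconvexified energy of `v`. -/
lemma planar_recovery (hω : IsOpen ω) (hfin : volume ω ≠ ⊤) (hS : MeasurableSet S)
    (hSω : S ⊆ ω) (hSn : volume (ω \ S) = 0) (hN : Nice W P) (hlog : LogHolder S P)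
    (hPp : ∀ x ∈ S, P x = p₀ x)
    {v : Euc 2 → Euc 3} {Gv : Euc 2 → Mat 3 2} (hv : MemW1p0Planar ω p₀ v Gv)
    {δ : ℝ} (hδ : 0 < δ) :
    ∃ v₁ z : Euc 2 → Euc 3, TestIn ω v₁ ∧ TestIn ω z ∧
      ∫⁻ x in ω, ENNReal.ofReal ‖v₁ x - v x‖ ≤ ENNReal.ofReal δ ∧
      ∫⁻ x in ω, ENNReal.ofReal (W x (joinCols (gradMat v₁ x) (z x).ofLp) ^ P x) ≤
        (∫⁻ x in ω, ENNReal.ofReal (qcEnvelope (gP W P x) (Gv x))) + ENNReal.ofReal δ := by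
  obtain ⟨pM, hP⟩ := hN.pbd
  have hg := hN.cara
  have hSae : ∀ᵐ x ∂(volume.restrict ω), x ∈ S := by
    rw [ae_restrict_iff' hω.measurableSet, ae_iff]
    convert hSn using 2
    ext x; simp
  have hGi : ∫⁻ x in ω, ENNReal.ofReal (‖Gv x‖ ^ P x) ≠ ⊤ := by
    refine ne_top_of_le_ne_top hv.1.2.2.2.2.ne (lintegral_mono_ae ?_)
    filter_upwards [hSae] with x hx
    have := (hP x).1
    rw [hPp x hx] at this ⊢
    exact ENNReal.ofReal_le_ofReal
      (Real.rpow_le_rpow (norm_nonneg _) (norm_le_mnorm _) (by linarith))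
  -- the parameter `δ₁` absorbs the measure of `ω` in the passage from uniform to `L¹` closeness
  set m := (volume ω).toReal with hm
  set δ₁ := δ / (3 * (m + 1)) with hδ₁
  have hm0 : 0 ≤ m := ENNReal.toReal_nonneg
  have hδ₁0 : 0 < δ₁ := by positivity
  have hδ₁m : δ₁ * (m + 1) = δ / 3 := by rw [hδ₁]; field_simp
  have hδ₁δ : δ₁ ≤ δ / 3 := by nlinarith
  obtain ⟨u, hu, hu1, hu2⟩ := exists_smooth hfin hN.pmeas hP hg (gP_growth hN) hv.1.1
    (aesm_mat hv.1.2.1) hGi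
    (fun η hη => approx_W1p0 hω hfin hS hSω hSn hN.pmeas hP hlog hPp hv hη)
    (ENNReal.ofReal_pos.2 hδ₁0)
  obtain ⟨v₁, hv₁, hv1, hv2⟩ := relax hg hω hfin hu 0 hδ₁0
  obtain ⟨z, hz, hz1⟩ := exists_transverse hN hω hfin hv₁ hδ₁0
  refine ⟨v₁, z, hv₁, hz, ?_, ?_⟩
  · calc ∫⁻ x in ω, ENNReal.ofReal ‖v₁ x - v x‖
        ≤ ∫⁻ x in ω, (ENNReal.ofReal δ₁ + ENNReal.ofReal ‖u x - v x‖) := by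
          refine lintegral_mono fun x => ?_
          rw [← ENNReal.ofReal_add hδ₁0.le (norm_nonneg _)]
          refine ENNReal.ofReal_le_ofReal ?_
          exact (norm_sub_le_norm_sub_add_norm_sub _ (u x) _).trans (add_le_add (hv1 x) le_rfl)
      _ ≤ ENNReal.ofReal δ₁ * ENNReal.ofReal m + ENNReal.ofReal δ₁ := by
          rw [lintegral_add_left measurable_const, lintegral_const, Measure.restrict_apply_univ,
            hm, ENNReal.ofReal_toReal hfin]
          gcongr
      _ ≤ _ := by
          rw [← ENNReal.ofReal_mul hδ₁0.le, ← ENNReal.ofReal_add (by positivity) hδ₁0.le]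
          exact ENNReal.ofReal_le_ofReal (by nlinarith)
  · simp only [zero_add] at hv2
    have hq : ∫⁻ x in ω, ENNReal.ofReal (Zq (gP W P x) (Gv x)) ≤
        ∫⁻ x in ω, ENNReal.ofReal (qcEnvelope (gP W P x) (Gv x)) :=
      lintegral_mono fun x => ENNReal.ofReal_le_ofReal (Zq_le_qcEnvelope (hg.cont x) (hg.nn x) _)
    calc _ ≤ _ := hz1
      _ ≤ _ := add_le_add_left hv2 _
      _ ≤ _ := add_le_add_left (add_le_add_left hu2 _) _
      _ ≤ _ := add_le_add_left (add_le_add_left (add_le_add_left hq _) _) _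
      _ ≤ _ := by
        rw [add_assoc, add_assoc, ← ENNReal.ofReal_add hδ₁0.le hδ₁0.le,
          ← ENNReal.ofReal_add hδ₁0.le (by positivity)]
        gcongr
        linarith

end Planar

/-! ### Geometry of the thin domain and the ansatz -/

section ThinGeometry
variable {ω : Set (Euc 2)}

/-- The planar projection as a continuous linear map. -/
def projL : Euc 3 →L[ℝ] Euc 2 :=
  LinearMap.toContinuousLinearMap
    { toFun := projα
      map_add' := fun x y => by ext i; fin_cases i <;> simp [projα]
      map_smul' := fun c x => by ext i; fin_cases i <;> simp [projα] }

lemma projL_apply (x : Euc 3) : projL x = projα x := rfl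

lemma continuous_projα : Continuous projα := projL.continuous

/-- Splitting off the transverse coordinate preserves volume. -/
lemma mp_split : MeasurePreserving (fun x : Euc 3 => (x 2, projα x)) volume volume := by
  have h1 := (volume_preserving_piFinSuccAbove (fun _ : Fin 3 => ℝ) 2).comp
    (PiLp.volume_preserving_ofLp (Fin 3))
  have h2 := (MeasurePreserving.id (volume : Measure ℝ)).prod (PiLp.volume_preserving_toLp (Fin 2))
  have h3 := h2.comp h1
  have e : (fun x : Euc 3 => (x 2, projα x)) = Prod.map id (WithLp.toLp 2) ∘
      (MeasurableEquiv.piFinSuccAbove (fun _ : Fin 3 => ℝ) 2) ∘ WithLp.ofLp := by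
    funext x
    refine Prod.ext rfl ?_
    ext i
    fin_cases i <;> rfl
  rw [e]
  exact h3

lemma thinDomain_eq (ω : Set (Euc 2)) : thinDomain ω =
    (fun x : Euc 3 => (x 2, projα x)) ⁻¹' (Ioo (-(1/2) : ℝ) (1/2) ×ˢ ω) := by
  ext x
  simp only [thinDomain, mem_preimage, mem_prod]
  exact and_comm

lemma isOpen_thinDomain (hω : IsOpen ω) : IsOpen (thinDomain ω) := by
  rw [thinDomain_eq]
  exact (isOpen_Ioo.prod hω).preimage ((by fun_prop : Continuous fun x : Euc 3 => x 2).prodMk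
    continuous_projα)

/-- The thin domain has unit thickness, so integrals of planar functions over it are planar
integrals. -/
lemma mp_projα (hω : IsOpen ω) :
    MeasurePreserving projα (volume.restrict (thinDomain ω)) (volume.restrict ω) := by
  have h1 := mp_split.restrict_preimage (measurableSet_Ioo.prod hω.measurableSet :
    MeasurableSet (Ioo (-(1/2) : ℝ) (1/2) ×ˢ ω))
  rw [← thinDomain_eq] at h1
  have : IsProbabilityMeasure (volume.restrict (Ioo (-(1/2) : ℝ) (1/2))) := ⟨by
    rw [Measure.restrict_apply_univ, Real.volume_Ioo]; norm_num⟩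
  have h2 : MeasurePreserving (Prod.snd : ℝ × Euc 2 → Euc 2)
      ((volume : Measure (ℝ × Euc 2)).restrict (Ioo (-(1/2) : ℝ) (1/2) ×ˢ ω))
      (volume.restrict ω) := by
    rw [Measure.volume_eq_prod, ← Measure.prod_restrict]
    exact measurePreserving_snd
  exact h2.comp h1

/-- A smooth map has its classical gradient as weak gradient. -/
lemma isWeakGrad_smooth {n d : ℕ} {U : Set (Euc n)} {u : Euc n → Euc d}
    (hu : ContDiff ℝ (⊤ : ℕ∞) u) : IsWeakGrad U u (gradMat u) := by
  intro φ hφ hφc hφU i j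
  have hui : ContDiff ℝ (⊤ : ℕ∞) fun x => u x i := contDiff_euclidean.1 hu i
  have hφd : Continuous fun x => fderiv ℝ φ x (EuclideanSpace.single j 1) :=
    (hφ.continuous_fderiv (by simp)).clm_apply continuous_const
  have hud : Continuous fun x => fderiv ℝ (fun x => u x i) x (EuclideanSpace.single j 1) :=
    (hui.continuous_fderiv (by simp)).clm_apply continuous_const
  have hφdc : HasCompactSupport fun x => fderiv ℝ φ x (EuclideanSpace.single j 1) :=
    hφc.fderiv_apply ℝ _
  have h := integral_mul_fderiv_eq_neg_fderiv_mul_of_integrable (μ := (volume : Measure (Euc n)))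
    (f := φ) (g := fun x => u x i) (v := EuclideanSpace.single j 1)
    ((hφd.mul hui.continuous).integrable_of_hasCompactSupport hφdc.mul_right)
    ((hφ.continuous.mul hud).integrable_of_hasCompactSupport hφc.mul_right)
    ((hφ.continuous.mul hui.continuous).integrable_of_hasCompactSupport hφc.mul_right)
    (fun x _ => hφ.differentiable (by simp) x) (fun x _ => hui.differentiable (by simp) x)
  have h0 : ∀ x, x ∉ U → φ x = 0 := fun x hx => image_eq_zero_of_notMem_tsupport fun h => hx (hφU h)
  have h0' : ∀ x, x ∉ U → fderiv ℝ φ x = 0 := fun x hx => by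
    by_contra hne
    exact hx (hφU (support_fderiv_subset ℝ hne))
  rw [setIntegral_eq_integral_of_forall_compl_eq_zero (fun x hx => by rw [h0 x hx, zero_mul]),
    setIntegral_eq_integral_of_forall_compl_eq_zero (fun x hx => by rw [h0' x hx]; simp), ← h]
  refine integral_congr_ae (Eventually.of_forall fun x => ?_)
  have : fderiv ℝ (fun x => u x i) x (EuclideanSpace.single j 1) = gradMat u x i j := by
    have hd := (EuclideanSpace.proj (𝕜 := ℝ) i).hasFDerivAt.comp x
      (hu.differentiable (by simp) x).hasFDerivAt
    rw [show (fun x => u x i) = (EuclideanSpace.proj (𝕜 := ℝ) i) ∘ u from rfl, hd.fderiv]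
    rfl
  simp only [this]

/-- The three-dimensional ansatz with planar part `v` and transverse slope `z`. -/
def ansatz (ε : ℝ) (v z : Euc 2 → Euc 3) (x : Euc 3) : Euc 3 :=
  v (projα x) + (ε * x 2) • z (projα x)

variable {v z : Euc 2 → Euc 3}

lemma contDiff_ansatz (hv : ContDiff ℝ (⊤ : ℕ∞) v) (hz : ContDiff ℝ (⊤ : ℕ∞) z) (ε : ℝ) :
    ContDiff ℝ (⊤ : ℕ∞) (ansatz ε v z) := by
  have h2 : ContDiff ℝ (⊤ : ℕ∞) fun x : Euc 3 => x 2 := by fun_prop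
  exact (hv.comp projL.contDiff).add ((contDiff_const.mul h2).smul (hz.comp projL.contDiff))

/-- The scaled gradient of the ansatz. -/
lemma scaleCol_ansatz (hv : ContDiff ℝ (⊤ : ℕ∞) v) (hz : ContDiff ℝ (⊤ : ℕ∞) z) {ε : ℝ}
    (hε : ε ≠ 0) (x : Euc 3) : scaleCol ε (gradMat (ansatz ε v z) x) =
      joinCols (gradMat v (projα x) + (ε * x 2) • gradMat z (projα x)) (z (projα x)).ofLp := by
  have hv' : HasFDerivAt (fun x => v (projα x)) ((fderiv ℝ v (projα x)).comp projL) x :=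
    HasFDerivAt.comp x (g := v) (f := projL) ((hv.differentiable (by simp) _).hasFDerivAt)
      projL.hasFDerivAt
  have hz' : HasFDerivAt (fun x => z (projα x)) ((fderiv ℝ z (projα x)).comp projL) x :=
    HasFDerivAt.comp x (g := z) (f := projL) ((hz.differentiable (by simp) _).hasFDerivAt)
      projL.hasFDerivAt
  have h2 : HasFDerivAt (fun x : Euc 3 => ε * x 2) (ε • EuclideanSpace.proj (𝕜 := ℝ) 2) x :=
    (EuclideanSpace.proj (𝕜 := ℝ) (2 : Fin 3)).hasFDerivAt.const_mul ε
  have h := hv'.fun_add (h2.fun_smul hz')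
  have p0 : projL (EuclideanSpace.single 0 1) = EuclideanSpace.single 0 1 := by
    ext i; fin_cases i <;> simp [projL_apply, projα]
  have p1 : projL (EuclideanSpace.single 1 1) = EuclideanSpace.single 1 1 := by
    ext i; fin_cases i <;> simp [projL_apply, projα]
  have p2 : projL (EuclideanSpace.single 2 1) = 0 := by
    ext i; fin_cases i <;> simp [projL_apply, projα]
  have hg : ∀ i j, gradMat (ansatz ε v z) x i j = (((fderiv ℝ v (projα x)).comp projL +
      ((ε * x 2) • (fderiv ℝ z (projα x)).comp projL +
        (ε • EuclideanSpace.proj (𝕜 := ℝ) (2 : Fin 3)).smulRight (z (projα x))))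
          (EuclideanSpace.single j 1)) i := by
    intro i j
    rw [gradMat, show ansatz ε v z = _ from rfl, ← h.fderiv]
    rfl
  ext i j
  rw [scaleCol, hg]
  fin_cases j
  · simp [p0, joinCols, gradMat]
  · simp [p1, joinCols, gradMat]
  · simp [p2, joinCols, hε]

end ThinGeometry

/-! ### Admissibility of the ansatz -/

section Recovery
variable {ω : Set (Euc 2)} {v z : Euc 2 → Euc 3} {p : Euc 3 → ℝ} {p₀ : Euc 2 → ℝ}

lemma volume_thinDomain (hω : IsOpen ω) : volume (thinDomain ω) = volume ω := by
  have := (mp_projα hω).measure_preimage (s := univ) MeasurableSet.univ.nullMeasurableSet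
  simpa using this

lemma measurable_scaleX (ε : ℝ) : Measurable (scaleX ε) := by
  refine (MeasurableEquiv.toLp 2 (Fin 3 → ℝ)).measurable.comp (measurable_pi_lambda _ fun j => ?_)
  by_cases h : j = 2
  · subst h
    simp only [Function.update_self]
    fun_prop
  · simp only [ne_eq, h, not_false_eq_true, Function.update_of_ne]
    exact (by fun_prop : Measurable fun x : Euc 3 => x j)

/-- The essential infimum of the exponent is positive. -/
lemma pminus_pos (hω : IsOpen ω) (hne : ω.Nonempty) (hp : IsPb (thinDomain ω) p) :
    0 < pminus ω p := by
  obtain ⟨-, pm, pM, h1, hb⟩ := hp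
  have hv : volume (thinDomain ω) ≠ 0 := by
    rw [volume_thinDomain hω]; exact (hω.measure_pos volume hne).ne'
  have : NeBot (ae (volume.restrict (thinDomain ω))) := by
    rw [ae_neBot]
    intro h
    exact hv (by rwa [Measure.restrict_eq_zero] at h)
  have hbd : IsBoundedUnder (· ≤ ·) (ae (volume.restrict (thinDomain ω))) p :=
    ⟨pM, by simpa using hb.mono fun x hx => hx.2⟩
  have : pm ≤ pminus ω p := le_essInf_of_ae_le pm (hb.mono fun x hx => hx.1)
    hbd.isCoboundedUnder_ge
  linarith

lemma ansatz_zero {x : Euc 3} (hv : projα x ∉ tsupport v) (hz : projα x ∉ tsupport z) (ε : ℝ) :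
    ansatz ε v z x = 0 := by
  simp [ansatz, image_eq_zero_of_notMem_tsupport hv, image_eq_zero_of_notMem_tsupport hz]

lemma memLatZero_ansatz (hω : IsOpen ω) (hv : TestIn ω v) (hz : TestIn ω z) {r : ℝ} (hr : 0 < r)
    (ε : ℝ) : MemLatZero ω r (ansatz ε v z) (gradMat (ansatz ε v z)) := by
  have hu := contDiff_ansatz hv.1 hz.1 ε
  refine ⟨fun _ => ansatz ε v z, fun _ => gradMat (ansatz ε v z), fun _ => isWeakGrad_smooth hu,
    fun _ => hu.continuous.locallyIntegrable, fun _ i l => ?_, fun _ => ?_, ?_⟩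
  · have := continuous_gradMat hu
    exact (by fun_prop : Continuous fun x => gradMat (ansatz ε v z) x i l).locallyIntegrable
  · refine ⟨projα ⁻¹' (tsupport v ∪ tsupport z)ᶜ,
      ((isClosed_tsupport v).union (isClosed_tsupport z)).isOpen_compl.preimage continuous_projα,
      fun x hx h => ?_, fun x hx => ?_⟩
    · have hxω : projα x ∈ ω := h.elim (fun h => hv.2.2 h) fun h => hz.2.2 h
      have := hx.1
      rw [hω.frontier_eq] at this
      exact this.2 hxω
    · exact ansatz_zero (fun h => hx (Or.inl h)) (fun h => hx (Or.inr h)) ε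
  · have h0 : mnorm (fun (_ : Fin 3) (_ : Fin 3) => (0 : ℝ)) = 0 := by simp [mnorm]
    simp [h0, Real.zero_rpow hr.ne']

/-- A bounded function raised to a bounded exponent is integrable on a set of finite measure. -/
lemma emod_lt_top {n : ℕ} {U : Set (Euc n)} (hU : volume U ≠ ⊤) {q f : Euc n → ℝ} {C Q : ℝ}
    (hf : ∀ x ∈ U, 0 ≤ f x ∧ f x ≤ C) (hUm : MeasurableSet U)
    (hq : ∀ᵐ x ∂(volume.restrict U), 0 ≤ q x ∧ q x ≤ Q) : emod U q f < ⊤ := by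
  have : emod U q f ≤ ∫⁻ _ in U, ENNReal.ofReal ((max C 1) ^ Q) := by
    refine lintegral_mono_ae ?_
    filter_upwards [hq, ae_restrict_mem hUm] with x hx hxU
    refine ENNReal.ofReal_le_ofReal ?_
    exact rpow_le_bound (hf x hxU).1 ((hf x hxU).2.trans (le_max_left _ _)) (le_max_right _ _)
      hx.1 hx.2
  refine this.trans_lt ?_
  rw [lintegral_const, Measure.restrict_apply_univ]
  exact ENNReal.mul_lt_top ENNReal.ofReal_lt_top hU.lt_top

lemma thin_abs {x : Euc 3} (hx : x ∈ thinDomain ω) : |x 2| ≤ 1 :=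
  abs_le.2 ⟨by linarith [hx.2.1], by linarith [hx.2.2]⟩

lemma sobAdm_ansatz (hω : IsOpen ω) (hne : ω.Nonempty) (hfin : volume ω ≠ ⊤)
    (hp : IsPb (thinDomain ω) p) (hv : TestIn ω v) (hz : TestIn ω z) {ε Q : ℝ} (hε : 0 < ε)
    (hε1 : ε ≤ 1)
    (hq : ∀ᵐ x ∂(volume.restrict (thinDomain ω)), 0 ≤ p (scaleX ε x) ∧ p (scaleX ε x) ≤ Q) :
    SobAdm ω p ε (ansatz ε v z) (gradMat (ansatz ε v z)) := by
  have hu := contDiff_ansatz hv.1 hz.1 ε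
  have hG := continuous_gradMat hu
  have hT : volume (thinDomain ω) ≠ ⊤ := by rwa [volume_thinDomain hω]
  have hTm := (isOpen_thinDomain hω).measurableSet
  have hεx : ∀ x ∈ thinDomain ω, |ε * x 2| ≤ 1 := fun x hx => by
    rw [abs_mul, abs_of_pos hε]
    exact mul_le_one₀ hε1 (abs_nonneg _) (thin_abs hx)
  obtain ⟨Cv, hCv0, hCv⟩ := hv.bounded
  obtain ⟨Cz, hCz0, hCz⟩ := hz.bounded
  obtain ⟨Dv, hDv0, hDv⟩ := gradMat_bounded hv
  obtain ⟨Dz, hDz0, hDz⟩ := gradMat_bounded hz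
  refine ⟨hu.continuous.aestronglyMeasurable, fun i j => ?_, isWeakGrad_smooth hu,
    memLatZero_ansatz hω hv hz (pminus_pos hω hne hp) ε, ?_, ?_⟩
  · exact (by fun_prop : Continuous fun x => gradMat (ansatz ε v z) x i j).aemeasurable
  · refine emod_lt_top hT (C := Cv + Cz) (fun x hx => ⟨norm_nonneg _, ?_⟩) hTm hq
    refine (norm_add_le _ _).trans (add_le_add (hCv _) ?_)
    rw [norm_smul, Real.norm_eq_abs]
    exact (mul_le_of_le_one_left (norm_nonneg _) (hεx x hx)).trans (hCz _)
  · refine emod_lt_top hT (C := 9 * (Dv + Dz + Cz)) (fun x hx => ⟨mnorm_nonneg _, ?_⟩) hTm hq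
    have h1 : ‖scaleCol ε (gradMat (ansatz ε v z) x)‖ ≤ Dv + Dz + Cz := by
      rw [scaleCol_ansatz hv.1 hz.1 hε.ne']
      refine (joinCols_norm _ _).trans (add_le_add ((norm_add_le _ _).trans
        (add_le_add (hDv _) ?_)) ?_)
      · rw [norm_smul, Real.norm_eq_abs]
        exact (mul_le_of_le_one_left (norm_nonneg _) (hεx x hx)).trans (hDz _)
      · refine le_trans ?_ (hCz (projα x))
        exact (pi_norm_le_iff_of_nonneg (norm_nonneg _)).2 fun i => PiLp.norm_apply_le _ i
    have h2 : ‖gradMat (ansatz ε v z) x‖ ≤ Dv + Dz + Cz := by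
      refine le_trans ?_ h1
      refine (pi_norm_le_iff_of_nonneg (norm_nonneg _)).2 fun i =>
        (pi_norm_le_iff_of_nonneg (norm_nonneg _)).2 fun j => ?_
      refine le_trans ?_ (norm_entry_le (scaleCol ε (gradMat (ansatz ε v z) x)) i j)
      rw [scaleCol]
      split_ifs
      · rw [abs_div, abs_of_pos hε]
        exact le_div_self (abs_nonneg _) hε hε1
      · exact le_rfl
    refine (mnorm_le _).trans ?_
    norm_num
    exact h2

/-- Uniform convergence of the exponents along a sequence of thicknesses. -/
lemma exponents (hpconv : ScaledTendstoLinf ω p p₀)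
    {εs : ℕ → ℝ} (hε : ∀ k, 0 < εs k) (hε0 : Tendsto εs atTop (𝓝 0)) :
    (∀ᶠ k in atTop, ∀ᵐ x ∂(volume.restrict (thinDomain ω)),
      |p (scaleX (εs k) x) - p₀ (projα x)| ≤ 1) ∧
    ∀ᵐ x ∂(volume.restrict (thinDomain ω)),
      Tendsto (fun k => p (scaleX (εs k) x)) atTop (𝓝 (p₀ (projα x))) := by
  have ht : Tendsto εs atTop (𝓝[>] 0) := tendsto_nhdsWithin_iff.2 ⟨hε0, Eventually.of_forall hε⟩
  have h := hpconv.comp ht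
  have hae : ∀ k, ∀ᵐ x ∂(volume.restrict (thinDomain ω)),
      ENNReal.ofReal |p (scaleX (εs k) x) - p₀ (projα x)| ≤
        eLpNorm (fun x => p (scaleX (εs k) x) - p₀ (projα x)) ⊤ (volume.restrict (thinDomain ω)) := by
    intro k
    rw [eLpNorm_exponent_top]
    filter_upwards [ae_le_eLpNormEssSup (f := fun x => p (scaleX (εs k) x) - p₀ (projα x))
      (μ := volume.restrict (thinDomain ω))] with x hx
    rwa [Real.enorm_eq_ofReal_abs] at hx
  constructor
  · filter_upwards [ENNReal.tendsto_nhds_zero.1 h 1 one_pos] with k hk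
    filter_upwards [hae k] with x hx
    have := hx.trans hk
    rwa [ENNReal.ofReal_le_one] at this
  · filter_upwards [ae_all_iff.2 hae] with x hx
    have h1 : Tendsto (fun k => ENNReal.ofReal |p (scaleX (εs k) x) - p₀ (projα x)|) atTop (𝓝 0) :=
      tendsto_of_tendsto_of_tendsto_of_le_of_le tendsto_const_nhds h (fun _ => zero_le) hx
    have h2 := (ENNReal.tendsto_toReal ENNReal.zero_ne_top).comp h1
    rw [← tendsto_sub_nhds_zero_iff, tendsto_zero_iff_norm_tendsto_zero]
    refine h2.congr fun k => ?_
    simp [ENNReal.toReal_ofReal (abs_nonneg _)]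

end Recovery

/-! ### Energy and convergence of the ansatz, and diagonalization -/

section Limit
variable {ω : Set (Euc 2)} {v z : Euc 2 → Euc 3} {p : Euc 3 → ℝ} {p₀ : Euc 2 → ℝ}
  {W W' : Euc 2 → Mat 3 3 → ℝ} {P : Euc 2 → ℝ} {S : Set (Euc 2)} {εs : ℕ → ℝ}

lemma measurable_ansatz_energy (hN : Nice W P) (hp : Measurable p) (hv : TestIn ω v)
    (hz : TestIn ω z) (t ε : ℝ) : Measurable fun x : Euc 3 => ENNReal.ofReal
      (W (projα x) (joinCols (gradMat v (projα x) + (t * x 2) • gradMat z (projα x))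
        (z (projα x)).ofLp) ^ p (scaleX ε x)) := by
  have h1 : Continuous fun x : Euc 3 =>
      (gradMat v (projα x) + (t * x 2) • gradMat z (projα x), (z (projα x)).ofLp) := by
    have a := (continuous_gradMat hv.1).comp continuous_projα
    have b := (continuous_gradMat hz.1).comp continuous_projα
    have c := hz.1.continuous.comp continuous_projα
    refine Continuous.prodMk (a.add (Continuous.smul
      (by fun_prop : Continuous fun x : Euc 3 => t * x 2) b)) ?_
    exact (PiLp.continuous_ofLp 2 _).comp c
  exact ((hN.unc.comp (continuous_projα.measurable.prodMk
    (continuous_joinCols.comp h1).measurable)).pow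
      (hp.comp (measurable_scaleX ε))).ennreal_ofReal

/-- For smooth compactly supported `v` and `z`, the energies of the ansatz converge to the
planar energy with transverse derivative `z`. -/
lemma ansatz_energy_tendsto (hω : IsOpen ω) (hfin : volume ω ≠ ⊤) (hN : Nice W P)
    (hp : IsPb (thinDomain ω) p) (hPp : ∀ᵐ x ∂(volume.restrict ω), P x = p₀ x)
    (hpconv : ScaledTendstoLinf ω p p₀) (hε : ∀ k, 0 < εs k) (hε0 : Tendsto εs atTop (𝓝 0))
    (hv : TestIn ω v) (hz : TestIn ω z) :
    Tendsto (fun k => ∫⁻ x in thinDomain ω, ENNReal.ofReal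
      (W (projα x) (scaleCol (εs k) (gradMat (ansatz (εs k) v z) x)) ^ p (scaleX (εs k) x)))
      atTop (𝓝 (∫⁻ x in ω, ENNReal.ofReal (W x (joinCols (gradMat v x) (z x).ofLp) ^ P x))) := by
  obtain ⟨he1, het⟩ := exponents hpconv hε hε0
  obtain ⟨pM, hP⟩ := hN.pbd
  obtain ⟨C, hC, hg⟩ := hN.growth
  have hT : volume (thinDomain ω) ≠ ⊤ := by rwa [volume_thinDomain hω]
  have hTm := (isOpen_thinDomain hω).measurableSet
  obtain ⟨Cz, hCz0, hCz⟩ := hz.bounded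
  obtain ⟨Dv, hDv0, hDv⟩ := gradMat_bounded hv
  obtain ⟨Dz, hDz0, hDz⟩ := gradMat_bounded hz
  have hPx : ∀ᵐ x ∂(volume.restrict (thinDomain ω)), P (projα x) = p₀ (projα x) :=
    (mp_projα hω).quasiMeasurePreserving.ae hPp
  have hlim : ∫⁻ x in ω, ENNReal.ofReal (W x (joinCols (gradMat v x) (z x).ofLp) ^ P x) =
      ∫⁻ x in thinDomain ω, ENNReal.ofReal
        (W (projα x) (joinCols (gradMat v (projα x)) (z (projα x)).ofLp) ^ P (projα x)) := by
    refine ((mp_projα hω).lintegral_comp (f := fun x =>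
      ENNReal.ofReal (W x (joinCols (gradMat v x) (z x).ofLp) ^ P x)) ?_).symm
    have h1 : Continuous fun x : Euc 2 => (gradMat v x, (z x).ofLp) :=
      (continuous_gradMat hv.1).prodMk ((PiLp.continuous_ofLp 2 _).comp hz.1.continuous)
    exact ((hN.unc.comp (measurable_id.prodMk
      (continuous_joinCols.comp h1).measurable)).pow hN.pmeas).ennreal_ofReal
  rw [hlim]
  simp_rw [fun k x => scaleCol_ansatz hv.1 hz.1 (hε k).ne' x]
  have hsmall : ∀ᶠ k in atTop, εs k ≤ 1 := (hε0.eventually (gt_mem_nhds one_pos)).mono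
    fun _ h => le_of_lt h
  refine tendsto_lintegral_filter_of_dominated_convergence
    (fun _ => ENNReal.ofReal ((C * (Dv + Dz + Cz + 1) + 1) ^ (pM + 1)))
    (Eventually.of_forall fun k => measurable_ansatz_energy hN hp.1 hv hz (εs k) (εs k)) ?_ ?_ ?_
  · filter_upwards [he1, hsmall] with k hk hk1
    filter_upwards [hk, hPx, ae_restrict_mem hTm] with x hx hPx hxT
    refine ENNReal.ofReal_le_ofReal ?_
    rw [← hPx, abs_le] at hx
    have hb := hP (projα x)
    refine rpow_le_bound (hN.nn _ _) ((hg _ _).trans ?_) ?_ (by linarith) (by linarith)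
    · have : ‖joinCols (gradMat v (projα x) + (εs k * x 2) • gradMat z (projα x))
          (z (projα x)).ofLp‖ ≤ Dv + Dz + Cz := by
        refine (joinCols_norm _ _).trans (add_le_add ((norm_add_le _ _).trans
          (add_le_add (hDv _) ?_)) ?_)
        · rw [norm_smul, Real.norm_eq_abs, abs_mul, abs_of_pos (hε k)]
          exact (mul_le_of_le_one_left (norm_nonneg _)
            (mul_le_one₀ hk1 (abs_nonneg _) (thin_abs hxT))).trans (hDz _)
        · refine le_trans ?_ (hCz (projα x))
          exact (pi_norm_le_iff_of_nonneg (norm_nonneg _)).2 fun i => PiLp.norm_apply_le _ i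
      have h2 : C * (‖joinCols (gradMat v (projα x) + (εs k * x 2) • gradMat z (projα x))
          (z (projα x)).ofLp‖ + 1) ≤ C * (Dv + Dz + Cz + 1) := by gcongr
      linarith
    · have : 0 ≤ C * (Dv + Dz + Cz + 1) := by positivity
      linarith
  · rw [lintegral_const, Measure.restrict_apply_univ]
    exact ENNReal.mul_ne_top ENNReal.ofReal_ne_top hT
  · filter_upwards [het, hPx] with x hx hPx
    refine ENNReal.tendsto_ofReal (Tendsto.rpow ?_ (hPx ▸ hx) (Or.inr ?_))
    · refine ((hN.uc (projα x)).continuous.tendsto _).comp ?_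
      have h1 : Continuous fun s : ℝ => joinCols (gradMat v (projα x) + s • gradMat z (projα x))
          (z (projα x)).ofLp :=
        continuous_joinCols.comp (by fun_prop : Continuous fun s : ℝ =>
          (gradMat v (projα x) + s • gradMat z (projα x), (z (projα x)).ofLp))
      have h2 : Tendsto (fun k => εs k * x 2) atTop (𝓝 0) := by simpa using hε0.mul_const (x 2)
      have h3 := (h1.tendsto 0).comp h2
      simpa [Function.comp_def] using h3
    · linarith [(hP (projα x)).1]

/-- The ansatz is asymptotically as close to `u` in `L¹` as its planar part `v` is to `v₀`. -/
lemma ansatz_L1_le (hω : IsOpen ω) (hv : TestIn ω v) (hz : TestIn ω z)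
    {v₀ : Euc 2 → Euc 3} (hv₀ : AEStronglyMeasurable v₀ (volume.restrict ω)) {u : Euc 3 → Euc 3}
    (hu : ∀ᵐ x ∂(volume.restrict (thinDomain ω)), u x = v₀ (projα x))
    (hfin : volume ω ≠ ⊤) (hε : ∀ k, 0 < εs k) (hε0 : Tendsto εs atTop (𝓝 0))
    {δ : ℝ} (hδ : 0 < δ) :
    ∀ᶠ k in atTop, ∫⁻ x in thinDomain ω, ENNReal.ofReal ‖ansatz (εs k) v z x - u x‖ ≤
      (∫⁻ x in ω, ENNReal.ofReal ‖v x - v₀ x‖) + ENNReal.ofReal δ := by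
  obtain ⟨Cz, hCz0, hCz⟩ := hz.bounded
  have hTm := (isOpen_thinDomain hω).measurableSet
  have h1 : Tendsto (fun k => ENNReal.ofReal (εs k * Cz) * volume ω) atTop (𝓝 0) := by
    have := ENNReal.Tendsto.mul_const (b := volume ω)
      (ENNReal.tendsto_ofReal (hε0.mul_const Cz)) (Or.inr hfin)
    simpa using this
  filter_upwards [ENNReal.tendsto_nhds_zero.1 h1 _ (ENNReal.ofReal_pos.2 hδ)] with k hk
  have hm : AEMeasurable (fun x => ENNReal.ofReal ‖v x - v₀ x‖) (volume.restrict ω) :=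
    (hv.1.continuous.aestronglyMeasurable.sub hv₀).norm.aemeasurable.ennreal_ofReal
  calc ∫⁻ x in thinDomain ω, ENNReal.ofReal ‖ansatz (εs k) v z x - u x‖
      ≤ ∫⁻ x in thinDomain ω, (ENNReal.ofReal ‖v (projα x) - v₀ (projα x)‖ +
          ENNReal.ofReal (εs k * Cz)) := by
        refine lintegral_mono_ae ?_
        filter_upwards [hu, ae_restrict_mem hTm] with x hx hxT
        rw [hx, ← ENNReal.ofReal_add (norm_nonneg _) (mul_nonneg (hε k).le hCz0)]
        refine ENNReal.ofReal_le_ofReal ?_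
        have : ansatz (εs k) v z x - v₀ (projα x) =
            (v (projα x) - v₀ (projα x)) + (εs k * x 2) • z (projα x) := by
          simp only [ansatz]; abel
        rw [this]
        refine (norm_add_le _ _).trans (add_le_add le_rfl ?_)
        rw [norm_smul, Real.norm_eq_abs, abs_mul, abs_of_pos (hε k)]
        exact mul_le_mul (mul_le_of_le_one_right (hε k).le (thin_abs hxT)) (hCz _)
          (norm_nonneg _) (hε k).le
    _ = (∫⁻ x in ω, ENNReal.ofReal ‖v x - v₀ x‖) + ENNReal.ofReal (εs k * Cz) * volume ω := by
        rw [lintegral_add_right _ measurable_const, lintegral_const, Measure.restrict_apply_univ,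
          volume_thinDomain hω]
        congr 1
        have := (mp_projα hω).map_eq
        rw [← this] at hm ⊢
        exact (lintegral_map' hm (mp_projα hω).aemeasurable).symm
    _ ≤ _ := by gcongr

/-- Eventually the thin-film energy of the ansatz is almost below the planar energy. -/
lemma Feps_ansatz_le (hω : IsOpen ω) (hne : ω.Nonempty) (hfin : volume ω ≠ ⊤) (hN : Nice W' P)
    (hWW : ∀ᵐ x ∂(volume.restrict ω), W' x = W x ∧ P x = p₀ x)
    (hp : IsPb (thinDomain ω) p)
    (hpconv : ScaledTendstoLinf ω p p₀) (hε : ∀ k, 0 < εs k) (hε0 : Tendsto εs atTop (𝓝 0))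
    (hv : TestIn ω v) (hz : TestIn ω z) {δ : ℝ} (hδ : 0 < δ) :
    ∀ᶠ k in atTop, Feps ω p (fun xα _ q ξ => W xα ξ ^ q) (εs k) (ansatz (εs k) v z) ≤
      (∫⁻ x in ω, ENNReal.ofReal (W' x (joinCols (gradMat v x) (z x).ofLp) ^ P x)) +
        ENNReal.ofReal δ := by
  have hlim := ansatz_energy_tendsto hω hfin hN hp (hWW.mono fun _ h => h.2) hpconv hε hε0 hv hz
  obtain ⟨he1, -⟩ := exponents hpconv hε hε0
  obtain ⟨pM, hP⟩ := hN.pbd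
  have hsmall : ∀ᶠ k in atTop, εs k ≤ 1 := (hε0.eventually (gt_mem_nhds one_pos)).mono
    fun _ h => le_of_lt h
  have hWx : ∀ᵐ x ∂(volume.restrict (thinDomain ω)),
      W' (projα x) = W (projα x) ∧ P (projα x) = p₀ (projα x) :=
    (mp_projα hω).quasiMeasurePreserving.ae hWW
  set I := ∫⁻ x in ω, ENNReal.ofReal (W' x (joinCols (gradMat v x) (z x).ofLp) ^ P x)
  rcases eq_or_ne I ⊤ with hI | hI
  · simp [hI]
  filter_upwards [hlim.eventually (gt_mem_nhds (ENNReal.lt_add_right hI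
    (ENNReal.ofReal_pos.2 hδ).ne')), he1, hsmall] with k hk hk1 hk2
  refine le_trans ?_ hk.le
  refine (iInf₂_le (gradMat (ansatz (εs k) v z)) (sobAdm_ansatz hω hne hfin hp hv hz (hε k) hk2
    (Q := pM + 1) ?_)).trans (le_of_eq ?_)
  · filter_upwards [hk1, hWx] with x hx hW
    rw [← hW.2, abs_le] at hx
    have := hP (projα x)
    constructor <;> linarith
  · refine lintegral_congr_ae ?_
    filter_upwards [hWx] with x hx
    simp only [hx.1]

/-- Diagonal choice of a recovery sequence: `f k` almost minimizes the larger of the energy excess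
`F k - I` and the distance `D k`, and the hypothesis makes these minima tend to zero. -/
lemma diagonal {α : Type*} [Nonempty α] {F D : ℕ → α → ℝ≥0∞} {I : ℝ≥0∞}
    (h : ∀ δ : ℝ, 0 < δ → ∀ᶠ k in atTop, ∃ f, F k f ≤ I + ENNReal.ofReal δ ∧
      D k f ≤ ENNReal.ofReal δ) :
    ∃ f : ℕ → α, Tendsto (fun k => D k (f k)) atTop (𝓝 0) ∧
      limsup (fun k => F k (f k)) atTop ≤ I := by
  have hex : ∀ k, ∃ f, max (F k f - I) (D k f) ≤
      (⨅ f, max (F k f - I) (D k f)) + ENNReal.ofReal (1 / ((k : ℝ) + 1)) := by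
    intro k
    rcases eq_or_ne (⨅ f, max (F k f - I) (D k f)) ⊤ with hJ | hJ
    · exact ⟨Classical.arbitrary α, by simp [hJ]⟩
    · have : (⨅ f, max (F k f - I) (D k f)) <
          (⨅ f, max (F k f - I) (D k f)) + ENNReal.ofReal (1 / ((k : ℝ) + 1)) :=
        ENNReal.lt_add_right hJ (ENNReal.ofReal_pos.2 (by positivity)).ne'
      obtain ⟨f, hf⟩ := iInf_lt_iff.1 this
      exact ⟨f, hf.le⟩
  choose f hf using hex
  have key : ∀ δ : ℝ, 0 < δ → ∀ᶠ k in atTop, max (F k (f k) - I) (D k (f k)) ≤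
      ENNReal.ofReal δ := by
    intro δ hδ
    have h1 : ∀ᶠ k : ℕ in atTop, 1 / ((k : ℝ) + 1) < δ / 2 :=
      tendsto_one_div_add_atTop_nhds_zero_nat.eventually (gt_mem_nhds (half_pos hδ))
    filter_upwards [h (δ / 2) (half_pos hδ), h1] with k ⟨g, hg1, hg2⟩ hk
    refine (hf k).trans ?_
    calc _ ≤ ENNReal.ofReal (δ / 2) + ENNReal.ofReal (δ / 2) := by
          refine add_le_add ((iInf_le _ g).trans (max_le ?_ hg2)) (ENNReal.ofReal_le_ofReal hk.le)
          exact tsub_le_iff_left.2 hg1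
      _ = _ := by rw [← ENNReal.ofReal_add (by positivity) (by positivity), add_halves]
  refine ⟨f, ?_, ?_⟩
  · rw [ENNReal.tendsto_nhds_zero]
    intro e he
    obtain ⟨δ, hδ, hδe⟩ : ∃ δ : ℝ, 0 < δ ∧ ENNReal.ofReal δ ≤ e := by
      rcases eq_or_ne e ⊤ with rfl | h'
      · exact ⟨1, one_pos, le_top⟩
      · exact ⟨e.toReal, ENNReal.toReal_pos he.ne' h', ENNReal.ofReal_toReal_le⟩
    exact (key δ hδ).mono fun k hk => ((le_max_right _ _).trans hk).trans hδe
  · refine ENNReal.le_of_forall_pos_le_add fun e he _ => ?_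
    refine limsup_le_of_le (by isBoundedDefault) ?_
    filter_upwards [key e (by exact_mod_cast he)] with k hk
    have := (le_max_left _ _).trans hk
    rw [ENNReal.ofReal_coe_nnreal] at this
    exact tsub_le_iff_left.1 this

end Limit

/-! ### The upper bound -/

/-- Proposition `gammalimsupquasic`: `Γ(L¹)`-limsup inequality in the
quasiconvex case: recovery sequences in `L¹(Ω;ℝ³)`. -/
theorem statement16 (ω : Set (Euc 2)) (hω : IsOpen ω) (hωb : Bornology.IsBounded ω)
    (hωc : IsConnected ω) (hωL : HasLipschitzBoundary ω)
    (W : Euc 2 → Mat 3 3 → ℝ)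
    (hWnn : ∀ xα ξ, 0 ≤ W xα ξ)
    (hWmeas : ∀ ξ : Mat 3 3, Measurable fun xα => W xα ξ)
    (hWcont : ∀ᵐ xα ∂(volume.restrict ω), Continuous (W xα))
    (C₁ C₂ : ℝ) (hC₁ : 0 < C₁) (hC₁₂ : C₁ ≤ C₂)
    (hWgrowth : ∀ᵐ xα ∂(volume.restrict ω), ∀ ξ : Mat 3 3,
      C₁ * mnorm ξ - 1 / C₁ ≤ W xα ξ ∧ W xα ξ ≤ C₂ * (mnorm ξ + 1))
    (w : Euc 2 → ℝ → ℝ)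
    (hwmeas : ∀ t : ℝ, Measurable fun xα => w xα t)
    (hwreg : ∀ᵐ xα ∂(volume.restrict ω),
      ContinuousOn (w xα) (Set.Ici 0) ∧ MonotoneOn (w xα) (Set.Ici 0) ∧
      Tendsto (w xα) (nhdsWithin 0 (Set.Ioi 0)) (nhds 0))
    (hWmod : ∀ᵐ xα ∂(volume.restrict ω), ∀ ξ η : Mat 3 3,
      |W xα ξ - W xα η| ≤ w xα (mnorm (fun i j => ξ i j - η i j)))
    (p : Euc 3 → ℝ) (hp : IsPb (thinDomain ω) p)
    (p₀ : Euc 2 → ℝ) (hp₀ : IsPbLog ω p₀)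
    (hpconv : ScaledTendstoLinf ω p p₀) :
    ∀ εs : ℕ → ℝ, (∀ k, 0 < εs k) → Tendsto εs atTop (nhds (0:ℝ)) →
      ∀ u : Euc 3 → Euc 3, ∃ us : ℕ → Euc 3 → Euc 3,
        TendstoL1V (thinDomain ω) us u ∧
        Filter.limsup
            (fun k => Feps ω p (fun xα _ q ξ => W xα ξ ^ q) (εs k) (us k)) atTop ≤
          limFun ω p₀ (fun xα ξα =>
            qcEnvelope (fun η : Mat 3 2 =>
              (⨅ ξ₃ : Fin 3 → ℝ, W xα (joinCols η ξ₃)) ^ p₀ xα) ξα) u := by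
  intro εs hε hε0 u
  have hfin : volume ω ≠ ⊤ := hωb.measure_lt_top.ne
  have hne : ω.Nonempty := hωc.nonempty
  obtain ⟨S, W', P, hS, hSω, hSn, hN, hlog, hSeq⟩ := exists_nice hω hWnn hWmeas
    (hC₁.trans_le hC₁₂) (hWgrowth.mono fun x h ξ => (h ξ).2) (hwreg.mono fun x h => h.2.2)
    hWmod hp₀
  have hSae : ∀ᵐ x ∂(volume.restrict ω), x ∈ S := by
    rw [ae_restrict_iff' hω.measurableSet, ae_iff]
    convert hSn using 2
    ext x; simp
  set g : Euc 2 → Mat 3 2 → ℝ := fun xα ξα => qcEnvelope (fun η : Mat 3 2 =>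
    (⨅ ξ₃ : Fin 3 → ℝ, W xα (joinCols η ξ₃)) ^ p₀ xα) ξα with hg
  rcases eq_or_ne (limFun ω p₀ g u) ⊤ with hI | hI
  · exact ⟨fun _ => u, by simp [TendstoL1V], by simp [hI]⟩
  refine diagonal (D := fun _ f => ∫⁻ x in thinDomain ω, ENNReal.ofReal ‖f x - u x‖)
    (F := fun k f => Feps ω p (fun xα _ q ξ => W xα ξ ^ q) (εs k) f) fun δ hδ => ?_
  have hδ3 : 0 < δ / 3 := by positivity
  -- a planar representative whose energy is almost the infimum defining the limit functional
  have hlt := ENNReal.lt_add_right hI (ENNReal.ofReal_pos.2 hδ3).ne'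
  conv_lhs at hlt => rw [limFun]
  simp only [iInf_lt_iff] at hlt
  obtain ⟨v, Gv, ⟨hv, huv⟩, hE⟩ := hlt
  obtain ⟨v₁, z, hv₁, hz, hL1, hen⟩ := planar_recovery hω hfin hS hSω hSn hN hlog
    (fun x hx => (hSeq x hx).2) hv hδ3
  have hgeq : ∫⁻ x in ω, ENNReal.ofReal (qcEnvelope (gP W' P x) (Gv x)) =
      ∫⁻ x in ω, ENNReal.ofReal (g x (Gv x)) := by
    refine lintegral_congr_ae ?_
    filter_upwards [hSae] with x hx
    have : gP W' P x = fun η => (⨅ ξ₃ : Fin 3 → ℝ, W x (joinCols η ξ₃)) ^ p₀ x := by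
      funext η
      simp only [gP, W₀, (hSeq x hx).1, (hSeq x hx).2]
    simp only [hg, this]
  rw [hgeq] at hen
  have hδsum : ENNReal.ofReal (δ / 3) + ENNReal.ofReal (δ / 3) + ENNReal.ofReal (δ / 3) =
      ENNReal.ofReal δ := by
    rw [← ENNReal.ofReal_add (by positivity) (by positivity),
      ← ENNReal.ofReal_add (by positivity) (by positivity)]
    congr 1; ring
  filter_upwards [Feps_ansatz_le hω hne hfin hN (hSae.mono fun x hx => hSeq x hx) hp hpconv hε hε0
    hv₁ hz hδ3, ansatz_L1_le hω hv₁ hz hv.1.1 huv hfin hε hε0 hδ3] with k hk1 hk2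
  refine ⟨ansatz (εs k) v₁ z, ?_, ?_⟩
  · calc _ ≤ _ := hk1
      _ ≤ limFun ω p₀ g u + ENNReal.ofReal (δ / 3) + ENNReal.ofReal (δ / 3) +
          ENNReal.ofReal (δ / 3) := by
        refine add_le_add (hen.trans (add_le_add hE.le le_rfl)) le_rfl
      _ = _ := by rw [← hδsum]; ring
  · refine hk2.trans ((add_le_add hL1 le_rfl).trans ?_)
    rw [← hδsum]
    exact le_self_add
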